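/- arXiv:math/0511647 — 2 statements merged into one kernel-verified Lean document; each statement's English description precedes it below -/
import Mathlib

section
/- Let a, b > 0 with a ≠ b, and let G_{a,b} denote ℝ³ with the left-invariant distance d_{a,b} defined as the infimum, over piecewise C¹ paths (x(t),y(t),z(t)) joining the two given points, of ∫ √(e^{−2a·z(t)}·x′(t)² + e^{2b·z(t)}·y′(t)² + z′(t)²) dt (the solvable Lie group ℝ ⋉ ℝ² with z·(x,y) = (e^{az}x, e^{−bz}y)). Then no finitely generated group is quasi-isometric to G_{a,b}: for every group Γ with a finite symmetric generating set S, the metric space (Γ, d_S) is not quasi-isometric to (G_{a,b}, d_{a,b}). -/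
open Set

noncomputable section

/-- A path `γ : ℝ → E` is piecewise `C¹` on `[0,1]`. -/
def PiecewiseC1 {E : Type*} [NormedAddCommGroup E] [NormedSpace ℝ E] (γ : ℝ → E) : Prop :=
  ∃ (n : ℕ) (τ : ℕ → ℝ), τ 0 = 0 ∧ τ n = 1 ∧ (∀ i < n, τ i ≤ τ (i + 1)) ∧
    ∀ i < n, ContDiffOn ℝ 1 γ (Set.Icc (τ i) (τ (i + 1)))

/-- Length of a path for the left-invariant metric
`ds² = e^{-2az} dx² + e^{2bz} dy² + dz²` on the solvable group `ℝ ⋉ ℝ²` with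
`z·(x,y) = (e^{az} x, e^{-bz} y)`. -/
def abLength (a b : ℝ) (γ : ℝ → ℝ × ℝ × ℝ) : ℝ :=
  ∫ t in (0:ℝ)..1,
    Real.sqrt (Real.exp (-2 * a * (γ t).2.2) * (deriv (fun s => (γ s).1) t) ^ 2 +
      Real.exp (2 * b * (γ t).2.2) * (deriv (fun s => (γ s).2.1) t) ^ 2 +
      (deriv (fun s => (γ s).2.2) t) ^ 2)

/-- The left-invariant distance `d_{a,b}` on `G_{a,b} = ℝ³`. -/
def dAB (a b : ℝ) (p q : ℝ × ℝ × ℝ) : ℝ :=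
  sInf {ℓ : ℝ | ∃ γ : ℝ → ℝ × ℝ × ℝ,
    γ 0 = p ∧ γ 1 = q ∧ PiecewiseC1 γ ∧ abLength a b γ = ℓ}

/-- `f` is a `(K, C)`-quasi-isometric embedding with respect to the given distances. -/
def IsQIE {X Y : Type*} (dX : X → X → ℝ) (dY : Y → Y → ℝ) (K C : ℝ) (f : X → Y) : Prop :=
  ∀ a b : X, (1 / K) * dX a b - C ≤ dY (f a) (f b) ∧ dY (f a) (f b) ≤ K * dX a b + C

/-- `f` is a `(K, C)`-quasi-isometry with respect to the given distances. -/
def IsQI {X Y : Type*} (dX : X → X → ℝ) (dY : Y → Y → ℝ) (K C : ℝ) (f : X → Y) : Prop :=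
  IsQIE dX dY K C f ∧ ∀ y : Y, ∃ x : X, dY (f x) y ≤ C

/-- Two "metric spaces", given by distance functions, are quasi-isometric. -/
def QuasiIsometric {X Y : Type*} (dX : X → X → ℝ) (dY : Y → Y → ℝ) : Prop :=
  ∃ (K C : ℝ) (f : X → Y), 1 ≤ K ∧ 0 ≤ C ∧ IsQI dX dY K C f

/-- The word norm of `g` with respect to a generating set `S`. -/
def wordNorm {Γ : Type*} [Group Γ] (S : Set Γ) (g : Γ) : ℕ :=
  sInf {m : ℕ | ∃ l : List Γ, (∀ x ∈ l, x ∈ S) ∧ l.prod = g ∧ l.length = m}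

/-- The word metric on a group `Γ` with respect to a generating set `S`. -/
def wordDist {Γ : Type*} [Group Γ] (S : Set Γ) (a b : Γ) : ℝ :=
  (wordNorm S (a⁻¹ * b) : ℝ)

/-- `S` is a finite symmetric generating set of `Γ`. -/
def IsFinSymmGen {Γ : Type*} [Group Γ] (S : Set Γ) : Prop :=
  S.Finite ∧ (∀ s ∈ S, s⁻¹ ∈ S) ∧ Subgroup.closure S = ⊤

/-! ### Coarse geometry of `G_{a,b}` and trees of vertical lines -/

/-- Coarse closeness at scale `ℓ` in `G_{a,b}`. -/
def Near (a b ℓ : ℝ) (p q : ℝ × ℝ × ℝ) : Prop :=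
  |p.2.2 - q.2.2| ≤ ℓ ∧ |p.1 - q.1| ≤ Real.exp (a * p.2.2 + ℓ) ∧
    |p.2.1 - q.2.1| ≤ Real.exp (-b * p.2.2 + ℓ)

/-- Maps distorting the scales of `Near` at most by the factor `K`. -/
def CoarseEmb (a b K : ℝ) (φ : ℝ × ℝ × ℝ → ℝ × ℝ × ℝ) : Prop :=
  ∀ ℓ, 1 ≤ ℓ → ∀ p q, (Near a b ℓ p q → Near a b (K * ℓ) (φ p) (φ q)) ∧
    (Near a b ℓ (φ p) (φ q) → Near a b (K * ℓ) p q)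

/-- Left multiplication by `p` in `G_{a,b}`. -/
def leftMul (a b : ℝ) (p q : ℝ × ℝ × ℝ) : ℝ × ℝ × ℝ :=
  (p.1 + Real.exp (a * p.2.2) * q.1, p.2.1 + Real.exp (-b * p.2.2) * q.2.1, p.2.2 + q.2.2)

/-- Left multiplication by the inverse of `p` in `G_{a,b}`. -/
def leftDiv (a b : ℝ) (p q : ℝ × ℝ × ℝ) : ℝ × ℝ × ℝ :=
  (Real.exp (-(a * p.2.2)) * (q.1 - p.1), Real.exp (b * p.2.2) * (q.2.1 - p.2.1), q.2.2 - p.2.2)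

/-- The isometry `G_{a,b} → G_{b,a}` reversing the height. -/
def mirror (p : ℝ × ℝ × ℝ) : ℝ × ℝ × ℝ := (p.2.1, p.1, -p.2.2)

theorem Near.mono {a b ℓ ℓ' : ℝ} {p q : ℝ × ℝ × ℝ} (h : Near a b ℓ p q) (hl : ℓ ≤ ℓ') :
    Near a b ℓ' p q :=
  ⟨h.1.trans hl, h.2.1.trans (Real.exp_le_exp.2 (by linarith)),
    h.2.2.trans (Real.exp_le_exp.2 (by linarith))⟩

theorem Near.symm {a b ℓ : ℝ} (ha : 0 < a) (hb : 0 < b) {p q : ℝ × ℝ × ℝ}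
    (h : Near a b ℓ p q) : Near a b ((1 + a + b) * ℓ) q p := by
  obtain ⟨h1, h2, h3⟩ := h
  have hl : 0 ≤ ℓ := (abs_nonneg _).trans h1
  have h4 := abs_le.1 h1
  refine ⟨?_, ?_, ?_⟩
  · rw [abs_sub_comm]; nlinarith [mul_nonneg ha.le hl, mul_nonneg hb.le hl]
  · rw [abs_sub_comm]; refine h2.trans (Real.exp_le_exp.2 ?_)
    nlinarith [mul_nonneg ha.le hl, mul_nonneg hb.le hl]
  · rw [abs_sub_comm]; refine h3.trans (Real.exp_le_exp.2 ?_)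
    nlinarith [mul_nonneg ha.le hl, mul_nonneg hb.le hl]

theorem Near.trans {a b ℓ ℓ' : ℝ} (ha : 0 < a) (hb : 0 < b) {p q r : ℝ × ℝ × ℝ}
    (h : Near a b ℓ p q) (h' : Near a b ℓ' q r) :
    Near a b ((1 + a + b) * ℓ + ℓ' + 1) p r := by
  obtain ⟨h1, h2, h3⟩ := h
  obtain ⟨h1', h2', h3'⟩ := h'
  have hl : 0 ≤ ℓ := (abs_nonneg _).trans h1
  have hl' : 0 ≤ ℓ' := (abs_nonneg _).trans h1'
  have h4 := abs_le.1 h1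
  have hal := mul_nonneg ha.le hl
  have hbl := mul_nonneg hb.le hl
  have key : ∀ c d e : ℝ, c ≤ e → d ≤ e → Real.exp c + Real.exp d ≤ Real.exp (e + 1) := by
    intro c d e hc hd
    rw [Real.exp_add]
    have := Real.exp_le_exp.2 hc
    have := Real.exp_le_exp.2 hd
    have h2 : (2 : ℝ) ≤ Real.exp 1 := by linarith [Real.add_one_le_exp (1 : ℝ)]
    nlinarith [Real.exp_pos e]
  refine ⟨?_, ?_, ?_⟩
  · have := abs_sub_le p.2.2 q.2.2 r.2.2
    nlinarith
  · refine (abs_sub_le p.1 q.1 r.1).trans ((add_le_add h2 h2').trans ?_)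
    refine (key _ _ (a * p.2.2 + ((1 + a + b) * ℓ + ℓ')) ?_ ?_).trans (le_of_eq ?_)
    · nlinarith
    · nlinarith
    · ring_nf
  · refine (abs_sub_le p.2.1 q.2.1 r.2.1).trans ((add_le_add h3 h3').trans ?_)
    refine (key _ _ (-b * p.2.2 + ((1 + a + b) * ℓ + ℓ')) ?_ ?_).trans (le_of_eq ?_)
    · nlinarith
    · nlinarith
    · ring_nf

theorem near_leftMul {a b ℓ : ℝ} (p q r : ℝ × ℝ × ℝ) :
    Near a b ℓ (leftMul a b p q) (leftMul a b p r) ↔ Near a b ℓ q r := by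
  have e1 : |Real.exp (a * p.2.2) * q.1 - Real.exp (a * p.2.2) * r.1| =
      Real.exp (a * p.2.2) * |q.1 - r.1| := by
    rw [← mul_sub, abs_mul, abs_of_pos (Real.exp_pos _)]
  have e2 : |Real.exp (-b * p.2.2) * q.2.1 - Real.exp (-b * p.2.2) * r.2.1| =
      Real.exp (-b * p.2.2) * |q.2.1 - r.2.1| := by
    rw [← mul_sub, abs_mul, abs_of_pos (Real.exp_pos _)]
  simp only [Near, leftMul, add_sub_add_left_eq_sub, e1, e2]
  have e3 : Real.exp (a * (p.2.2 + q.2.2) + ℓ) =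
      Real.exp (a * p.2.2) * Real.exp (a * q.2.2 + ℓ) := by rw [← Real.exp_add]; ring_nf
  have e4 : Real.exp (-b * (p.2.2 + q.2.2) + ℓ) =
      Real.exp (-b * p.2.2) * Real.exp (-b * q.2.2 + ℓ) := by rw [← Real.exp_add]; ring_nf
  rw [e3, e4, mul_le_mul_iff_right₀ (Real.exp_pos _), mul_le_mul_iff_right₀ (Real.exp_pos _)]

theorem leftMul_leftDiv (a b : ℝ) (p q : ℝ × ℝ × ℝ) : leftMul a b p (leftDiv a b p q) = q := by
  have h1 : Real.exp (a * p.2.2) * Real.exp (-(a * p.2.2)) = 1 := by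
    rw [← Real.exp_add]; simp
  have h2 : Real.exp (-b * p.2.2) * Real.exp (b * p.2.2) = 1 := by
    rw [← Real.exp_add]; simp
  ext
  · simp only [leftMul, leftDiv, ← mul_assoc, h1]; ring
  · simp only [leftMul, leftDiv, ← mul_assoc, h2]; ring
  · simp [leftMul, leftDiv]

theorem near_leftDiv {a b ℓ : ℝ} (p q r : ℝ × ℝ × ℝ) :
    Near a b ℓ (leftDiv a b p q) (leftDiv a b p r) ↔ Near a b ℓ q r := by
  rw [← near_leftMul p, leftMul_leftDiv, leftMul_leftDiv]

theorem leftDiv_self (a b : ℝ) (p : ℝ × ℝ × ℝ) : leftDiv a b p p = 0 := by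
  ext <;> simp [leftDiv]

theorem leftMul_zero (a b : ℝ) (p : ℝ × ℝ × ℝ) : leftMul a b p 0 = p := by
  ext <;> simp [leftMul]

theorem near_mirror {a b ℓ : ℝ} (p q : ℝ × ℝ × ℝ) :
    Near b a ℓ (mirror p) (mirror q) ↔ Near a b ℓ p q := by
  have e : |-p.2.2 - -q.2.2| = |p.2.2 - q.2.2| := by
    rw [← abs_neg]; ring_nf
  simp only [Near, mirror, e]
  have e1 : b * -p.2.2 = -b * p.2.2 := by ring
  have e2 : -a * -p.2.2 = a * p.2.2 := by ring
  rw [e1, e2]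
  tauto

@[simp] theorem mirror_mirror (p : ℝ × ℝ × ℝ) : mirror (mirror p) = p := by
  ext <;> simp [mirror]

theorem coarseEmb_id {a b K : ℝ} (hK : 1 ≤ K) : CoarseEmb a b K id := fun ℓ hl p q =>
  ⟨fun h => h.mono (by nlinarith), fun h => h.mono (by nlinarith)⟩

theorem CoarseEmb.normalize {a b K : ℝ} {φ : ℝ × ℝ × ℝ → ℝ × ℝ × ℝ} (h : CoarseEmb a b K φ)
    (p r : ℝ × ℝ × ℝ) :
    CoarseEmb a b K (fun q => leftDiv a b r (φ (leftMul a b p q))) := by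
  intro ℓ hl q q'
  simp only [near_leftDiv]
  have := h ℓ hl (leftMul a b p q) (leftMul a b p q')
  rwa [near_leftMul, near_leftMul] at this

theorem CoarseEmb.mirror {a b K : ℝ} {φ : ℝ × ℝ × ℝ → ℝ × ℝ × ℝ} (h : CoarseEmb a b K φ) :
    CoarseEmb b a K (fun q => mirror (φ (mirror q))) := by
  intro ℓ hl q q'
  have := h ℓ hl (_root_.mirror q) (_root_.mirror q')
  simpa only [near_mirror] using this

/-- The `i`-th child of `p` in the `N`-adic tree of upward vertical lines starting at `p`. -/
def child (b : ℝ) (N i : ℕ) (p : ℝ × ℝ × ℝ) : ℝ × ℝ × ℝ :=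
  (p.1, p.2.1 + Real.exp (-b * p.2.2) * (i / N), p.2.2 + Real.log N / b)

/-- Points lying `n` levels above `p` on the vertical lines starting at `p`. -/
def Desc (b : ℝ) (N n : ℕ) (p q : ℝ × ℝ × ℝ) : Prop :=
  q.1 = p.1 ∧ q.2.2 = p.2.2 + n * (Real.log N / b) ∧ p.2.1 ≤ q.2.1 ∧
    q.2.1 + Real.exp (-b * q.2.2) ≤ p.2.1 + Real.exp (-b * p.2.2)

/-- `A` contains the leaves of a subtree of depth `n` with root `p` and with at least `κ` children
at each inner node. -/
def Big (b : ℝ) (N κ : ℕ) : ℕ → Set (ℝ × ℝ × ℝ) → ℝ × ℝ × ℝ → Prop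
  | 0, A, p => p ∈ A
  | n + 1, A, p => ∃ t ⊆ Finset.range N, κ ≤ t.card ∧ ∀ i ∈ t, Big b N κ n A (child b N i p)

theorem exp_child {b : ℝ} (hb : 0 < b) {N : ℕ} (hN : 0 < N) (z : ℝ) :
    Real.exp (-b * (z + Real.log N / b)) = Real.exp (-b * z) / N := by
  have : -b * (z + Real.log N / b) = -b * z - Real.log N := by field_simp; ring
  rw [this, Real.exp_sub, Real.exp_log (by exact_mod_cast hN)]

theorem Desc.of_child {b : ℝ} (hb : 0 < b) {N n i : ℕ} (hi : i < N) {p q : ℝ × ℝ × ℝ}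
    (h : Desc b N n (child b N i p) q) :
    Desc b N (n + 1) p q ∧ p.2.1 + Real.exp (-b * p.2.2) * (i / N) ≤ q.2.1 ∧
      q.2.1 + Real.exp (-b * q.2.2) ≤ p.2.1 + Real.exp (-b * p.2.2) * ((i + 1) / N) := by
  obtain ⟨h1, h2, h3, h4⟩ := h
  have hN : (0 : ℝ) < N := by exact_mod_cast (by omega : 0 < N)
  simp only [child] at h1 h2 h3 h4
  rw [exp_child hb (by omega)] at h4
  have he := Real.exp_pos (-b * p.2.2)
  have hi' : (i : ℝ) + 1 ≤ N := by exact_mod_cast hi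
  have h5 : q.2.1 + Real.exp (-b * q.2.2) ≤ p.2.1 + Real.exp (-b * p.2.2) * ((i + 1) / N) := by
    refine h4.trans (le_of_eq ?_); ring
  refine ⟨⟨h1, ?_, ?_, ?_⟩, h3, h5⟩
  · rw [h2]; push_cast; ring
  · refine le_trans ?_ h3
    have : 0 ≤ Real.exp (-b * p.2.2) * (i / N) := by positivity
    linarith
  · refine h5.trans ?_
    have : ((i : ℝ) + 1) / N ≤ 1 := by rw [div_le_one hN]; exact hi'
    nlinarith

theorem desc_zero (b : ℝ) (N : ℕ) (p : ℝ × ℝ × ℝ) : Desc b N 0 p p := by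
  exact ⟨rfl, by simp, le_rfl, le_rfl⟩

theorem Desc.trans {b : ℝ} {N n m : ℕ} {p q r : ℝ × ℝ × ℝ} (h : Desc b N n p q)
    (h' : Desc b N m q r) : Desc b N (n + m) p r := by
  obtain ⟨h1, h2, h3, h4⟩ := h
  obtain ⟨h1', h2', h3', h4'⟩ := h'
  refine ⟨h1'.trans h1, ?_, h3.trans h3', h4'.trans h4⟩
  rw [h2', h2]
  push_cast
  ring

theorem desc_child {b : ℝ} (hb : 0 < b) {N i : ℕ} (hi : i < N) (p : ℝ × ℝ × ℝ) :
    Desc b N 1 p (child b N i p) :=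
  ((desc_zero b N (child b N i p)).of_child hb hi).1

theorem Desc.le {b : ℝ} {N n : ℕ} {p q : ℝ × ℝ × ℝ} (h : Desc b N n p q) :
    q.2.1 ≤ p.2.1 + Real.exp (-b * p.2.2) := by
  linarith [h.2.2.2, Real.exp_pos (-b * q.2.2)]

theorem Desc.near {a b : ℝ} {N n : ℕ} {p q : ℝ × ℝ × ℝ} {ℓ : ℝ}
    (h : Desc b N n p q) (hl : 0 ≤ ℓ) (hn : |n * (Real.log N / b)| ≤ ℓ) : Near a b ℓ p q := by
  have h4 := h.le
  obtain ⟨h1, h2, h3, -⟩ := h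
  refine ⟨?_, ?_, ?_⟩
  · rw [h2]; simpa using hn
  · rw [h1]; simpa using (Real.exp_pos _).le
  · rw [abs_sub_comm, abs_of_nonneg (by linarith)]
    have : Real.exp (-b * p.2.2) ≤ Real.exp (-b * p.2.2 + ℓ) := Real.exp_le_exp.2 (by linarith)
    linarith

theorem Big.exists_not {b : ℝ} (hb : 0 < b) {N κ : ℕ} :
    ∀ {n : ℕ} {A A' : Set (ℝ × ℝ × ℝ)} {p : ℝ × ℝ × ℝ}, Big b N κ n A p → ¬ Big b N κ n A' p →
      ∃ q, Desc b N n p q ∧ q ∈ A ∧ q ∉ A'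
  | 0, _, _, p, h, h' => ⟨p, desc_zero b N p, h, h'⟩
  | n + 1, A, A', p, ⟨t, ht, hk, h⟩, h' => by
    by_cases hall : ∀ i ∈ t, Big b N κ n A' (child b N i p)
    · exact absurd ⟨t, ht, hk, hall⟩ h'
    · push Not at hall
      obtain ⟨i, hi, hi'⟩ := hall
      obtain ⟨q, hq, hq'⟩ := Big.exists_not hb (h i hi) hi'
      exact ⟨q, (hq.of_child hb (Finset.mem_range.1 (ht hi))).1, hq'⟩

theorem Big.mono_desc {b : ℝ} (hb : 0 < b) {N κ n : ℕ} {A A' : Set (ℝ × ℝ × ℝ)}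
    {p : ℝ × ℝ × ℝ} (h : Big b N κ n A p) (hA : ∀ q, Desc b N n p q → q ∈ A → q ∈ A') :
    Big b N κ n A' p := by
  by_contra h'
  obtain ⟨q, hq, h1, h2⟩ := h.exists_not hb h'
  exact h2 (hA q hq h1)

theorem big_add {b : ℝ} {N κ m : ℕ} {A : Set (ℝ × ℝ × ℝ)} : ∀ {n : ℕ} {p : ℝ × ℝ × ℝ},
    Big b N κ (n + m) A p ↔ Big b N κ n {q | Big b N κ m A q} p
  | 0, p => by simp [Big]
  | n + 1, p => by
    rw [show n + 1 + m = (n + m) + 1 by ring]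
    simp only [Big]
    exact exists_congr fun t => and_congr_right fun _ => and_congr_right fun _ =>
      forall₂_congr fun i _ => big_add

theorem big_of_forall {b : ℝ} (hb : 0 < b) {N κ : ℕ} (hκ : κ ≤ N) :
    ∀ {n : ℕ} {A : Set (ℝ × ℝ × ℝ)} {p : ℝ × ℝ × ℝ}, (∀ q, Desc b N n p q → q ∈ A) →
      Big b N κ n A p
  | 0, _, p, h => h p (desc_zero b N p)
  | n + 1, A, p, h => ⟨Finset.range N, subset_rfl, by simpa using hκ, fun i hi =>
      big_of_forall hb hκ fun q hq => h q (hq.of_child hb (Finset.mem_range.1 hi)).1⟩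

theorem Big.exists_mem {b : ℝ} (hb : 0 < b) {N κ : ℕ} (hκ : 1 ≤ κ) :
    ∀ {n : ℕ} {A : Set (ℝ × ℝ × ℝ)} {p : ℝ × ℝ × ℝ}, Big b N κ n A p →
      ∃ q, Desc b N n p q ∧ q ∈ A
  | 0, _, p, h => ⟨p, desc_zero b N p, h⟩
  | n + 1, A, p, ⟨t, ht, hk, h⟩ => by
    obtain ⟨i, hi⟩ := Finset.card_pos.1 (by omega : 0 < t.card)
    obtain ⟨q, hq, hq'⟩ := Big.exists_mem hb hκ (h i hi)
    exact ⟨q, (hq.of_child hb (Finset.mem_range.1 (ht hi))).1, hq'⟩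

theorem exists_children_of_not_big {b : ℝ} {N κ n : ℕ} (hκ : κ + 2 ≤ N)
    {A : Set (ℝ × ℝ × ℝ)} {p : ℝ × ℝ × ℝ} (h : ¬ Big b N κ (n + 1) A p) :
    ∃ i j, i + 2 ≤ j ∧ j < N ∧ ¬ Big b N κ n A (child b N i p) ∧
      ¬ Big b N κ n A (child b N j p) := by
  classical
  set F := (Finset.range N).filter fun i => ¬ Big b N κ n A (child b N i p) with hF
  have hc : ((Finset.range N).filter fun i => Big b N κ n A (child b N i p)).card < κ := by
    by_contra hlt
    exact h ⟨_, Finset.filter_subset _ _, not_lt.1 hlt, fun i hi => (Finset.mem_filter.1 hi).2⟩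
  have hsum : ((Finset.range N).filter fun i => Big b N κ n A (child b N i p)).card + F.card =
      N := by
    simpa using Finset.card_filter_add_card_filter_not (s := Finset.range N)
      (fun i => Big b N κ n A (child b N i p))
  have h3 : 3 ≤ F.card := by omega
  have hne : F.Nonempty := Finset.card_pos.1 (by omega)
  have hsub : F ⊆ Finset.Icc (F.min' hne) (F.max' hne) := fun i hi =>
    Finset.mem_Icc.2 ⟨F.min'_le i hi, F.le_max' i hi⟩
  have := Finset.card_le_card hsub
  rw [Nat.card_Icc] at this
  have h1 := Finset.mem_filter.1 (F.min'_mem hne)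
  have h2 := Finset.mem_filter.1 (F.max'_mem hne)
  exact ⟨_, _, by omega, Finset.mem_range.1 h2.1, h1.2, h2.2⟩

theorem child_leftMul {a b : ℝ} {N i : ℕ} (p q : ℝ × ℝ × ℝ) :
    child b N i (leftMul a b p q) = leftMul a b p (child b N i q) := by
  have : Real.exp (-b * (p.2.2 + q.2.2)) = Real.exp (-b * p.2.2) * Real.exp (-b * q.2.2) := by
    rw [← Real.exp_add]; ring_nf
  ext <;> simp only [child, leftMul]
  · rw [this]; ring
  · ring

theorem big_leftMul {a b : ℝ} {N κ : ℕ} {A : Set (ℝ × ℝ × ℝ)} {p : ℝ × ℝ × ℝ} :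
    ∀ {n : ℕ} {q : ℝ × ℝ × ℝ},
      Big b N κ n A (leftMul a b p q) ↔ Big b N κ n {r | leftMul a b p r ∈ A} q
  | 0, q => by simp [Big]
  | n + 1, q => by
    simp only [Big, child_leftMul, big_leftMul]

/-- Of many `Big` sets over a common root, a definite proportion has a common leaf. -/
theorem exists_common_leaf {ι : Type*} {b : ℝ} (hb : 0 < b) {N κ : ℕ} (hN : 0 < N) [DecidableEq ι]
    (A : ι → Set (ℝ × ℝ × ℝ)) : ∀ {n : ℕ} {p : ℝ × ℝ × ℝ} {F : Finset ι},
    (∀ γ ∈ F, Big b N κ n (A γ) p) →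
      ∃ q, Desc b N n p q ∧ ∃ F' ⊆ F, (∀ γ ∈ F', q ∈ A γ) ∧ κ ^ n * F.card ≤ N ^ n * F'.card
  | 0, p, F, h => ⟨p, desc_zero b N p, F, subset_rfl, h, by simp⟩
  | n + 1, p, F, h => by
    classical
    let G : ℕ → Finset ι := fun i => F.filter fun γ => Big b N κ n (A γ) (child b N i p)
    have h1 : κ * F.card ≤ ∑ i ∈ Finset.range N, (G i).card := by
      have : ∑ i ∈ Finset.range N, (G i).card =
          ∑ γ ∈ F, ((Finset.range N).filter fun i => Big b N κ n (A γ) (child b N i p)).card := by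
        simp only [G, Finset.card_filter]
        exact Finset.sum_comm
      rw [this, mul_comm, ← smul_eq_mul, ← Finset.sum_const]
      refine Finset.sum_le_sum fun γ hγ => ?_
      obtain ⟨t, ht, hk, ht'⟩ := h γ hγ
      exact hk.trans (Finset.card_le_card fun i hi => Finset.mem_filter.2 ⟨ht hi, ht' i hi⟩)
    obtain ⟨i, hi, hi'⟩ : ∃ i ∈ Finset.range N, κ * F.card ≤ N * (G i).card := by
      by_contra hcon
      push Not at hcon
      have h2 : ∑ i ∈ Finset.range N, N * (G i).card < ∑ i ∈ Finset.range N, κ * F.card :=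
        Finset.sum_lt_sum_of_nonempty (by simpa using hN.ne') hcon
      rw [← Finset.mul_sum, Finset.sum_const, Finset.card_range, smul_eq_mul] at h2
      exact absurd (Nat.lt_of_mul_lt_mul_left h2) (not_lt.2 h1)
    obtain ⟨q, hq, F', hF', hA, hc⟩ := exists_common_leaf hb hN A (n := n)
      (p := child b N i p) (F := G i) fun γ hγ => (Finset.mem_filter.1 hγ).2
    refine ⟨q, (hq.of_child hb (Finset.mem_range.1 hi)).1, F', hF'.trans (Finset.filter_subset _ _),
      hA, ?_⟩
    calc κ ^ (n + 1) * F.card = κ ^ n * (κ * F.card) := by ring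
      _ ≤ κ ^ n * (N * (G i).card) := Nat.mul_le_mul_left _ hi'
      _ = N * (κ ^ n * (G i).card) := by ring
      _ ≤ N * (N ^ n * F'.card) := Nat.mul_le_mul_left _ hc
      _ = N ^ (n + 1) * F'.card := by ring

/-! ### Rates of height gain along trees -/

section

/-- Standing assumptions on the parameters. -/
structure Params (a b K : ℝ) (N κ : ℕ) : Prop where
  ha : 0 < a
  hb : 0 < b
  hK : 1 ≤ K
  hκ : 1 ≤ κ
  hκN : κ + 2 ≤ N

/-- Every coarse embedding gains the height `v` on a `Big` set of leaves of every tree of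
depth `n`. -/
def Rate (a b K : ℝ) (N κ n : ℕ) (v : ℝ) : Prop :=
  ∀ φ, CoarseEmb a b K φ → ∀ p, Big b N κ n {q | (φ p).2.2 + v ≤ (φ q).2.2} p

/-- The asymptotic height gain per level. -/
def heightSlope (a b K : ℝ) (N κ : ℕ) : ℝ :=
  sSup {x | ∃ n : ℕ, 1 ≤ n ∧ ∃ v, Rate a b K N κ n v ∧ x = v / n}

variable {a b K : ℝ} {N κ : ℕ}

theorem Params.logN_pos (P : Params a b K N κ) : 0 < Real.log N := by
  refine Real.log_pos ?_
  have h := P.hκN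
  have h' := P.hκ
  exact_mod_cast (by omega : 1 < N)

theorem Params.step_pos (P : Params a b K N κ) : 0 < Real.log N / b := div_pos P.logN_pos P.hb

theorem CoarseEmb.abs_height_sub_le {φ : ℝ × ℝ × ℝ → ℝ × ℝ × ℝ} (h : CoarseEmb a b K φ) {ℓ : ℝ}
    (hl : 1 ≤ ℓ) {p q : ℝ × ℝ × ℝ} (hpq : Near a b ℓ p q) :
    |(φ p).2.2 - (φ q).2.2| ≤ K * ℓ :=
  ((h ℓ hl p q).1 hpq).1

theorem Rate.mono {n : ℕ} {v w : ℝ} (hb : 0 < b) (h : Rate a b K N κ n v) (hw : w ≤ v) :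
    Rate a b K N κ n w := fun φ hφ p =>
  (h φ hφ p).mono_desc hb fun q _ hq => by
    simp only [mem_ofPred_eq] at hq ⊢
    linarith

theorem Rate.add {n m : ℕ} {v w : ℝ} (hb : 0 < b) (h : Rate a b K N κ n v)
    (h' : Rate a b K N κ m w) : Rate a b K N κ (n + m) (v + w) := fun φ hφ p => by
  rw [big_add]
  refine (h φ hφ p).mono_desc hb fun q _ hq => (h' φ hφ q).mono_desc hb fun r _ hr => ?_
  simp only [mem_ofPred_eq] at hq hr ⊢
  linarith

theorem rate_zero : Rate a b K N κ 0 0 := fun φ _ p => by simp [Big]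

theorem Rate.mul {n : ℕ} {v : ℝ} (hb : 0 < b) (h : Rate a b K N κ n v) (k : ℕ) :
    Rate a b K N κ (k * n) (k * v) := by
  induction k with
  | zero => simpa using rate_zero
  | succ k ih =>
    have := ih.add hb h
    rw [show (k + 1) * n = k * n + n by ring]
    convert this using 1
    push_cast
    ring

theorem rate_crude (P : Params a b K N κ) (n : ℕ) :
    Rate a b K N κ n (-(K * max 1 (n * (Real.log N / b)))) := fun φ hφ p => by
  refine big_of_forall P.hb (by have := P.hκN; omega) fun q hq => ?_
  have h := hφ.abs_height_sub_le (le_max_left 1 (n * (Real.log N / b)))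
    (hq.near (a := a) (zero_le_one.trans (le_max_left 1 (n * (Real.log N / b)))) (by
      rw [abs_of_nonneg (mul_nonneg (Nat.cast_nonneg _) P.step_pos.le)]
      exact le_max_right _ _))
  simp only [mem_ofPred_eq]
  linarith [(abs_le.1 h).2]

theorem Rate.le (P : Params a b K N κ) {n : ℕ} {v : ℝ} (h : Rate a b K N κ n v) :
    v ≤ n * (Real.log N / b) := by
  obtain ⟨q, hq, hq'⟩ := (h id (coarseEmb_id P.hK) 0).exists_mem P.hb P.hκ
  have := hq.2.1
  simp only [id, mem_ofPred_eq] at hq'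
  linarith

theorem not_rate_of_slope_lt (P : Params a b K N κ) {n : ℕ} (hn : 1 ≤ n) {v : ℝ}
    (hv : heightSlope a b K N κ * n < v) : ¬ Rate a b K N κ n v := fun h => by
  have hn' : (0 : ℝ) < n := by exact_mod_cast hn
  have : v / n ≤ heightSlope a b K N κ := by
    refine le_csSup ⟨Real.log N / b, ?_⟩ ⟨n, hn, v, h, rfl⟩
    rintro x ⟨m, hm, w, hw, rfl⟩
    have hm' : (0 : ℝ) < m := by exact_mod_cast hm
    rw [div_le_iff₀ hm']
    linarith [hw.le P]
  rw [div_le_iff₀ hn'] at this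
  linarith

theorem exists_rate (P : Params a b K N κ) {ε : ℝ} (hε : 0 < ε) :
    ∃ c, 0 ≤ c ∧ ∀ n : ℕ, Rate a b K N κ n ((heightSlope a b K N κ - ε) * n - c) := by
  obtain ⟨x, ⟨m, hm, v, hv, rfl⟩, hx⟩ := exists_lt_of_lt_csSup
    (s := {x | ∃ n : ℕ, 1 ≤ n ∧ ∃ v, Rate a b K N κ n v ∧ x = v / n})
    ⟨_, 1, le_rfl, _, rate_crude P 1, rfl⟩ (sub_lt_self (heightSlope a b K N κ) hε)
  change heightSlope a b K N κ - ε < v / m at hx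
  set τ := heightSlope a b K N κ - ε
  have hm' : (0 : ℝ) < m := by exact_mod_cast hm
  have hs := P.step_pos
  have hK := P.hK
  rw [lt_div_iff₀ hm'] at hx
  have hmax : 0 ≤ max 1 (m * (Real.log N / b)) := zero_le_one.trans (le_max_left _ _)
  refine ⟨|τ| * m + K * max 1 (m * (Real.log N / b)), by positivity, fun n => ?_⟩
  have h := (hv.mul P.hb (n / m)).add P.hb (rate_crude P (n % m))
  have hn : n / m * m + n % m = n := by rw [mul_comm]; exact Nat.div_add_mod n m
  rw [hn] at h
  refine h.mono P.hb ?_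
  have hr : ((n % m : ℕ) : ℝ) ≤ m := by exact_mod_cast (Nat.mod_lt n hm).le
  have hr0 : (0 : ℝ) ≤ ((n % m : ℕ) : ℝ) := Nat.cast_nonneg _
  have h1 : max 1 (((n % m : ℕ) : ℝ) * (Real.log N / b)) ≤ max 1 (m * (Real.log N / b)) :=
    max_le_max le_rfl (mul_le_mul_of_nonneg_right hr hs.le)
  have h2 := mul_le_mul_of_nonneg_left h1 (zero_le_one.trans hK)
  have h3 : ((n / m : ℕ) : ℝ) * (τ * m) ≤ ((n / m : ℕ) : ℝ) * v :=
    mul_le_mul_of_nonneg_left hx.le (Nat.cast_nonneg _)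
  have h4 : (n : ℝ) = ((n / m : ℕ) : ℝ) * m + ((n % m : ℕ) : ℝ) := by exact_mod_cast hn.symm
  have h5 : τ * ((n % m : ℕ) : ℝ) ≤ |τ| * m :=
    (mul_le_mul_of_nonneg_right (le_abs_self _) hr0).trans
      (mul_le_mul_of_nonneg_left hr (abs_nonneg _))
  rw [h4]
  nlinarith

/-- At depth `n` the bound `v` fails for a normalised coarse embedding. -/
theorem exists_normalized_not_big (P : Params a b K N κ) {n : ℕ} (hn : 1 ≤ n) {v : ℝ}
    (hv : heightSlope a b K N κ * n < v) :
    ∃ φ, CoarseEmb a b K φ ∧ φ 0 = 0 ∧ ¬ Big b N κ n {q | v ≤ (φ q).2.2} 0 := by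
  have h := not_rate_of_slope_lt P hn hv
  unfold Rate at h
  push Not at h
  obtain ⟨φ, hφ, p, hp⟩ := h
  refine ⟨_, hφ.normalize p (φ p), ?_, fun hB => hp ?_⟩
  · rw [leftMul_zero, leftDiv_self]
  · have := (big_leftMul (a := a) (b := b) (N := N) (κ := κ) (p := p) (n := n) (q := 0)
      (A := {q | (φ p).2.2 + v ≤ (φ q).2.2})).2 (hB.mono_desc P.hb fun q _ hq => by
        simp only [mem_ofPred_eq, leftDiv] at hq ⊢
        linarith)
    rwa [leftMul_zero] at this

end

/-! ### Lines of extremal slope -/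

section

variable {a b K : ℝ} {N κ : ℕ}

theorem exists_line (hb : 0 < b) {φ : ℝ × ℝ × ℝ → ℝ × ℝ × ℝ} (hφ : CoarseEmb a b K φ) {m : ℕ}
    {w : ℝ} (hw : Rate a b K N κ m w) {A : Set (ℝ × ℝ × ℝ)} :
    ∀ {J : ℕ} {u : ℝ × ℝ × ℝ}, ¬ Big b N κ (J * m) A u →
      ∃ q : ℕ → ℝ × ℝ × ℝ, q 0 = u ∧ (∀ i ≤ J, ¬ Big b N κ ((J - i) * m) A (q i)) ∧
        ∀ i < J, Desc b N m (q i) (q (i + 1)) ∧ (φ (q i)).2.2 + w ≤ (φ (q (i + 1))).2.2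
  | 0, u, h => ⟨fun _ => u, rfl, fun i hi => by simpa using h, fun i hi => by omega⟩
  | J + 1, u, h => by
    have h' := h
    rw [show (J + 1) * m = m + J * m by ring, big_add] at h'
    obtain ⟨r, hr, hr1, hr2⟩ := (hw φ hφ u).exists_not hb h'
    obtain ⟨q, hq0, hq1, hq2⟩ := exists_line hb hφ hw (A := A) (J := J) (u := r) hr2
    refine ⟨fun i => Nat.casesOn i u q, rfl, fun i hi => ?_, fun i hi => ?_⟩
    · cases i with
      | zero => simpa using h
      | succ i => simpa using hq1 i (by omega)
    · cases i with
      | zero => exact ⟨by simpa [hq0] using hr, by simpa [hq0] using hr1⟩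
      | succ i => exact hq2 i (by omega)

theorem exists_node_of_not_big (hb : 0 < b) (hN : 1 ≤ N) {l : ℕ} {A : Set (ℝ × ℝ × ℝ)} {y : ℝ} :
    ∀ {j : ℕ} {p : ℝ × ℝ × ℝ}, ¬ Big b N 1 (j + l) A p → p.2.1 ≤ y →
      y ≤ p.2.1 + Real.exp (-b * p.2.2) →
      ∃ u, Desc b N j p u ∧ u.2.1 ≤ y ∧ y ≤ u.2.1 + Real.exp (-b * u.2.2) ∧ ¬ Big b N 1 l A u
  | 0, p, h, h1, h2 => ⟨p, desc_zero b N p, h1, h2, by simpa using h⟩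
  | j + 1, p, h, h1, h2 => by
    have hN' : (0 : ℝ) < N := by exact_mod_cast hN
    have hE := Real.exp_pos (-b * p.2.2)
    set E := Real.exp (-b * p.2.2) with hEdef
    obtain ⟨i, hi, h3, h4⟩ : ∃ i < N, E * (i / N) ≤ y - p.2.1 ∧
        y - p.2.1 ≤ E * ((i + 1) / N) := by
      have hx0 : 0 ≤ (y - p.2.1) / E * N :=
        mul_nonneg (div_nonneg (by linarith) hE.le) hN'.le
      have e : y - p.2.1 = E * ((y - p.2.1) / E * N / N) := by field_simp
      by_cases hc : ⌊(y - p.2.1) / E * N⌋₊ < N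
      · refine ⟨_, hc, ?_, ?_⟩
        · rw [e]
          exact mul_le_mul_of_nonneg_left
            (div_le_div_of_nonneg_right (by simpa [← e] using Nat.floor_le hx0) hN'.le) hE.le
        · rw [e]
          exact mul_le_mul_of_nonneg_left
            (div_le_div_of_nonneg_right (by simpa [← e] using (Nat.lt_floor_add_one _).le) hN'.le)
            hE.le
      · have h5 : (N : ℝ) ≤ (y - p.2.1) / E * N := (Nat.le_floor_iff hx0).1 (not_lt.1 hc)
        have h6 : E ≤ y - p.2.1 := by
          have : 1 ≤ (y - p.2.1) / E := by nlinarith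
          rwa [le_div_iff₀ hE, one_mul] at this
        have h7 : (((N - 1 : ℕ) : ℝ) + 1) / N = 1 := by
          rw [Nat.cast_sub hN]; field_simp; ring
        have h8 : ((N - 1 : ℕ) : ℝ) / N ≤ 1 := by
          rw [← h7]; gcongr; linarith
        refine ⟨N - 1, by omega, ?_, ?_⟩
        · nlinarith
        · rw [h7]; linarith
    have h5 : ¬ Big b N 1 (j + l) A (child b N i p) := fun hB => h <| by
      rw [show j + 1 + l = (j + l) + 1 by ring]
      exact ⟨{i}, by simpa using hi, by simp, by simpa using hB⟩
    obtain ⟨u, hu, hu'⟩ := exists_node_of_not_big hb hN (y := y) h5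
      (by simp only [child]; linarith)
      (by
        simp only [child]
        rw [exp_child hb hN, ← hEdef]
        have : E * ((i + 1) / N) = E * (i / N) + E / N := by ring
        linarith)
    exact ⟨u, (hu.of_child hb hi).1, hu'⟩

/-- Below a node at which `Big` fails, the height of the image is bounded, uniformly along the
horizontal direction that is contracted upwards. -/
theorem height_le_of_not_big (P : Params a b K N κ) {φ : ℝ × ℝ × ℝ → ℝ × ℝ × ℝ}
    (hφ : CoarseEmb a b K φ) {l : ℕ} {w h : ℝ} (hw : Rate a b K N κ l w) {u : ℝ × ℝ × ℝ}
    (hu : ¬ Big b N κ l {q | h ≤ (φ q).2.2} u) {x : ℝ}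
    (hx : |x| ≤ Real.exp (a * (u.2.2 + l * (Real.log N / b)))) :
    (φ (u.1 + x, u.2.1, u.2.2)).2.2 ≤ h + K - w := by
  by_contra! hcon
  refine hu ?_
  have e : leftMul a b (x, 0, 0) u = (u.1 + x, u.2.1, u.2.2) := by
    ext <;> simp [leftMul, add_comm]
  have h1 := hw φ hφ (u.1 + x, u.2.1, u.2.2)
  rw [← e, big_leftMul] at h1
  refine h1.mono_desc P.hb fun q hq hq' => ?_
  simp only [mem_ofPred_eq] at hq' ⊢
  have h2 : Near a b 1 (leftMul a b (x, 0, 0) q) q := by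
    refine ⟨?_, ?_, ?_⟩
    · simp [leftMul]
    · have : |x| ≤ Real.exp (a * q.2.2 + 1) :=
        hx.trans (Real.exp_le_exp.2 (by rw [hq.2.1]; linarith))
      simpa [leftMul] using this
    · simpa [leftMul] using (Real.exp_pos _).le
  have h3 := (abs_le.1 (hφ.abs_height_sub_le le_rfl h2)).2
  rw [e] at hq'
  linarith

/-- A chain of points going up the vertical direction whose images follow the extremal slope. -/
structure IsLine (a b K : ℝ) (N κ : ℕ) (φ : ℝ × ℝ × ℝ → ℝ × ℝ × ℝ) (J m : ℕ)
    (q : ℕ → ℝ × ℝ × ℝ) : Prop where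
  fst : ∀ i ≤ J, (q i).1 = 0
  height : ∀ i ≤ J, (q i).2.2 = (1 + i * m) * (Real.log N / b)
  snd_nonneg : ∀ i ≤ J, 0 ≤ (q i).2.1
  snd_le : ∀ i ≤ J, (q i).2.1 ≤ 1
  desc : ∀ i < J, Desc b N m (q i) (q (i + 1))
  lower : ∀ i ≤ J, heightSlope a b K N κ * (i * m) - 3 * m ≤ (φ (q i)).2.2
  upper : ∀ i ≤ J, ∀ x, |x| ≤ Real.exp (a * ((1 + J * m) * (Real.log N / b))) →
    (φ (x, (q i).2.1, (q i).2.2)).2.2 ≤ heightSlope a b K N κ * (i * m) + 2 * m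

theorem exists_isLine (P : Params a b K N κ) {φ : ℝ × ℝ × ℝ → ℝ × ℝ × ℝ}
    (hφ : CoarseEmb a b K φ) (hφ0 : φ 0 = 0) {J m : ℕ} (hJ : 1 ≤ J) {c : ℝ}
    (hc : ∀ n : ℕ, Rate a b K N κ n ((heightSlope a b K N κ - 1 / J) * n - c))
    (hm1 : J * (c + 1) ≤ m) (hm2 : c + K + 1 + |heightSlope a b K N κ| ≤ m)
    (hm3 : K * max 1 (Real.log N / b) ≤ m) {k : ℕ} (hk : k < N)
    (hB : ¬ Big b N κ (J * m) {q | heightSlope a b K N κ * (1 + J * m) + 1 ≤ (φ q).2.2}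
      (child b N k 0)) :
    ∃ q, IsLine a b K N κ φ J m q ∧ q 0 = child b N k 0 ∧
      ∀ i ≤ J, (k : ℝ) / N ≤ (q i).2.1 ∧ (q i).2.1 ≤ (k + 1) / N := by
  obtain ⟨q, hq0, hq1, hq2⟩ := exists_line P.hb hφ (hc m) hB
  have hJ' : (0 : ℝ) < J := by exact_mod_cast hJ
  have hN' : (0 : ℝ) < N := by exact_mod_cast (by omega : 0 < N)
  have hm0 : (0 : ℝ) ≤ m := Nat.cast_nonneg m
  have hdesc : ∀ i ≤ J, Desc b N (i * m) (child b N k 0) (q i) := by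
    intro i
    induction i with
    | zero => intro _; simpa [hq0] using desc_zero b N _
    | succ i ih =>
      intro hi
      have := (ih (by omega)).trans (hq2 i (by omega)).1
      rwa [show i * m + m = (i + 1) * m by ring] at this
  have hdesc0 : ∀ i ≤ J, Desc b N (i * m + 1) 0 (q i) ∧ (k : ℝ) / N ≤ (q i).2.1 ∧
      (q i).2.1 ≤ (k + 1) / N := by
    intro i hi
    obtain ⟨h1, h2, h3⟩ := (hdesc i hi).of_child P.hb hk
    have := Real.exp_pos (-b * (q i).2.2)
    refine ⟨h1, by simpa using h2, ?_⟩
    have h4 : (q i).2.1 + Real.exp (-b * (q i).2.2) ≤ (k + 1) / N := by simpa using h3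
    linarith
  have hk1 : ((k : ℝ) + 1) / N ≤ 1 := by
    rw [div_le_one hN']; exact_mod_cast hk
  have hheight : ∀ i ≤ J, (q i).2.2 = (1 + i * m) * (Real.log N / b) := by
    intro i hi
    rw [(hdesc0 i hi).1.2.1]
    simp only [Prod.snd_zero]
    push_cast
    ring
  set σ := heightSlope a b K N κ
  have hlow : ∀ i ≤ J, -(K * max 1 (Real.log N / b)) + i * ((σ - 1 / J) * m - c) ≤
      (φ (q i)).2.2 := by
    intro i
    induction i with
    | zero =>
      intro _
      have h1 : Near a b (max 1 (Real.log N / b)) 0 (child b N k 0) :=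
        (desc_child P.hb hk 0).near (zero_le_one.trans (le_max_left _ _)) (by
          rw [Nat.cast_one, one_mul, abs_of_pos P.step_pos]
          exact le_max_right _ _)
      have := (abs_le.1 (hφ.abs_height_sub_le (le_max_left _ _) h1)).2
      rw [hφ0, ← hq0] at this
      simp only [Prod.snd_zero] at this
      simp only [Nat.cast_zero, zero_mul]
      linarith
    | succ i ih =>
      intro hi
      have h1 := ih (by omega)
      have h2 := (hq2 i (by omega)).2
      push_cast
      linarith
  refine ⟨q, ⟨fun i hi => ?_, hheight, fun i hi => ?_, fun i hi => ?_, fun i hi => (hq2 i hi).1,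
    fun i hi => ?_, fun i hi x hx => ?_⟩, hq0, fun i hi => (hdesc0 i hi).2⟩
  · simpa using (hdesc0 i hi).1.1
  · exact (by positivity : (0 : ℝ) ≤ k / N).trans (hdesc0 i hi).2.1
  · exact (hdesc0 i hi).2.2.trans hk1
  · have h1 := hlow i hi
    have hi' : (i : ℝ) ≤ J := by exact_mod_cast hi
    have hc0 : 0 ≤ (m : ℝ) / J + c := by
      have : c + 1 ≤ m / J := by rw [le_div_iff₀ hJ']; linarith
      by_contra hneg
      have h0 := (hc 0).le P
      simp at h0
      have : 0 ≤ (m : ℝ) / J := by positivity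
      linarith
    have h2 : (i : ℝ) * (m / J + c) ≤ J * (m / J + c) := mul_le_mul_of_nonneg_right hi' hc0
    have h3 : (J : ℝ) * (m / J + c) = m + J * c := by field_simp
    have h4 : (i : ℝ) * ((σ - 1 / J) * m - c) = σ * (i * m) - i * (m / J + c) := by ring
    linarith
  · have hz := hheight i hi
    have hcast : (((J - i) * m : ℕ) : ℝ) = (J - i) * m := by
      rw [Nat.cast_mul, Nat.cast_sub hi]
    have h1 := height_le_of_not_big P hφ (hc ((J - i) * m)) (hq1 i hi) (x := x) (by
      rw [hz, hcast]; refine hx.trans_eq ?_; ring_nf)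
    rw [(by simpa using (hdesc0 i hi).1.1 : (q i).1 = 0), zero_add, hcast] at h1
    refine h1.trans ?_
    have h5 : 1 / (J : ℝ) * ((J - i) * m) ≤ m := by
      have : 1 / (J : ℝ) * ((J - i) * m) = m - i * m / J := by field_simp
      rw [this]
      have : 0 ≤ (i : ℝ) * m / J := by positivity
      linarith
    have := le_abs_self σ
    nlinarith

/-- Two separated extremal lines. -/
theorem exists_two_lines (P : Params a b K N κ) {J : ℕ} (hJ : 1 ≤ J) :
    ∃ m₀ : ℕ, ∀ m : ℕ, m₀ ≤ m → ∃ φ q q', CoarseEmb a b K φ ∧ φ 0 = 0 ∧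
      IsLine a b K N κ φ J m q ∧ IsLine a b K N κ φ J m q' ∧
      (∀ i ≤ J, 1 / (N : ℝ) ≤ |(q i).2.1 - (q' i).2.1|) ∧
      (∀ x, |x| ≤ Real.exp (a * ((1 + J * m) * (Real.log N / b))) → (φ (x, 0, 0)).2.2 ≤ 3 * m) ∧
      (κ = 1 → ∀ y z, 0 ≤ y → y ≤ 1 → 0 ≤ z → z ≤ (1 + J * m) * (Real.log N / b) →
        (φ (0, y, z)).2.2 ≤ heightSlope a b K N κ * (z / (Real.log N / b)) + 4 * m) := by
  have hJ' : (0 : ℝ) < J := by exact_mod_cast hJ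
  obtain ⟨c, hc0, hc⟩ := exists_rate P (one_div_pos.2 hJ')
  have hs := P.step_pos
  set s := Real.log N / b with hsdef
  set σ := heightSlope a b K N κ with hσ
  obtain ⟨m₀, hm₀⟩ := exists_nat_ge (J * (c + 1) + (c + K + 2 + |σ|) + K * max 1 s)
  have hK := P.hK
  have hmax : 1 ≤ max 1 s := le_max_left _ _
  have h1 : 0 ≤ J * (c + 1) := by positivity
  have h2 : 0 ≤ c + K + 2 + |σ| := by positivity
  have h3 : 0 ≤ K * max 1 s := by positivity
  refine ⟨m₀, fun m hm => ?_⟩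
  have hm' : (m₀ : ℝ) ≤ m := by exact_mod_cast hm
  set n := J * m + 1 with hn
  have hncast : (n : ℝ) = 1 + J * m := by rw [hn]; push_cast; ring
  obtain ⟨φ, hφ, hφ0, hB⟩ := exists_normalized_not_big P (n := n) (by omega)
    (v := σ * (1 + J * m) + 1) (by rw [hncast]; linarith)
  obtain ⟨i, j, hij, hj, hBi, hBj⟩ := exists_children_of_not_big P.hκN hB
  have hN' : (0 : ℝ) < N := by exact_mod_cast (by omega : 0 < N)
  obtain ⟨q, hq, -, hqy⟩ := exists_isLine P hφ hφ0 hJ hc (by linarith) (by linarith)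
    (by linarith) (by omega : i < N) hBi
  obtain ⟨q', hq', -, hqy'⟩ := exists_isLine P hφ hφ0 hJ hc (by linarith) (by linarith)
    (by linarith) hj hBj
  have hJ1 : 1 / (J : ℝ) ≤ 1 := by
    rw [div_le_one hJ']; exact_mod_cast hJ
  refine ⟨φ, q, q', hφ, hφ0, hq, hq', fun r hr => ?_, fun x hx => ?_,
    fun hκ y z hy0 hy1 hz0 hz1 => ?_⟩
  · have e1 := (hqy r hr).2
    have e2 := (hqy' r hr).1
    have e3 : ((i : ℝ) + 1) / N + 1 / N ≤ j / N := by
      rw [← add_div]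
      gcongr
      exact_mod_cast (by omega : i + 1 + 1 ≤ j)
    rw [abs_sub_comm]
    exact (by linarith : 1 / (N : ℝ) ≤ (q' r).2.1 - (q r).2.1).trans (le_abs_self _)
  · have e1 := height_le_of_not_big P hφ (hc n) hB (x := x) (by
      rw [hncast]; refine hx.trans_eq ?_; simp [hsdef])
    rw [hncast] at e1
    have e2 : 1 / (J : ℝ) * (1 + J * m) = 1 / J + m := by field_simp
    have e3 : (φ (x, 0, 0)).2.2 ≤ σ * (1 + J * m) + 1 + K - ((σ - 1 / J) * (1 + J * m) - c) := by
      simpa using e1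
    have := abs_nonneg σ
    nlinarith
  · have e0 : 0 ≤ z / s := by positivity
    have e1 : (⌊z / s⌋₊ : ℝ) ≤ z / s := Nat.floor_le e0
    have e2 : z / s < ⌊z / s⌋₊ + 1 := Nat.lt_floor_add_one _
    set k := ⌊z / s⌋₊
    have hkn : k ≤ n := by
      have : (k : ℝ) ≤ n := by
        rw [hncast]
        exact e1.trans (by rwa [div_le_iff₀ hs])
      exact_mod_cast this
    obtain ⟨l, hl⟩ := Nat.exists_eq_add_of_le hkn
    have hlcast : (l : ℝ) = n - k := by rw [hl]; push_cast; ring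
    rw [hκ, hl] at hB
    obtain ⟨u, hu, hu1, hu2, hu3⟩ := exists_node_of_not_big P.hb (by omega) hB (y := y)
      (by simpa using hy0) (by simpa using hy1)
    rw [← hκ] at hu3
    have hux : u.1 = 0 := by simpa using hu.1
    have huz : u.2.2 = k * s := by simpa using hu.2.1
    have e3 := height_le_of_not_big P hφ (hc l) hu3 (x := 0) (by simpa using (Real.exp_pos _).le)
    rw [add_zero] at e3
    have h4 : Near a b (max 1 s) u (0, y, z) := by
      have e4 : z = z / s * s := by field_simp
      refine ⟨?_, ?_, ?_⟩
      · refine le_trans ?_ (le_max_right _ _)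
        rw [huz, abs_le]
        constructor <;> simp only <;> nlinarith
      · simpa [hux] using (Real.exp_pos _).le
      · rw [abs_sub_comm, abs_of_nonneg (by linarith)]
        have : Real.exp (-b * u.2.2) ≤ Real.exp (-b * u.2.2 + max 1 s) :=
          Real.exp_le_exp.2 (by linarith)
        simp only
        linarith
    have h5 := (abs_le.1 (hφ.abs_height_sub_le hmax h4)).1
    rw [hlcast, hncast] at e3
    change (φ u).2.2 ≤ _ at e3
    have e5 : 1 / (J : ℝ) * (1 + J * m - k) = 1 / J + m - k / J := by field_simp
    have e6 : 0 ≤ (k : ℝ) / J := by positivity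
    have e7 : σ * k ≤ σ * (z / s) + |σ| := by
      have h6 : |σ * (k - z / s)| ≤ |σ| * 1 := by
        rw [abs_mul]
        refine mul_le_mul_of_nonneg_left ?_ (abs_nonneg _)
        rw [abs_le]; constructor <;> linarith
      have := (abs_le.1 h6).2
      linarith
    nlinarith

end

/-! ### Pairs of lines with a common origin -/

section

variable {a b K : ℝ} {N κ : ℕ}

theorem abs_fst_sub_le_of_chain (ha : 0 ≤ a) {w : ℕ → ℝ × ℝ × ℝ} {L hi : ℝ} {i j : ℕ} (hij : i ≤ j)
    (h : ∀ k, i ≤ k → k < j → Near a b L (w k) (w (k + 1)) ∧ (w k).2.2 ≤ hi) :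
    |(w i).1 - (w j).1| ≤ (j - i) * Real.exp (a * hi + L) := by
  induction j, hij using Nat.le_induction with
  | base => simp
  | succ j hij ih =>
    have h1 := ih fun k hk hk' => h k hk (by omega)
    obtain ⟨h2, h3⟩ := h j hij (by omega)
    have h4 : Real.exp (a * (w j).2.2 + L) ≤ Real.exp (a * hi + L) :=
      Real.exp_le_exp.2 (by nlinarith)
    have h5 := abs_sub_le (w i).1 (w j).1 (w (j + 1)).1
    push_cast
    linarith [h2.2.1]

theorem abs_snd_sub_le_of_chain (hb : 0 ≤ b) {w : ℕ → ℝ × ℝ × ℝ} {L lo : ℝ} {i j : ℕ} (hij : i ≤ j)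
    (h : ∀ k, i ≤ k → k < j → Near a b L (w k) (w (k + 1)) ∧ lo ≤ (w k).2.2) :
    |(w i).2.1 - (w j).2.1| ≤ (j - i) * Real.exp (-b * lo + L) := by
  induction j, hij using Nat.le_induction with
  | base => simp
  | succ j hij ih =>
    have h1 := ih fun k hk hk' => h k hk (by omega)
    obtain ⟨h2, h3⟩ := h j hij (by omega)
    have h4 : Real.exp (-b * (w j).2.2 + L) ≤ Real.exp (-b * lo + L) :=
      Real.exp_le_exp.2 (by nlinarith)
    have h5 := abs_sub_le (w i).2.1 (w j).2.1 (w (j + 1)).2.1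
    push_cast
    linarith [h2.2.2]

theorem mul_exp_le {c x y : ℝ} (h : c ≤ Real.exp y) : c * Real.exp x ≤ Real.exp (x + y) := by
  rw [Real.exp_add, mul_comm]
  exact mul_le_mul_of_nonneg_left h (Real.exp_pos _).le

/-- Two extremal lines at a scale `m` that is large compared with all the constants. -/
structure LinePair (a b K : ℝ) (N κ J m : ℕ) (φ : ℝ × ℝ × ℝ → ℝ × ℝ × ℝ)
    (q q' : ℕ → ℝ × ℝ × ℝ) : Prop where
  emb : CoarseEmb a b K φ
  zero : φ 0 = 0
  left : IsLine a b K N κ φ J m q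
  right : IsLine a b K N κ φ J m q'
  sep : ∀ i ≤ J, 1 / (N : ℝ) ≤ |(q i).2.1 - (q' i).2.1|
  base_le : ∀ x, |x| ≤ Real.exp (a * ((1 + J * m) * (Real.log N / b))) → (φ (x, 0, 0)).2.2 ≤ 3 * m
  all_le : κ = 1 → ∀ y z, 0 ≤ y → y ≤ 1 → 0 ≤ z → z ≤ (1 + J * m) * (Real.log N / b) →
    (φ (0, y, z)).2.2 ≤ heightSlope a b K N κ * (z / (Real.log N / b)) + 4 * m
  one_le : 1 ≤ m
  start_le : K * max 1 (Real.log N / b) ≤ m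
  one_le_mul : 1 ≤ m * (Real.log N / b)
  le_exp : 2 * (J : ℝ) + 4 ≤ Real.exp m

theorem exists_linePair (P : Params a b K N κ) {J : ℕ} (hJ : 1 ≤ J) :
    ∃ m₀ : ℕ, ∀ m : ℕ, m₀ ≤ m → ∃ φ q q', LinePair a b K N κ J m φ q q' := by
  obtain ⟨m₀, h⟩ := exists_two_lines P hJ
  obtain ⟨m₁, h₁⟩ := exists_nat_ge (K * max 1 (Real.log N / b))
  obtain ⟨m₂, h₂⟩ := exists_nat_ge (1 / (Real.log N / b))
  refine ⟨m₀ + m₁ + m₂ + (2 * J + 4), fun m hm => ?_⟩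
  obtain ⟨φ, q, q', hφ, h0, hl, hr, hs, hb, hA⟩ := h m (by omega)
  have e1 : (m₁ : ℝ) ≤ m := by exact_mod_cast (by omega : m₁ ≤ m)
  have e2 : (m₂ : ℝ) ≤ m := by exact_mod_cast (by omega : m₂ ≤ m)
  have e3 : 2 * (J : ℝ) + 4 ≤ m := by exact_mod_cast (by omega : 2 * J + 4 ≤ m)
  refine ⟨φ, q, q', hφ, h0, hl, hr, hs, hb, hA, by omega, h₁.trans e1, ?_, ?_⟩
  · rw [← div_le_iff₀ P.step_pos]; exact h₂.trans e2
  · linarith [Real.add_one_le_exp (m : ℝ)]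

namespace LinePair

variable {J m : ℕ} {φ : ℝ × ℝ × ℝ → ℝ × ℝ × ℝ} {q q' : ℕ → ℝ × ℝ × ℝ}

theorem swap (h : LinePair a b K N κ J m φ q q') : LinePair a b K N κ J m φ q' q :=
  { h with
    left := h.right
    right := h.left
    sep := fun i hi => by rw [abs_sub_comm]; exact h.sep i hi }

theorem shift_zero (h : LinePair a b K N κ J m φ q q') {i : ℕ} (hi : i ≤ J) :
    ((0 : ℝ), (q i).2.1, (q i).2.2) = q i := by
  ext <;> simp [h.left.fst i hi]

theorem near_shift_succ (h : LinePair a b K N κ J m φ q q') (x : ℝ) {i : ℕ}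
    (hi : i < J) : Near a b (K * (m * (Real.log N / b))) (φ (x, (q i).2.1, (q i).2.2))
      (φ (x, (q (i + 1)).2.1, (q (i + 1)).2.2)) := by
  refine (h.emb _ h.one_le_mul _ _).1 ?_
  have hd : Desc b N m (x, (q i).2.1, (q i).2.2) (x, (q (i + 1)).2.1, (q (i + 1)).2.2) :=
    ⟨rfl, (h.left.desc i hi).2⟩
  refine hd.near (by linarith [h.one_le_mul]) (le_of_eq (abs_of_nonneg ?_))
  linarith [h.one_le_mul]

theorem near_start (P : Params a b K N κ) (h : LinePair a b K N κ J m φ q q') (x : ℝ) :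
    Near a b m (φ (x, 0, 0)) (φ (x, (q 0).2.1, (q 0).2.2)) := by
  refine Near.mono ((h.emb _ (le_max_left _ _) _ _).1 ?_) h.start_le
  have hs := P.step_pos
  have h1 := h.left.height 0 (Nat.zero_le _)
  have h2 := h.left.snd_nonneg 0 (Nat.zero_le _)
  have h3 := h.left.snd_le 0 (Nat.zero_le _)
  refine ⟨?_, by simpa using (Real.exp_pos _).le, ?_⟩
  · simp only [h1]
    simp [abs_of_pos hs]
  · have : 1 ≤ Real.exp (max 1 (Real.log N / b)) :=
      Real.one_le_exp (zero_le_one.trans (le_max_left _ _))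
    simp only [zero_sub, abs_neg, abs_of_nonneg h2, mul_zero, zero_add]
    linarith

theorem le_mul_of_near (P : Params a b K N κ) (h : LinePair a b K N κ J m φ q q') {i : ℕ}
    (hi : i ≤ J) {t : ℝ} (ht : 1 ≤ t) (hn : Near a b t (φ (q i)) (φ (q' i))) :
    Real.log N * (i * m) ≤ K * t := by
  have h1 := ((h.emb t ht _ _).2 hn).2.2
  have h2 := (h.sep i hi).trans h1
  have hN : (0 : ℝ) < N := by
    have := P.hκN
    exact_mod_cast (by omega : 0 < N)
  have h3 : Real.exp (-Real.log N) = 1 / N := by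
    rw [Real.exp_neg, Real.exp_log hN, one_div]
  rw [← h3, h.left.height i hi, Real.exp_le_exp] at h2
  have hb := P.hb
  have h4 : -b * ((1 + i * m) * (Real.log N / b)) = -Real.log N - Real.log N * (i * m) := by
    field_simp
    ring
  rw [h4] at h2
  linarith

/-- The images of the two lines at level `i` are close as soon as their displacements are
controlled. -/
theorem not_near_of_bounds (P : Params a b K N κ) (h : LinePair a b K N κ J m φ q q') {i : ℕ}
    (hi : i ≤ J) {X Y t : ℝ} (ht : 5 * m ≤ t)
    (hX : |(φ (q i)).1 - (φ (q' i)).1| ≤ Real.exp X)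
    (hY : |(φ (q i)).2.1 - (φ (q' i)).2.1| ≤ Real.exp Y)
    (hXt : X ≤ a * (heightSlope a b K N κ * (i * m) - 3 * m) + t)
    (hYt : Y ≤ -b * (heightSlope a b K N κ * (i * m) + 2 * m) + t) :
    Real.log N * (i * m) ≤ K * t := by
  have hm : (1 : ℝ) ≤ m := by exact_mod_cast h.one_le
  have l1 := h.left.lower i hi
  have l2 := h.right.lower i hi
  have u1 := h.left.upper i hi 0 (by simpa using (Real.exp_pos _).le)
  have u2 := h.right.upper i hi 0 (by simpa using (Real.exp_pos _).le)
  rw [h.shift_zero hi] at u1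
  rw [h.swap.shift_zero hi] at u2
  have ha := P.ha
  have hb := P.hb
  refine h.le_mul_of_near P hi (by linarith) ⟨?_, ?_, ?_⟩
  · rw [abs_le]; constructor <;> linarith
  · refine hX.trans (Real.exp_le_exp.2 (hXt.trans ?_))
    nlinarith
  · refine hY.trans (Real.exp_le_exp.2 (hYt.trans ?_))
    nlinarith

theorem abs_fst_sub_le (P : Params a b K N κ) (h : LinePair a b K N κ J m φ q q') (x : ℝ)
    {i j : ℕ} (hij : i ≤ j) (hj : j ≤ J) {hi : ℝ}
    (hh : ∀ k, i ≤ k → k < j → (φ (x, (q k).2.1, (q k).2.2)).2.2 ≤ hi) :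
    |(φ (x, (q i).2.1, (q i).2.2)).1 - (φ (x, (q j).2.1, (q j).2.2)).1| ≤
      J * Real.exp (a * hi + K * (m * (Real.log N / b))) := by
  refine (abs_fst_sub_le_of_chain (b := b) P.ha.le (w := fun k => φ (x, (q k).2.1, (q k).2.2)) hij
    fun k hk hk' => ⟨h.near_shift_succ x (by omega), hh k hk hk'⟩).trans ?_
  gcongr
  have : (j : ℝ) ≤ J := by exact_mod_cast hj
  have : (0 : ℝ) ≤ i := Nat.cast_nonneg i
  linarith

theorem abs_snd_sub_le (P : Params a b K N κ) (h : LinePair a b K N κ J m φ q q')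
    {i j : ℕ} (hij : i ≤ j) (hj : j ≤ J) {lo : ℝ}
    (hh : ∀ k, i ≤ k → k < j → lo ≤ (φ (q k)).2.2) :
    |(φ (q i)).2.1 - (φ (q j)).2.1| ≤
      J * Real.exp (-b * lo + K * (m * (Real.log N / b))) := by
  refine (abs_snd_sub_le_of_chain (a := a) P.hb.le (w := fun k => φ (q k))
    (L := K * (m * (Real.log N / b))) hij fun k hk hk' => ⟨?_, hh k hk hk'⟩).trans ?_
  · have := h.near_shift_succ 0 (by omega : k < J)
    rwa [h.shift_zero (by omega), h.shift_zero (by omega)] at this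
  · gcongr
    have : (j : ℝ) ≤ J := by exact_mod_cast hj
    have : (0 : ℝ) ≤ i := Nat.cast_nonneg i
    linarith

theorem abs_start_le (P : Params a b K N κ) (h : LinePair a b K N κ J m φ q q') :
    |(φ (q 0)).1| ≤ Real.exp m ∧ |(φ (q 0)).2.1| ≤ Real.exp m := by
  have h1 := h.near_start P 0
  rw [h.shift_zero (Nat.zero_le _)] at h1
  have h2 : φ ((0 : ℝ), (0 : ℝ), (0 : ℝ)) = 0 := h.zero
  rw [h2] at h1
  have e1 := h1.2.1
  have e2 := h1.2.2
  simp only [Prod.fst_zero, Prod.snd_zero, zero_sub, abs_neg, mul_zero, zero_add] at e1 e2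
  exact ⟨e1, e2⟩

theorem abs_sub_sub_le {x y z w X Y : ℝ} (h : |x - y| ≤ X) (h' : |z - w| ≤ X) (hy : |x| ≤ Y)
    (hw : |z| ≤ Y) : |y - w| ≤ 2 * X + 2 * Y := by
  rw [abs_le] at *
  constructor <;> linarith [h.1, h.2, h'.1, h'.2, hy.1, hy.2, hw.1, hw.2]

theorem two_mul_exp_add_le (h : LinePair a b K N κ J m φ q q') {X : ℝ} (hX : 0 ≤ X) :
    2 * (J * Real.exp X) + 2 * Real.exp m ≤ Real.exp (X + 2 * m) := by
  have hm : (0 : ℝ) ≤ m := Nat.cast_nonneg m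
  have h1 : Real.exp X ≤ Real.exp (X + m) := Real.exp_le_exp.2 (by linarith)
  have h2 : Real.exp m ≤ Real.exp (X + m) := Real.exp_le_exp.2 (by linarith)
  have h3 := mul_exp_le (x := X + m) h.le_exp
  have h4 : (0 : ℝ) ≤ J := Nat.cast_nonneg J
  have h5 := Real.exp_pos (X + m)
  rw [show X + 2 * m = X + m + m by ring]
  nlinarith

/-- A slope that is small in absolute value makes the images of the tops of the lines too close. -/
theorem log_mul_le (P : Params a b K N κ) (h : LinePair a b K N κ J m φ q q') :
    Real.log N * J ≤ K * ((a + b) * |heightSlope a b K N κ| * J +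
      (5 * a + 5 * b + K * (Real.log N / b) + 5)) := by
  set σ := heightSlope a b K N κ with hσ
  set s := Real.log N / b with hs
  have hm : (1 : ℝ) ≤ m := by exact_mod_cast h.one_le
  have hJ : (0 : ℝ) ≤ J := Nat.cast_nonneg J
  have ha := P.ha
  have hb := P.hb
  have hK := P.hK
  have hs0 : 0 < s := P.step_pos
  have hbound : ∀ i : ℕ, i ≤ J → σ * (i * m) ≤ (σ + |σ|) * (J * m) ∧
      (σ - |σ|) * (J * m) ≤ σ * (i * m) := by
    intro i hi
    have hi' : (i : ℝ) * m ≤ J * m := by gcongr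
    have hi0 : 0 ≤ (i : ℝ) * m := by positivity
    rcases le_total 0 σ with h0 | h0
    · rw [abs_of_nonneg h0]; constructor <;> nlinarith
    · rw [abs_of_nonpos h0]; constructor <;> nlinarith
  have hup : ∀ {q q'}, LinePair a b K N κ J m φ q q' → ∀ k, 0 ≤ k → k < J →
      (φ (0, (q k).2.1, (q k).2.2)).2.2 ≤ (σ + |σ|) * (J * m) + 2 * m := fun h k _ hk => by
    have := h.left.upper k hk.le 0 (by simpa using (Real.exp_pos _).le)
    linarith [(hbound k hk.le).1]
  have hlo : ∀ {q q'}, LinePair a b K N κ J m φ q q' → ∀ k, 0 ≤ k → k < J →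
      (σ - |σ|) * (J * m) - 3 * m ≤ (φ (q k)).2.2 := fun h k _ hk => by
    have := h.left.lower k hk.le
    linarith [(hbound k hk.le).2]
  have hσ1 : 0 ≤ σ + |σ| := by linarith [neg_abs_le σ]
  have hσ2 : 0 ≤ |σ| - σ := by linarith [le_abs_self σ]
  have x1 := h.abs_fst_sub_le P 0 (Nat.zero_le J) le_rfl (hup h)
  have x2 := h.swap.abs_fst_sub_le P 0 (Nat.zero_le J) le_rfl (hup h.swap)
  rw [h.shift_zero le_rfl, h.shift_zero (Nat.zero_le _)] at x1
  rw [h.swap.shift_zero le_rfl, h.swap.shift_zero (Nat.zero_le _)] at x2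
  have y1 := h.abs_snd_sub_le P (Nat.zero_le J) le_rfl (hlo h)
  have y2 := h.swap.abs_snd_sub_le P (Nat.zero_le J) le_rfl (hlo h.swap)
  have x3 := (abs_sub_sub_le x1 x2 (h.abs_start_le P).1 (h.swap.abs_start_le P).1).trans
    (h.two_mul_exp_add_le (by positivity))
  have y3 := (abs_sub_sub_le y1 y2 (h.abs_start_le P).2 (h.swap.abs_start_le P).2).trans
    (h.two_mul_exp_add_le (by
      have : -b * ((σ - |σ|) * (J * m) - 3 * m) = b * ((|σ| - σ) * (J * m) + 3 * m) := by ring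
      rw [this]; positivity))
  have hA : 0 ≤ |σ| * (J * m) := by positivity
  have hm0 : (0 : ℝ) ≤ m := by linarith
  have hksm : 0 ≤ K * (m * s) := by positivity
  have ham : 0 ≤ a * m := by positivity
  have hbm : 0 ≤ b * m := by positivity
  have haA : 0 ≤ a * (|σ| * (J * m)) := by positivity
  have hbA : 0 ≤ b * (|σ| * (J * m)) := by positivity
  have key := h.not_near_of_bounds P le_rfl
    (t := ((a + b) * |σ| * J + (5 * a + 5 * b + K * s + 5)) * m) (by nlinarith) x3 y3
    (by nlinarith) (by nlinarith)
  have : (Real.log N * J) * m ≤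
      (K * ((a + b) * |σ| * J + (5 * a + 5 * b + K * s + 5))) * m := by linarith
  exact le_of_mul_le_mul_right this (by linarith)

end LinePair

end

/-! ### Negative slope forces height-reversing maps -/

section

variable {a b K : ℝ} {N κ : ℕ}

namespace LinePair

variable {J m : ℕ} {φ : ℝ × ℝ × ℝ → ℝ × ℝ × ℝ} {q q' : ℕ → ℝ × ℝ × ℝ}

/-- If the slope is negative then the tops of the lines are far apart. -/
theorem lt_abs_fst_sub (P : Params a b K N κ) (h : LinePair a b K N κ J m φ q q')
    (hσ : heightSlope a b K N κ < 0) {i : ℕ} (hi : i ≤ J)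
    (hi' : K * (5 * a + 5 * b + K * (Real.log N / b) + 5) < Real.log N * i) :
    Real.exp (a * (heightSlope a b K N κ * (i * m))) < |(φ (q J)).1 - (φ (q' J)).1| := by
  by_contra! hcon
  set σ := heightSlope a b K N κ
  set s := Real.log N / b with hs
  have hm : (1 : ℝ) ≤ m := by exact_mod_cast h.one_le
  have hJ : (0 : ℝ) ≤ J := Nat.cast_nonneg J
  have ha := P.ha
  have hb := P.hb
  have hK := P.hK
  have hs0 : 0 < s := P.step_pos
  have hksm : 0 ≤ K * (m * s) := by positivity
  have hup : ∀ {q q'}, LinePair a b K N κ J m φ q q' → ∀ k, i ≤ k → k < J →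
      (φ (0, (q k).2.1, (q k).2.2)).2.2 ≤ σ * (i * m) + 2 * m := fun h k hk hkJ => by
    have := h.left.upper k hkJ.le 0 (by simpa using (Real.exp_pos _).le)
    have hk' : (i : ℝ) * m ≤ k * m := by gcongr
    nlinarith
  have hlo : ∀ {q q'}, LinePair a b K N κ J m φ q q' → ∀ k, 0 ≤ k → k < i →
      σ * (i * m) - 3 * m ≤ (φ (q k)).2.2 := fun h k _ hk => by
    have := h.left.lower k (by omega)
    have hk' : (k : ℝ) * m ≤ i * m := by gcongr
    nlinarith
  have x1 := h.abs_fst_sub_le P 0 hi le_rfl (hup h)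
  have x2 := h.swap.abs_fst_sub_le P 0 hi le_rfl (hup h.swap)
  rw [h.shift_zero le_rfl, h.shift_zero hi] at x1
  rw [h.swap.shift_zero le_rfl, h.swap.shift_zero hi] at x2
  have y1 := h.abs_snd_sub_le P (Nat.zero_le i) hi (hlo h)
  have y2 := h.swap.abs_snd_sub_le P (Nat.zero_le i) hi (hlo h.swap)
  have hpos : 0 ≤ -σ * (i * m) := mul_nonneg (by linarith) (by positivity)
  have y3 := (abs_sub_sub_le y1 y2 (h.abs_start_le P).2 (h.swap.abs_start_le P).2).trans
    (h.two_mul_exp_add_le (by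
      have : -b * (σ * (i * m) - 3 * m) = b * (-σ * (i * m) + 3 * m) := by ring
      rw [this]; positivity))
  have hbm : 0 ≤ b * m := by positivity
  have ham : 0 ≤ a * m := by positivity
  set Z := a * (σ * (i * m) + 2 * m) + K * (m * s) with hZ
  have x3 : |(φ (q i)).1 - (φ (q' i)).1| ≤ Real.exp (Z + m) := by
    have e1 : Real.exp (a * (σ * (i * m))) ≤ Real.exp Z :=
      Real.exp_le_exp.2 (by rw [hZ]; nlinarith)
    have e2 := mul_exp_le (x := Z) h.le_exp
    have e3 := Real.exp_pos Z
    have e4 : J * Real.exp Z + (Real.exp Z + J * Real.exp Z) ≤ (2 * J + 4) * Real.exp Z := by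
      linarith
    have e5 := abs_sub_le (φ (q i)).1 (φ (q J)).1 (φ (q' i)).1
    have e6 := abs_sub_le (φ (q J)).1 (φ (q' J)).1 (φ (q' i)).1
    rw [abs_sub_comm (φ (q' J)).1] at e6
    linarith
  have key := h.not_near_of_bounds P hi
    (t := (5 * a + 5 * b + K * s + 5) * m) (by linarith) x3 y3 (by linarith) (by linarith)
  have : K * (5 * a + 5 * b + K * s + 5) * m < Real.log N * i * m :=
    mul_lt_mul_of_pos_right hi' (by linarith)
  linarith

/-- If the slope is negative then the horizontal direction contracted upwards does not go far
down. -/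
theorem le_base (P : Params a b K N κ) (h : LinePair a b K N κ J m φ q q')
    (hσ : heightSlope a b K N κ < 0) {i₀ i₁ : ℕ} (hi : i₁ ≤ J)
    (hfar : Real.exp (a * (heightSlope a b K N κ * (i₀ * m))) < |(φ (q J)).1 - (φ (q' J)).1|)
    (hi₁ : a * (-heightSlope a b K N κ) * i₀ + 2 * a + K * (Real.log N / b) + 2 ≤
      a * (-heightSlope a b K N κ) * i₁) {x : ℝ}
    (hx : |x| ≤ Real.exp (a * ((1 + J * m) * (Real.log N / b)))) :
    -((-heightSlope a b K N κ + K * (Real.log N / b)) * i₁ * m) ≤ (φ (x, 0, 0)).2.2 := by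
  by_contra! hcon
  set σ := heightSlope a b K N κ
  set s := Real.log N / b with hs
  have hm : (1 : ℝ) ≤ m := by exact_mod_cast h.one_le
  have hJ : (0 : ℝ) ≤ J := Nat.cast_nonneg J
  have ha := P.ha
  have hK := P.hK
  have hs0 : 0 < s := P.step_pos
  have hksm : 0 ≤ K * (m * s) := by positivity
  have ham : 0 ≤ a * m := by positivity
  have hKm : K ≤ m := by
    have := h.start_le
    nlinarith [le_max_left 1 (Real.log N / b)]
  set Z := a * (σ * (i₁ * m) + 2 * m) + K * (m * s) with hZ
  have main : ∀ {q q'}, LinePair a b K N κ J m φ q q' →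
      |(φ (q J)).1 - (φ (x, 0, 0)).1| ≤ (J + 2) * Real.exp (Z + m) := by
    intro q q' h
    have h0 := h.near_start P x
    have hgrow : ∀ k, k ≤ J → (φ (x, (q k).2.1, (q k).2.2)).2.2 ≤
        (φ (x, 0, 0)).2.2 + m + k * (K * (m * s)) := by
      intro k
      induction k with
      | zero => intro _; simpa using by linarith [(abs_le.1 h0.1).1]
      | succ k ih =>
        intro hk
        have e1 := ih (by omega)
        have e2 := (abs_le.1 (h.near_shift_succ x (by omega : k < J)).1).1
        push_cast
        linarith
    have hup : ∀ k, 0 ≤ k → k < J →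
        (φ (x, (q k).2.1, (q k).2.2)).2.2 ≤ σ * (i₁ * m) + 2 * m := by
      intro k _ hk
      rcases le_total i₁ k with hk' | hk'
      · have e1 := h.left.upper k hk.le x hx
        have e2 : (i₁ : ℝ) * m ≤ k * m := by gcongr
        nlinarith
      · have e1 := hgrow k hk.le
        have e2 : (k : ℝ) * (K * (m * s)) ≤ i₁ * (K * (m * s)) := by gcongr
        nlinarith
    have e1 := h.abs_fst_sub_le P x (Nat.zero_le J) le_rfl hup
    have e2 := h0.2.1
    have e3 : Near a b 1 (q J) (x, (q J).2.1, (q J).2.2) := by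
      refine ⟨by simp, ?_, by simpa using (Real.exp_pos _).le⟩
      rw [h.left.fst J le_rfl, h.left.height J le_rfl]
      simp only [zero_sub, abs_neg]
      exact hx.trans (Real.exp_le_exp.2 (by linarith))
    have e4 := ((h.emb 1 le_rfl _ _).1 e3).2.1
    have e5 := h.left.upper J le_rfl 0 (by simpa using (Real.exp_pos _).le)
    rw [h.shift_zero le_rfl] at e5
    have e6 : (i₁ : ℝ) * m ≤ J * m := by gcongr
    have f1 : Real.exp (a * (φ (q J)).2.2 + K * 1) ≤ Real.exp (Z + m) := by
      refine Real.exp_le_exp.2 ?_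
      have e7 : (φ (q J)).2.2 ≤ σ * (i₁ * m) + 2 * m := by nlinarith
      have := mul_le_mul_of_nonneg_left e7 ha.le
      rw [hZ]; linarith
    have f2 : Real.exp (a * (φ (x, 0, 0)).2.2 + m) ≤ Real.exp (Z + m) := by
      refine Real.exp_le_exp.2 ?_
      have e7 : (φ (x, 0, 0)).2.2 ≤ σ * (i₁ * m) + 2 * m := by
        have : 0 ≤ (i₁ : ℝ) * (K * (m * s)) := by positivity
        nlinarith
      have := mul_le_mul_of_nonneg_left e7 ha.le
      rw [hZ]; linarith
    have f3 : J * Real.exp Z ≤ J * Real.exp (Z + m) := by gcongr; linarith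
    have e8 := e1.trans f3
    have e9 := e2.trans f2
    have e10 := e4.trans f1
    rw [abs_le] at *
    constructor <;> linarith
  have e1 := main h
  have e2 := main h.swap
  have e3 := mul_exp_le (x := Z + m) h.le_exp
  have e4 : Real.exp (Z + m + m) ≤ Real.exp (a * (σ * (i₀ * m))) := by
    refine Real.exp_le_exp.2 ?_
    rw [hZ]
    nlinarith
  have e5 := abs_sub_le (φ (q J)).1 (φ (x, 0, 0)).1 (φ (q' J)).1
  rw [abs_sub_comm (φ (x, 0, 0)).1] at e5
  linarith

end LinePair

/-- Coarse embeddings that reverse the height with rate `ρ`, up to a small linear error. -/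
def Flip (a b K ρ : ℝ) : Prop :=
  ∀ δ > 0, ∀ R₀ : ℝ, ∃ R ≥ R₀, ∃ φ, CoarseEmb a b K φ ∧ φ 0 = 0 ∧
    (∀ x, |x| ≤ Real.exp (a * R) → |(φ (x, 0, 0)).2.2| ≤ δ * R) ∧
    ∃ y, 0 ≤ y ∧ y ≤ 1 ∧ |(φ (0, y, R)).2.2 + ρ * R| ≤ δ * R

/-- Coarse embeddings that reverse the height with rate `ρ` on all vertical segments, without
bringing all of their tops together. -/
def FlipAll (a b K ρ : ℝ) : Prop :=
  ∀ δ > 0, ∀ R₀ : ℝ, ∃ R ≥ R₀, ∃ φ, CoarseEmb a b K φ ∧ φ 0 = 0 ∧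
    (∀ x, |x| ≤ Real.exp (a * R) → |(φ (x, 0, 0)).2.2| ≤ δ * R) ∧
    (∀ y z, 0 ≤ y → y ≤ 1 → 0 ≤ z → z ≤ R → (φ (0, y, z)).2.2 ≤ -ρ * z + δ * R) ∧
    ∃ y y', 0 ≤ y ∧ y ≤ 1 ∧ 0 ≤ y' ∧ y' ≤ 1 ∧
      Real.exp (-δ * R) < |(φ (0, y, R)).1 - (φ (0, y', R)).1|

/-- The slope per unit of height. -/
def unitSlope (a b K : ℝ) (N κ : ℕ) : ℝ := heightSlope a b K N κ / (Real.log N / b)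

theorem unitSlope_neg_of_lt (P : Params a b K N κ)
    (h : unitSlope a b K N κ < b / (K * (a + b))) : unitSlope a b K N κ < 0 := by
  by_contra! h0
  have ha := P.ha
  have hb := P.hb
  have hK := P.hK
  have hs := P.step_pos
  have hlog := P.logN_pos
  set σ := heightSlope a b K N κ with hσ
  unfold unitSlope at h h0
  rw [← hσ] at h h0
  have hσ0 : 0 ≤ σ := by
    by_contra! hneg
    exact absurd h0 (not_le.2 (div_neg_of_neg_of_pos hneg hs))
  have h1 : K * (a + b) * σ < Real.log N := by
    rw [div_lt_div_iff₀ hs (by positivity)] at h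
    have : b * (Real.log N / b) = Real.log N := by field_simp
    nlinarith
  obtain ⟨J, hJ⟩ := exists_nat_gt (K * (5 * a + 5 * b + K * (Real.log N / b) + 5) /
    (Real.log N - K * (a + b) * σ) + 1)
  have h2 : 0 < Real.log N - K * (a + b) * σ := by linarith
  have hC : 0 ≤ K * (5 * a + 5 * b + K * (Real.log N / b) + 5) := by positivity
  have hJ1 : 1 ≤ J := by
    have : (1 : ℝ) < J := lt_of_le_of_lt (by linarith [div_nonneg hC h2.le]) hJ
    exact_mod_cast this.le
  obtain ⟨m₀, hm₀⟩ := exists_linePair P hJ1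
  obtain ⟨φ, q, q', hl⟩ := hm₀ m₀ le_rfl
  have key := hl.log_mul_le P
  rw [← hσ, abs_of_nonneg hσ0] at key
  have h3 : K * (5 * a + 5 * b + K * (Real.log N / b) + 5) / (Real.log N - K * (a + b) * σ) <
      J := by
    linarith
  rw [div_lt_iff₀ h2] at h3
  nlinarith

theorem flip_of_unitSlope_neg (P : Params a b K N κ) (h : unitSlope a b K N κ < 0) :
    Flip a b K (-unitSlope a b K N κ) ∧ (κ = 1 → FlipAll a b K (-unitSlope a b K N κ)) := by
  have ha := P.ha
  have hb := P.hb
  have hK := P.hK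
  have hs := P.step_pos
  have hlog := P.logN_pos
  set σ := heightSlope a b K N κ with hσ
  set s := Real.log N / b with hsdef
  have hρ : unitSlope a b K N κ = σ / s := rfl
  rw [hρ] at h ⊢
  have hσ0 : σ < 0 := by
    by_contra! hneg
    exact absurd h (not_lt.2 (div_nonneg hneg hs.le))
  obtain ⟨i₀, hi₀⟩ := exists_nat_gt (K * (5 * a + 5 * b + K * s + 5) / Real.log N)
  rw [div_lt_iff₀ hlog] at hi₀
  have haσ : 0 < a * -σ := mul_pos ha (by linarith)
  obtain ⟨i₁, hi₁⟩ := exists_nat_ge ((a * -σ * i₀ + 2 * a + K * s + 2) / (a * -σ))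
  rw [div_le_iff₀ haσ] at hi₁
  have common : ∀ δ > 0, ∀ R₀ : ℝ, ∃ J m : ℕ, ∃ φ q q', LinePair a b K N κ J m φ q q' ∧
      i₀ ≤ J ∧ i₁ ≤ J ∧ R₀ ≤ (1 + J * m) * s ∧ 4 * m - σ ≤ δ * ((1 + J * m) * s) ∧
      (-σ + K * s) * i₁ * m ≤ δ * ((1 + J * m) * s) ∧
      a * (-σ * (i₀ * m)) ≤ δ * ((1 + J * m) * s) := by
    intro δ hδ R₀
    obtain ⟨j, hj⟩ := exists_nat_ge ((4 - σ + (-σ + K * s) * i₁ + a * (-σ * i₀)) / (δ * s))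
    rw [div_le_iff₀ (by positivity)] at hj
    set J := j + i₀ + i₁ + 1
    obtain ⟨m₀, hm₀⟩ := exists_linePair P (J := J) (by omega)
    obtain ⟨m₁, hm₁⟩ := exists_nat_ge (R₀ / s)
    rw [div_le_iff₀ hs] at hm₁
    obtain ⟨φ, q, q', hl⟩ := hm₀ (m₀ + m₁) (by omega)
    set m := m₀ + m₁
    have hm1 : (1 : ℝ) ≤ m := by exact_mod_cast hl.one_le
    have hjJ : (j : ℝ) ≤ J := by exact_mod_cast (by omega : j ≤ J)
    have hJ1 : (1 : ℝ) ≤ J := by exact_mod_cast (by omega : 1 ≤ J)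
    have hm₁m : (m₁ : ℝ) ≤ m := by exact_mod_cast (by omega : m₁ ≤ m)
    have e1 : 0 ≤ (-σ + K * s) * i₁ := mul_nonneg (by nlinarith) (Nat.cast_nonneg _)
    have e2 : 0 ≤ a * (-σ * i₀) := by
      rw [← mul_assoc]; positivity
    have e3 : 4 - σ + (-σ + K * s) * i₁ + a * (-σ * i₀) ≤ δ * (J * s) := by
      have : j * (δ * s) ≤ J * (δ * s) := by gcongr
      linarith
    have e4 : (4 - σ + (-σ + K * s) * i₁ + a * (-σ * i₀)) * m ≤ δ * ((1 + J * m) * s) := by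
      have : 0 ≤ δ * s := by positivity
      nlinarith
    refine ⟨J, m, φ, q, q', hl, by omega, by omega, ?_, ?_, ?_, ?_⟩
    · have : (m₁ : ℝ) ≤ 1 + J * m := by nlinarith
      nlinarith
    · nlinarith
    · nlinarith
    · nlinarith
  have htop : ∀ {J m : ℕ} {φ q q'}, LinePair a b K N κ J m φ q q' →
      φ (0, (q J).2.1, (1 + J * m) * s) = φ (q J) := fun h => by
    rw [← h.left.height _ le_rfl, h.shift_zero le_rfl]
  have hmul : ∀ J m : ℝ, σ / s * ((1 + J * m) * s) = σ * (1 + J * m) := fun J m => by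
    field_simp
  have hbase : ∀ {J m : ℕ} {φ q q'}, LinePair a b K N κ J m φ q q' → i₀ ≤ J → i₁ ≤ J → ∀ {t : ℝ},
      4 * m - σ ≤ t → (-σ + K * s) * i₁ * m ≤ t → ∀ x,
      |x| ≤ Real.exp (a * ((1 + J * m) * s)) → |(φ (x, 0, 0)).2.2| ≤ t := by
    intro J m φ q q' hl hJ₀ hJ₁ t h1 h2 x hx
    have hfar := hl.lt_abs_fst_sub P hσ0 hJ₀ (by linarith)
    have hm : (0 : ℝ) ≤ m := Nat.cast_nonneg m
    refine abs_le.2 ⟨?_, ?_⟩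
    · have := hl.le_base P hσ0 hJ₁ hfar (by linarith) hx
      linarith
    · linarith [hl.base_le x hx]
  constructor
  · intro δ hδ R₀
    obtain ⟨J, m, φ, q, q', hl, hJ₀, hJ₁, hR, h1, h2, -⟩ := common δ hδ R₀
    have hm : (0 : ℝ) ≤ m := Nat.cast_nonneg m
    refine ⟨_, hR, φ, hl.emb, hl.zero, hbase hl hJ₀ hJ₁ h1 h2, (q J).2.1,
      hl.left.snd_nonneg J le_rfl, hl.left.snd_le J le_rfl, ?_⟩
    · rw [htop hl, neg_mul, hmul]
      have l := hl.left.lower J le_rfl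
      have u := hl.left.upper J le_rfl 0 (by simpa using (Real.exp_pos _).le)
      rw [hl.shift_zero le_rfl] at u
      rw [abs_le]
      constructor <;> linarith
  · intro hκ δ hδ R₀
    obtain ⟨J, m, φ, q, q', hl, hJ₀, hJ₁, hR, h1, h3, h2⟩ := common δ hδ R₀
    have hfar := hl.lt_abs_fst_sub P hσ0 hJ₀ (by linarith)
    refine ⟨_, hR, φ, hl.emb, hl.zero, hbase hl hJ₀ hJ₁ h1 h3, fun y z hy0 hy1 hz0 hz1 => ?_,
      (q J).2.1, (q' J).2.1, hl.left.snd_nonneg J le_rfl, hl.left.snd_le J le_rfl,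
      hl.right.snd_nonneg J le_rfl,
      hl.right.snd_le J le_rfl, ?_⟩
    · have e1 := hl.all_le hκ y z hy0 hy1 hz0 hz1
      rw [← hσ, ← hsdef] at e1
      have e2 : σ * (z / s) = -(-(σ / s)) * z := by ring
      linarith
    · rw [htop hl, htop hl.swap]
      refine lt_of_le_of_lt (Real.exp_le_exp.2 ?_) hfar
      linarith

end

/-! ### The slope is positive when `a ≠ b` -/

section

variable {a b K : ℝ} {N κ : ℕ}

/-- Below every point, on one of the vertical lines going down, the height increases at most
with rate `ρ`. -/
def DownLow (a b K ρ : ℝ) : Prop :=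
  ∀ ε > 0, ∃ c : ℝ, ∀ φ, CoarseEmb a b K φ → ∀ p : ℝ × ℝ × ℝ, ∀ R, 0 ≤ R →
    ∃ u, 0 ≤ u ∧ u ≤ Real.exp (a * p.2.2) ∧
      (φ (p.1 + u, p.2.1, p.2.2 - R)).2.2 ≤ (φ p).2.2 + (ρ + ε) * R + c

theorem downLow_neg_unitSlope (P : Params b a K N κ) :
    DownLow a b K (-unitSlope b a K N κ) := by
  intro ε hε
  have hs := P.step_pos
  have hK := P.hK
  obtain ⟨c, hc0, hc⟩ := exists_rate P (mul_pos hε hs)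
  have hσ : heightSlope b a K N κ = unitSlope b a K N κ * (Real.log N / a) := by
    exact (div_mul_cancel₀ _ hs.ne').symm
  rw [hσ] at hc
  set τ := unitSlope b a K N κ
  set s := Real.log N / a
  refine ⟨c + K * max 1 s + |τ - ε| * s, fun φ hφ p R hR => ?_⟩
  have e1 : (⌊R / s⌋₊ : ℝ) * s ≤ R := by
    rw [← le_div_iff₀ hs]; exact Nat.floor_le (by positivity)
  have e2 : R ≤ (⌊R / s⌋₊ + 1) * s := by
    rw [← div_le_iff₀ hs]; exact (Nat.lt_floor_add_one _).le
  obtain ⟨q, hq, hq'⟩ := (hc ⌊R / s⌋₊ _ hφ.mirror (mirror p)).exists_mem P.hb P.hκ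
  have hq1 : q.1 = p.2.1 := hq.1
  have hq2 : q.2.2 = -p.2.2 + ⌊R / s⌋₊ * s := hq.2.1
  have hq3 : p.1 ≤ q.2.1 := hq.2.2.1
  have hq4 : q.2.1 ≤ p.1 + Real.exp (-a * -p.2.2) := hq.le
  simp only [mem_ofPred_eq, mirror_mirror] at hq'
  have hq5 : -(φ p).2.2 + ((τ * s - ε * s) * ⌊R / s⌋₊ - c) ≤ -(φ (mirror q)).2.2 := hq'
  refine ⟨q.2.1 - p.1, by linarith, by rw [neg_mul_neg] at hq4; linarith, ?_⟩
  have hn : Near a b (max 1 s) (p.1 + (q.2.1 - p.1), p.2.1, p.2.2 - R) (mirror q) := by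
    refine ⟨?_, ?_, ?_⟩
    · refine le_trans ?_ (le_max_right _ _)
      simp only [mirror, hq2]
      rw [abs_le]; constructor <;> linarith
    · simpa [mirror] using (Real.exp_pos _).le
    · simpa [mirror, hq1] using (Real.exp_pos _).le
  have h1 := (abs_le.1 (hφ.abs_height_sub_le (le_max_left _ _) hn)).2
  have h2 : -((τ - ε) * (⌊R / s⌋₊ * s)) ≤ -(τ - ε) * R + |τ - ε| * s := by
    have : |(τ - ε) * (R - ⌊R / s⌋₊ * s)| ≤ |τ - ε| * s := by
      rw [abs_mul]
      refine mul_le_mul_of_nonneg_left ?_ (abs_nonneg _)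
      rw [abs_le]; constructor <;> linarith
    linarith [(abs_le.1 this).2]
  linarith

theorem near_vertical {x y z z' ℓ : ℝ} (h : |z - z'| ≤ ℓ) : Near a b ℓ (x, y, z) (x, y, z') :=
  ⟨h, by simpa using (Real.exp_pos _).le, by simpa using (Real.exp_pos _).le⟩

theorem near_snd {x y y' z ℓ : ℝ} (hl : 0 ≤ ℓ) (h : |y - y'| ≤ Real.exp (-b * z + ℓ)) :
    Near a b ℓ (x, y, z) (x, y', z) :=
  ⟨by simpa using hl, by simpa using (Real.exp_pos _).le, h⟩

theorem near_snd_base {x y y' : ℝ} (h : |y - y'| ≤ 1) : Near a b 1 (x, y, 0) (x, y', 0) :=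
  near_snd zero_le_one (h.trans (by simp))

theorem Flip.le_of_downLow {ρ ρ' : ℝ} (h : Flip a b K ρ) (h' : DownLow a b K ρ') : ρ ≤ ρ' := by
  by_contra! hlt
  obtain ⟨c, hc⟩ := h' ((ρ - ρ') / 4) (by linarith)
  obtain ⟨R, hR, φ, hφ, -, hbase, y, hy0, hy1, hy⟩ := h ((ρ - ρ') / 8) (by linarith)
    (max 0 ((c + K + 1) * 2 / (ρ - ρ')))
  have hR0 : 0 ≤ R := (le_max_left _ _).trans hR
  have hR1 := (le_max_right _ _).trans hR
  rw [div_le_iff₀ (by linarith)] at hR1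
  obtain ⟨u, hu0, hu1, hu⟩ := hc φ hφ (0, y, R) R hR0
  simp only [zero_add, sub_self] at hu hu1
  have e1 := (abs_le.1 (hφ.abs_height_sub_le le_rfl (near_snd_base (a := a) (b := b) (x := u)
    (y := y) (y' := 0) (by simpa [abs_of_nonneg hy0] using hy1)))).1
  have e2 := (abs_le.1 (hbase u (by rwa [abs_of_nonneg hu0]))).1
  have e3 := (abs_le.1 hy).2
  linarith

theorem natCast_le_of_separated {n : ℕ} {f : ℕ → ℝ} {X g : ℝ} (hg : 0 < g)
    (hn : 0 < n) (hX : ∀ k < n, |f k| ≤ X) (hsep : ∀ k < n, ∀ l < n, k ≠ l → g < |f k - f l|) :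
    (n : ℝ) ≤ 2 * X / g + 1 := by
  have hX0 : 0 ≤ X := (abs_nonneg _).trans (hX 0 hn)
  have hcard : (Finset.range n).card ≤ (Finset.range (⌊2 * X / g⌋₊ + 1)).card := by
    refine Finset.card_le_card_of_injOn (fun k => ⌊(f k + X) / g⌋₊) (fun k hk => ?_)
      fun k hk l hl hkl => ?_
    · have := abs_le.1 (hX k (by simpa using hk))
      simp only [Finset.coe_range, mem_Iio]
      refine Nat.lt_succ_of_le (Nat.floor_le_floor ?_)
      gcongr
      linarith
    · by_contra hne
      have hk' : k < n := by simpa using hk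
      have hl' : l < n := by simpa using hl
      have e1 := hsep k hk' l hl' hne
      have pos : ∀ i < n, 0 ≤ (f i + X) / g := fun i hi => by
        have := abs_le.1 (hX i hi)
        exact div_nonneg (by linarith) hg.le
      have e2 := Nat.floor_le (pos k hk')
      have e3 := Nat.lt_floor_add_one ((f k + X) / g)
      have e4 := Nat.floor_le (pos l hl')
      have e5 := Nat.lt_floor_add_one ((f l + X) / g)
      simp only at hkl
      rw [hkl] at e2 e3
      have e6 : |(f k + X) / g - (f l + X) / g| < 1 := by
        rw [abs_lt]; constructor <;> linarith
      rw [← sub_div, add_sub_add_right_eq_sub, abs_div, abs_of_pos hg, div_lt_one hg] at e6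
      linarith
  simp only [Finset.card_range] at hcard
  have : (n : ℝ) ≤ ⌊2 * X / g⌋₊ + 1 := by exact_mod_cast hcard
  linarith [Nat.floor_le (by positivity : 0 ≤ 2 * X / g)]

theorem FlipAll.mul_le (ha : 0 < a) (hb : 0 < b) {ρ : ℝ} (h : FlipAll a b K ρ) :
    a * ρ ≤ b := by
  by_contra! hlt
  set d := a * ρ - b with hd
  have hd0 : 0 < d := by linarith
  obtain ⟨R, hR, φ, hφ, -, -, hall, y, y', hy0, hy1, hy0', hy1', hy⟩ :=
    h (d / (2 * (a + 1))) (by positivity) (max 0 ((K + 2) * 2 / d))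
  set δ := d / (2 * (a + 1)) with hδ
  have hδd : δ * (2 * (a + 1)) = d := by rw [hδ]; field_simp
  have hR0 : 0 ≤ R := (le_max_left _ _).trans hR
  have hR1 := (le_max_right _ _).trans hR
  rw [div_le_iff₀ hd0] at hR1
  have hE1 : 1 ≤ Real.exp (b * R) := Real.one_le_exp (by positivity)
  set M := ⌈Real.exp (b * R)⌉₊ with hM
  have hM1 : Real.exp (b * R) ≤ M := Nat.le_ceil _
  have hM2 : (M : ℝ) < Real.exp (b * R) + 1 := Nat.ceil_lt_add_one (by linarith)
  have hM0 : (0 : ℝ) < M := by linarith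
  have key := abs_fst_sub_le_of_chain (b := b) ha.le (i := 0) (j := M) (L := K * 1)
    (hi := -ρ * R + δ * R)
    (w := fun k => φ (0, y + (y' - y) * (k / M), R)) (Nat.zero_le _) fun k _ hk => by
      refine ⟨(hφ 1 le_rfl _ _).1 (near_snd zero_le_one ?_), ?_⟩
      · have e1 : y + (y' - y) * (k / M) - (y + (y' - y) * ((k + 1 : ℕ) / M)) = (y - y') / M := by
          push_cast; field_simp; ring
        rw [e1, abs_div, abs_of_pos hM0, div_le_iff₀ hM0]
        have e2 : |y - y'| ≤ 1 := by rw [abs_le]; constructor <;> linarith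
        have e3 : 1 ≤ Real.exp (-b * R + 1) * Real.exp (b * R) := by
          rw [← Real.exp_add]
          exact Real.one_le_exp (by linarith)
        nlinarith [Real.exp_pos (-b * R + 1)]
      · have hk' : (k : ℝ) ≤ M := by exact_mod_cast hk.le
        have t0 : 0 ≤ (k : ℝ) / M := by positivity
        have t1 : (k : ℝ) / M ≤ 1 := by rwa [div_le_one hM0]
        exact hall _ _ (by nlinarith) (by nlinarith) hR0 le_rfl
  simp only [Nat.cast_zero, zero_div, mul_zero, add_zero, sub_zero, div_self hM0.ne', mul_one,
    add_sub_cancel] at key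
  have e1 : (2 : ℝ) ≤ Real.exp 1 := by linarith [Real.add_one_le_exp (1 : ℝ)]
  have e2 : M * Real.exp (a * (-ρ * R + δ * R) + K) ≤
      Real.exp (b * R + 1 + (a * (-ρ * R + δ * R) + K)) := by
    rw [Real.exp_add (b * R + 1), Real.exp_add (b * R) 1]
    gcongr
    nlinarith
  have e3 := hy.trans_le (key.trans e2)
  rw [Real.exp_lt_exp] at e3
  have e4 : a * δ * R + δ * R = d * R / 2 := by rw [← hδd]; ring
  nlinarith

set_option maxHeartbeats 800000 in
theorem FlipAll.le_mul (ha : 0 < a) (hb : 0 < b) (hK : 1 ≤ K) {ρ : ℝ} (hρ : 0 < ρ)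
    (h : FlipAll a b K ρ) (h' : DownLow a b K ρ) : b ≤ a * ρ := by
  by_contra! hlt
  set d := b - a * ρ with hd
  have hd0 : 0 < d := by linarith
  set C := 6 + 3 * a + 4 * b with hC
  set δ := d / (2 * (K * C + a + 3)) with hδ
  have hδ0 : 0 < δ := by positivity
  have hδd : δ * (2 * (K * C + a + 3)) = d := div_mul_cancel₀ _ (by positivity)
  obtain ⟨c, hc⟩ := h' δ hδ0
  obtain ⟨R, hR, φ, hφ, hφ0, hbase, hall, -⟩ :=
    h δ hδ0 (max 1 (max ((K + |c| + 2) / δ) (max (4 / δ ^ 2) (5 / d))))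
  simp only [ge_iff_le, max_le_iff] at hR
  obtain ⟨hR1, hR2, hR3, hR4⟩ := hR
  rw [div_le_iff₀ (by positivity)] at hR2 hR3 hR4
  have hR0 : 0 ≤ R := by linarith
  have hcabs := le_abs_self c
  have hcabs0 := abs_nonneg c
  have hexp : 2 * R + 3 ≤ Real.exp (δ * R) := by
    have := Real.quadratic_le_exp_of_nonneg (x := δ * R) (by positivity)
    nlinarith
  have hlow : ∀ y z, 0 ≤ y → y ≤ 1 → 0 ≤ z → z ≤ R →
      -ρ * z - 3 * (δ * R) ≤ (φ (0, y, z)).2.2 := fun y z hy0 hy1 hz0 hz1 => by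
    obtain ⟨u, hu0, hu1, hu⟩ := hc φ hφ (0, y, z) z hz0
    simp only [zero_add, sub_self] at hu hu1
    have e1 := (abs_le.1 (hφ.abs_height_sub_le le_rfl (near_snd_base (a := a) (b := b) (x := u)
      (y := y) (y' := 0) (by simpa [abs_of_nonneg hy0] using hy1)))).1
    have e2 := (abs_le.1 (hbase u (by
      rw [abs_of_nonneg hu0]; exact hu1.trans (Real.exp_le_exp.2 (by gcongr))))).1
    have e3 : δ * z ≤ δ * R := by gcongr
    linarith
  set M := ⌈R⌉₊ with hM
  have hM1 : R ≤ M := Nat.le_ceil _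
  have hM2 : (M : ℝ) < R + 1 := Nat.ceil_lt_add_one hR0
  have hM0 : (0 : ℝ) < M := by linarith
  have hstep : ∀ y, ∀ k < M, Near a b (K * 1) (φ (0, y, R * (k / M)))
      (φ (0, y, R * ((k + 1 : ℕ) / M))) := fun y k hk => by
    refine (hφ 1 le_rfl _ _).1 (near_vertical ?_)
    have e1 : R * (k / M) - R * ((k + 1 : ℕ) / M) = -(R / M) := by
      push_cast; field_simp; ring
    rw [e1, abs_neg, abs_of_nonneg (by positivity), div_le_one hM0]
    exact hM1
  have hz : ∀ k ≤ M, 0 ≤ R * ((k : ℝ) / M) ∧ R * ((k : ℝ) / M) ≤ R := fun k hk => by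
    have hk' : (k : ℝ) ≤ M := by exact_mod_cast hk
    have t1 : (k : ℝ) / M ≤ 1 := by rwa [div_le_one hM0]
    exact ⟨by positivity, by nlinarith⟩
  have hnear0 : ∀ y y', 0 ≤ y → y ≤ 1 → 0 ≤ y' → y' ≤ 1 →
      Near a b (K * 1) (φ (0, y, 0)) (φ (0, y', 0)) := fun y y' h0 h1 h0' h1' =>
    (hφ 1 le_rfl _ _).1 (near_snd_base (by rw [abs_le]; constructor <;> linarith))
  have hx : ∀ y, 0 ≤ y → y ≤ 1 → |(φ (0, y, R)).1| ≤ Real.exp ((a + 2) * (δ * R)) :=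
    fun y hy0 hy1 => by
    have e1 := abs_fst_sub_le_of_chain (b := b) ha.le (i := 0) (j := M) (L := K * 1)
      (hi := δ * R) (w := fun k => φ (0, y, R * (k / M))) (Nat.zero_le _) fun k _ hk => by
        refine ⟨hstep y k hk, ?_⟩
        have e2 := hz k hk.le
        refine (hall y _ hy0 hy1 e2.1 e2.2).trans ?_
        nlinarith
    simp only [Nat.cast_zero, zero_div, mul_zero, sub_zero, div_self hM0.ne', mul_one] at e1
    have e2 := (hnear0 0 y le_rfl zero_le_one hy0 hy1).2.1
    have e3 : φ (0, 0, 0) = 0 := hφ0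
    simp only [e3, Prod.fst_zero, Prod.snd_zero, mul_zero, zero_add, mul_one, zero_sub,
      abs_neg] at e2
    have e4 : Real.exp K ≤ Real.exp (a * (δ * R) + K) := Real.exp_le_exp.2 (by nlinarith)
    have e5 := (mul_exp_le (x := a * (δ * R) + K) (c := M + 1) (y := δ * R) (by linarith)).trans
      (Real.exp_le_exp.2 (by linarith : _ ≤ (a + 2) * (δ * R)))
    rw [abs_le] at *
    constructor <;> linarith [e1.1, e1.2, e2.1, e2.2]
  have hy : ∀ y, 0 ≤ y → y ≤ 1 → |(φ (0, y, 0)).2.1 - (φ (0, y, R)).2.1| ≤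
      M * Real.exp (b * ρ * R + 3 * b * (δ * R) + K) := fun y hy0 hy1 => by
    have e1 := abs_snd_sub_le_of_chain (a := a) hb.le (i := 0) (j := M) (L := K * 1)
      (lo := -ρ * R - 3 * (δ * R)) (w := fun k => φ (0, y, R * (k / M))) (Nat.zero_le _)
      fun k _ hk => by
        refine ⟨hstep y k hk, ?_⟩
        have e2 := hz k hk.le
        refine le_trans ?_ (hlow y _ hy0 hy1 e2.1 e2.2)
        nlinarith
    simp only [Nat.cast_zero, zero_div, mul_zero, sub_zero, div_self hM0.ne', mul_one] at e1
    convert e1 using 3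
    ring
  set η := Real.exp (-b * R + (K * C + 1) * (δ * R)) with hη
  have hη0 : 0 < η := Real.exp_pos _
  have hk1 : ∀ k < ⌊1 / η⌋₊ + 1, (k : ℝ) * η ≤ 1 := fun k hk => by
    rw [← le_div_iff₀ hη0]
    exact (Nat.le_floor_iff (by positivity)).1 (Nat.lt_succ_iff.1 hk)
  have hk0 : ∀ k : ℕ, 0 ≤ (k : ℝ) * η := fun k => by positivity
  have hCδ : 1 ≤ C * (δ * R) := by nlinarith
  have key := natCast_le_of_separated (n := ⌊1 / η⌋₊ + 1) (f := fun k => (φ (0, k * η, R)).1)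
    (X := Real.exp ((a + 2) * (δ * R))) (g := Real.exp (-(a * ρ * R))) (Real.exp_pos _)
    (Nat.succ_pos _) (fun k hk => hx _ (hk0 k) (hk1 k hk)) fun k hk l hl hkl => by
      by_contra! hle
      have e1 := hnear0 _ _ (hk0 k) (hk1 k hk) (hk0 l) (hk1 l hl)
      have e2 := hy _ (hk0 k) (hk1 k hk)
      have e3 := hy _ (hk0 l) (hk1 l hl)
      have e4 := hlow _ R (hk0 k) (hk1 k hk) hR0 le_rfl
      have e5 := hlow _ R (hk0 l) (hk1 l hl) hR0 le_rfl
      have e6 := hall _ R (hk0 k) (hk1 k hk) hR0 le_rfl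
      have e7 := hall _ R (hk0 l) (hk1 l hl) hR0 le_rfl
      have e8 := hlow _ 0 (hk0 k) (hk1 k hk) le_rfl hR0
      have e9 : Real.exp (-b * (φ (0, k * η, 0)).2.2 + K * 1) ≤
          Real.exp (b * ρ * R + 3 * b * (δ * R) + K) := Real.exp_le_exp.2 (by
        have : 0 ≤ b * ρ * R := by positivity
        nlinarith)
      have f1 := mul_le_mul_of_nonneg_left e4 ha.le
      have f2 := mul_le_mul_of_nonneg_left e6 hb.le
      have f3 : 0 ≤ δ * R := by positivity
      have f4 : 0 ≤ a * (δ * R) := by positivity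
      have f5 : 0 ≤ b * (δ * R) := by positivity
      have f6 : C * (δ * R) = 6 * (δ * R) + 3 * (a * (δ * R)) + 4 * (b * (δ * R)) := by
        rw [hC]; ring
      have e10 := (mul_exp_le (x := b * ρ * R + 3 * b * (δ * R) + K) (c := 2 * M + 1)
        (y := δ * R) (by linarith)).trans (Real.exp_le_exp.2 (by linarith :
          _ ≤ -b * (φ (0, k * η, R)).2.2 + C * (δ * R)))
      have hn : Near a b (C * (δ * R)) (φ (0, k * η, R)) (φ (0, l * η, R)) := by
        refine ⟨?_, hle.trans (Real.exp_le_exp.2 ?_), ?_⟩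
        · rw [abs_le]; constructor <;> linarith
        · linarith
        · have e11 := e1.2.2
          rw [abs_le] at *
          constructor <;> linarith [e11.1, e11.2, e2.1, e2.2, e3.1, e3.2]
      have e11 := ((hφ _ hCδ _ _).2 hn).2.2
      simp only at e11
      have e12 : Real.exp (-b * R + K * (C * (δ * R))) < η := Real.exp_lt_exp.2 (by nlinarith)
      have e13 : 1 ≤ |(k : ℝ) - l| := by
        have : (1 : ℤ) ≤ |(k : ℤ) - l| := Int.one_le_abs (sub_ne_zero.2 (by exact_mod_cast hkl))
        exact_mod_cast this
      rw [← sub_mul, abs_mul, abs_of_pos hη0] at e11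
      nlinarith
  have k1 : Real.exp (b * R - (K * C + 1) * (δ * R)) ≤ (⌊1 / η⌋₊ + 1 : ℕ) := by
    push_cast
    refine le_trans (le_of_eq ?_) (Nat.lt_floor_add_one (1 / η)).le
    rw [hη, one_div, ← Real.exp_neg]; ring_nf
  have k2 : 2 * Real.exp ((a + 2) * (δ * R)) / Real.exp (-(a * ρ * R)) + 1 ≤
      Real.exp ((a + 2) * (δ * R) + a * ρ * R + 2) := by
    rw [mul_div_assoc, ← Real.exp_sub, sub_neg_eq_add, Real.exp_add _ 2]
    have := Real.one_le_exp (by positivity : 0 ≤ (a + 2) * (δ * R) + a * ρ * R)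
    have := Real.add_one_le_exp (2 : ℝ)
    nlinarith
  have k3 := Real.exp_le_exp.1 (k1.trans (key.trans k2))
  have k4 : (K * C + a + 3) * (δ * R) = d * R / 2 := by rw [← hδd]; ring
  nlinarith

/-- Opposite slopes cannot both be negative when `a ≠ b`. -/
theorem unitSlope_one_nonneg (P : Params a b K N 1) (hab : a ≠ b) : 0 ≤ unitSlope a b K N 1 := by
  by_contra! h
  have P' : Params b a K N 1 := ⟨P.hb, P.ha, P.hK, P.hκ, P.hκN⟩
  obtain ⟨f1, f2⟩ := flip_of_unitSlope_neg P h
  have l1 := f1.le_of_downLow (downLow_neg_unitSlope P')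
  obtain ⟨g1, g2⟩ := flip_of_unitSlope_neg P' (by linarith)
  have l2 := g1.le_of_downLow (downLow_neg_unitSlope P)
  have l3 := le_antisymm l1 l2
  have d1 := downLow_neg_unitSlope P'
  rw [← l3] at g2 d1
  have h1 := (f2 rfl).mul_le P.ha P.hb
  have h2 := (f2 rfl).le_mul P.ha P.hb P.hK (by linarith) d1
  have h3 := (g2 rfl).mul_le P.hb P.ha
  have d2 := downLow_neg_unitSlope P
  have h4 := (g2 rfl).le_mul P.hb P.ha P.hK (by linarith) d2
  have h5 : (a - b) * (1 - unitSlope a b K N 1) = 0 := by linarith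
  rcases mul_eq_zero.1 h5 with h5 | h5
  · exact hab (by linarith)
  · linarith

/-- Uniform lower bound on the slope: coarse embeddings go up along most upward branches. -/
theorem le_unitSlope (P : Params a b K N κ) (hab : a ≠ b) :
    b / (K * (a + b)) ≤ unitSlope a b K N κ := by
  by_contra! h
  have h0 := unitSlope_neg_of_lt P h
  have P' : Params b a K N 1 := ⟨P.hb, P.ha, P.hK, le_rfl, by have := P.hκ; have := P.hκN; omega⟩
  have h1 := (flip_of_unitSlope_neg P h0).1.le_of_downLow (downLow_neg_unitSlope P')
  have h2 := unitSlope_one_nonneg P' hab.symm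
  linarith

end

/-! ### Comparison of `d_{a,b}` with `Near` -/

section

variable {a b : ℝ}

/-- The speed of a path in `G_{a,b}`. -/
def abSpeed (a b : ℝ) (γ : ℝ → ℝ × ℝ × ℝ) (t : ℝ) : ℝ :=
    Real.sqrt (Real.exp (-2 * a * (γ t).2.2) * (deriv (fun s => (γ s).1) t) ^ 2 +
      Real.exp (2 * b * (γ t).2.2) * (deriv (fun s => (γ s).2.1) t) ^ 2 +
      (deriv (fun s => (γ s).2.2) t) ^ 2)

theorem abLength_eq (γ : ℝ → ℝ × ℝ × ℝ) : abLength a b γ = ∫ t in (0:ℝ)..1, abSpeed a b γ t := rfl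

theorem abSpeed_nonneg (γ : ℝ → ℝ × ℝ × ℝ) (t : ℝ) : 0 ≤ abSpeed a b γ t := Real.sqrt_nonneg _

theorem abs_deriv_fst_le (γ : ℝ → ℝ × ℝ × ℝ) (t : ℝ) :
    |deriv (fun s => (γ s).1) t| ≤ Real.exp (a * (γ t).2.2) * abSpeed a b γ t := by
  rw [← div_le_iff₀' (Real.exp_pos _)]
  refine Real.le_sqrt_of_sq_le ?_
  rw [div_pow, sq_abs, ← Real.exp_nat_mul, div_eq_mul_inv, ← Real.exp_neg, mul_comm]
  have e : -2 * a * (γ t).2.2 = -(((2 : ℕ) : ℝ) * (a * (γ t).2.2)) := by push_cast; ring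
  rw [e]
  have := Real.exp_pos (2 * b * (γ t).2.2)
  nlinarith [sq_nonneg (deriv (fun s => (γ s).2.1) t), sq_nonneg (deriv (fun s => (γ s).2.2) t),
    mul_nonneg this.le (sq_nonneg (deriv (fun s => (γ s).2.1) t))]

theorem abs_deriv_snd_le (γ : ℝ → ℝ × ℝ × ℝ) (t : ℝ) :
    |deriv (fun s => (γ s).2.1) t| ≤ Real.exp (-b * (γ t).2.2) * abSpeed a b γ t := by
  rw [← div_le_iff₀' (Real.exp_pos _)]
  refine Real.le_sqrt_of_sq_le ?_
  rw [div_pow, sq_abs, ← Real.exp_nat_mul, div_eq_mul_inv, ← Real.exp_neg, mul_comm]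
  have e : 2 * b * (γ t).2.2 = -(((2 : ℕ) : ℝ) * (-b * (γ t).2.2)) := by push_cast; ring
  rw [e]
  have := Real.exp_pos (-2 * a * (γ t).2.2)
  nlinarith [sq_nonneg (deriv (fun s => (γ s).1) t), sq_nonneg (deriv (fun s => (γ s).2.2) t),
    mul_nonneg this.le (sq_nonneg (deriv (fun s => (γ s).1) t))]

theorem abs_deriv_height_le (γ : ℝ → ℝ × ℝ × ℝ) (t : ℝ) :
    |deriv (fun s => (γ s).2.2) t| ≤ abSpeed a b γ t := by
  refine Real.le_sqrt_of_sq_le ?_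
  rw [sq_abs]
  have := Real.exp_pos (-2 * a * (γ t).2.2)
  have := Real.exp_pos (2 * b * (γ t).2.2)
  exact le_add_of_nonneg_left (by positivity)

theorem deriv_congr_derivWithin {f : ℝ → ℝ} {u v t : ℝ} (ht : t ∈ Ioo u v) :
    deriv f t = derivWithin f (Icc u v) t :=
  (derivWithin_of_mem_nhds (Icc_mem_nhds ht.1 ht.2)).symm

theorem intervalIntegrable_abSpeed {γ : ℝ → ℝ × ℝ × ℝ} {u v : ℝ} (huv : u ≤ v)
    (h : ContDiffOn ℝ 1 γ (Icc u v)) :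
    IntervalIntegrable (abSpeed a b γ) MeasureTheory.volume u v := by
  rcases huv.eq_or_lt with rfl | huv
  · simp
  have hu := uniqueDiffOn_Icc huv
  have h1 := (contDiff_fst.comp_contDiffOn h).continuousOn_derivWithin hu le_rfl
  have h2 := ((contDiff_fst.comp contDiff_snd).comp_contDiffOn h).continuousOn_derivWithin hu le_rfl
  have h3 := ((contDiff_snd.comp contDiff_snd).comp_contDiffOn h).continuousOn_derivWithin hu le_rfl
  have h0 := h.continuousOn
  have hc : ContinuousOn (fun t => Real.sqrt (Real.exp (-2 * a * (γ t).2.2) *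
      (derivWithin (fun s => (γ s).1) (Icc u v) t) ^ 2 +
      Real.exp (2 * b * (γ t).2.2) * (derivWithin (fun s => (γ s).2.1) (Icc u v) t) ^ 2 +
      (derivWithin (fun s => (γ s).2.2) (Icc u v) t) ^ 2)) (uIcc u v) := by
    rw [uIcc_of_le huv.le]
    have h4 : ContinuousOn (fun t => (γ t).2.2) (Icc u v) := by fun_prop
    have h1' : ContinuousOn (fun t => derivWithin (fun s => (γ s).1) (Icc u v) t) (Icc u v) := h1
    have h2' : ContinuousOn (fun t => derivWithin (fun s => (γ s).2.1) (Icc u v) t) (Icc u v) := h2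
    have h3' : ContinuousOn (fun t => derivWithin (fun s => (γ s).2.2) (Icc u v) t) (Icc u v) := h3
    fun_prop
  refine hc.intervalIntegrable.congr_uIoo fun t ht => ?_
  rw [uIoo_of_le huv.le] at ht
  simp only [abSpeed, deriv_congr_derivWithin ht]

theorem abs_sub_le_integral {f s : ℝ → ℝ} {u v C : ℝ} (huv : u ≤ v)
    (hf : ContDiffOn ℝ 1 f (Icc u v)) (hs : IntervalIntegrable s MeasureTheory.volume u v)
    (hd : ∀ t ∈ Ioo u v, |deriv f t| ≤ C * s t) : |f v - f u| ≤ C * ∫ t in u..v, s t := by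
  rw [← intervalIntegral.integral_deriv_of_contDiffOn_Icc hf huv,
    ← intervalIntegral.integral_const_mul]
  have hs' := hs.const_mul C
  have hd' : ∀ᵐ t, t ∈ Ioc u v → ‖deriv f t‖ ≤ C * s t := by
    filter_upwards [MeasureTheory.Measure.ae_ne MeasureTheory.volume v] with t ht1 ht2
    exact hd t ⟨ht2.1, lt_of_le_of_ne ht2.2 ht1⟩
  exact intervalIntegral.norm_integral_le_of_norm_le huv hd' hs'

theorem abs_sub_le_integral_of_pieces {f s : ℝ → ℝ} {n : ℕ} {τ : ℕ → ℝ} {C : ℝ} (h0 : τ 0 = 0)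
    (hn : τ n = 1) (hτ : ∀ i < n, τ i ≤ τ (i + 1))
    (hf : ∀ i < n, ContDiffOn ℝ 1 f (Icc (τ i) (τ (i + 1))))
    (hs : IntervalIntegrable s MeasureTheory.volume 0 1) (hs0 : ∀ t, 0 ≤ s t) (hC : 0 ≤ C)
    (hd : ∀ t ∈ Icc (0 : ℝ) 1, |deriv f t| ≤ C * s t) {t : ℝ} (ht : t ∈ Icc (0 : ℝ) 1) :
    |f t - f 0| ≤ C * ∫ t in (0 : ℝ)..1, s t := by
  have hmono : ∀ i j, i ≤ j → j ≤ n → τ i ≤ τ j := fun i j hij => by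
    induction j, hij using Nat.le_induction with
    | base => exact fun _ => le_rfl
    | succ j _ ih => exact fun h => (ih (by omega)).trans (hτ j (by omega))
  have hsub : ∀ u v, 0 ≤ u → u ≤ v → v ≤ 1 → IntervalIntegrable s MeasureTheory.volume u v :=
    fun u v hu huv hv => hs.mono_set (by
      rw [uIcc_of_le huv, uIcc_of_le zero_le_one]; exact Icc_subset_Icc hu hv)
  have key : ∀ i ≤ n, ∀ t ∈ Icc 0 (τ i), |f t - f 0| ≤ C * ∫ t in (0 : ℝ)..t, s t := fun i => by
    induction i with
    | zero =>
      intro _ t ht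
      rw [h0] at ht
      obtain rfl : t = 0 := le_antisymm ht.2 ht.1
      simp
    | succ i ih =>
      intro hi t ht
      have hi0 : 0 ≤ τ i := h0 ▸ hmono 0 i (Nat.zero_le _) (by omega)
      have ht1 : t ≤ 1 := ht.2.trans (hn ▸ hmono _ n hi le_rfl)
      rcases le_total t (τ i) with hle | hle
      · exact ih (by omega) t ⟨ht.1, hle⟩
      have e1 := ih (by omega) (τ i) ⟨hi0, le_rfl⟩
      have e2 := abs_sub_le_integral hle ((hf i hi).mono (Icc_subset_Icc le_rfl ht.2))
        (hsub _ _ hi0 hle ht1) fun x hx => hd x ⟨hi0.trans hx.1.le, hx.2.le.trans ht1⟩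
      rw [← intervalIntegral.integral_add_adjacent_intervals (hsub 0 (τ i) le_rfl hi0
        (hle.trans ht1)) (hsub _ _ hi0 hle ht1), mul_add]
      linarith [abs_sub_le (f t) (f (τ i)) (f 0)]
  refine (key n le_rfl t (by rwa [hn])).trans (mul_le_mul_of_nonneg_left ?_ hC)
  exact intervalIntegral.integral_mono_interval le_rfl ht.1 ht.2 (.of_forall hs0) hs

theorem near_of_path (ha : 0 < a) (hb : 0 < b) {γ : ℝ → ℝ × ℝ × ℝ} (hγ : PiecewiseC1 γ) :
    Near a b ((1 + a + b) * abLength a b γ) (γ 0) (γ 1) := by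
  obtain ⟨n, τ, h0, hn, hτ, hγ⟩ := hγ
  have hs : IntervalIntegrable (abSpeed a b γ) MeasureTheory.volume 0 1 := by
    rw [← h0, ← hn]
    exact IntervalIntegrable.trans_iterate fun i hi =>
      intervalIntegrable_abSpeed (hτ i hi) (hγ i hi)
  rw [abLength_eq]
  have hl : 0 ≤ ∫ t in (0:ℝ)..1, abSpeed a b γ t :=
    intervalIntegral.integral_nonneg zero_le_one fun t _ => abSpeed_nonneg γ t
  have hz : ∀ t ∈ Icc (0 : ℝ) 1, |(γ t).2.2 - (γ 0).2.2| ≤ ∫ t in (0:ℝ)..1, abSpeed a b γ t :=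
    fun t ht => by
    have := abs_sub_le_integral_of_pieces (f := fun t => (γ t).2.2) (C := 1) h0 hn hτ
      (fun i hi => (contDiff_snd.comp contDiff_snd).comp_contDiffOn (hγ i hi)) hs
      (abSpeed_nonneg γ) zero_le_one (fun t _ => by
        rw [one_mul]; exact abs_deriv_height_le γ t) ht
    rwa [one_mul] at this
  set ℓ := ∫ t in (0:ℝ)..1, abSpeed a b γ t
  have hle := Real.add_one_le_exp ℓ
  have ha' := mul_nonneg ha.le hl
  have hb' := mul_nonneg hb.le hl
  refine ⟨?_, ?_, ?_⟩
  · rw [abs_sub_comm]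
    linarith [hz 1 (by simp)]
  · have := abs_sub_le_integral_of_pieces (f := fun t => (γ t).1)
      (C := Real.exp (a * ((γ 0).2.2 + ℓ))) h0 hn hτ
      (fun i hi => contDiff_fst.comp_contDiffOn (hγ i hi)) hs
      (abSpeed_nonneg γ) (Real.exp_pos _).le (fun t ht => by
        refine (abs_deriv_fst_le (a := a) (b := b) γ t).trans ?_
        gcongr
        · exact abSpeed_nonneg γ t
        · linarith [(abs_le.1 (hz t ht)).2]) (right_mem_Icc.2 zero_le_one)
    rw [abs_sub_comm]
    refine this.trans ?_
    calc _ ≤ Real.exp (a * ((γ 0).2.2 + ℓ)) * Real.exp ℓ := by gcongr; linarith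
      _ ≤ _ := by rw [← Real.exp_add, Real.exp_le_exp]; linarith
  · have := abs_sub_le_integral_of_pieces (f := fun t => (γ t).2.1)
      (C := Real.exp (-b * ((γ 0).2.2 - ℓ))) h0 hn hτ
      (fun i hi => (contDiff_fst.comp contDiff_snd).comp_contDiffOn (hγ i hi)) hs
      (abSpeed_nonneg γ) (Real.exp_pos _).le (fun t ht => by
        refine (abs_deriv_snd_le (a := a) (b := b) γ t).trans ?_
        have := (abs_le.1 (hz t ht)).1
        refine mul_le_mul_of_nonneg_right (Real.exp_le_exp.2 ?_) (abSpeed_nonneg γ t)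
        nlinarith) (right_mem_Icc.2 zero_le_one)
    rw [abs_sub_comm]
    refine this.trans ?_
    calc _ ≤ Real.exp (-b * ((γ 0).2.2 - ℓ)) * Real.exp ℓ := by gcongr; linarith
      _ ≤ _ := by rw [← Real.exp_add, Real.exp_le_exp]; linarith

theorem ContDiff.piecewiseC1 {γ : ℝ → ℝ × ℝ × ℝ} (hγ : ContDiff ℝ 1 γ) : PiecewiseC1 γ :=
  ⟨1, fun i => i, by simp, by simp, fun i _ => by simp, fun i _ => hγ.contDiffOn⟩

theorem near_of_dAB_le (ha : 0 < a) (hb : 0 < b) {p q : ℝ × ℝ × ℝ} {ℓ : ℝ}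
    (h : dAB a b p q ≤ ℓ) : Near a b ((1 + a + b) * (ℓ + 1)) p q := by
  obtain ⟨_, ⟨γ, rfl, rfl, hγ, rfl⟩, hlt⟩ := exists_lt_of_csInf_lt
    (s := {ℓ : ℝ | ∃ γ : ℝ → ℝ × ℝ × ℝ,
      γ 0 = p ∧ γ 1 = q ∧ PiecewiseC1 γ ∧ abLength a b γ = ℓ})
    ⟨_, fun t => p + t • (q - p), by simp, by simp,
      ContDiff.piecewiseC1 (by fun_prop), rfl⟩ (h.trans_lt (lt_add_one ℓ))
  exact (near_of_path ha hb hγ).mono (by gcongr)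

theorem dAB_le_abLength {γ : ℝ → ℝ × ℝ × ℝ} (hγ : PiecewiseC1 γ) :
    dAB a b (γ 0) (γ 1) ≤ abLength a b γ := by
  refine csInf_le ⟨0, ?_⟩ ⟨γ, rfl, rfl, hγ, rfl⟩
  rintro _ ⟨δ, -, -, -, rfl⟩
  exact intervalIntegral.integral_nonneg zero_le_one fun t _ => abSpeed_nonneg δ t

theorem abSpeed_le (γ : ℝ → ℝ × ℝ × ℝ) (t : ℝ) :
    abSpeed a b γ t ≤ Real.exp (-(a * (γ t).2.2)) * |deriv (fun s => (γ s).1) t| +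
      Real.exp (b * (γ t).2.2) * |deriv (fun s => (γ s).2.1) t| +
      |deriv (fun s => (γ s).2.2) t| := by
  refine Real.sqrt_le_iff.2 ⟨by positivity, ?_⟩
  have e1 : Real.exp (-2 * a * (γ t).2.2) = Real.exp (-(a * (γ t).2.2)) ^ 2 := by
    rw [← Real.exp_nat_mul]; congr 1; push_cast; ring
  have e2 : Real.exp (2 * b * (γ t).2.2) = Real.exp (b * (γ t).2.2) ^ 2 := by
    rw [← Real.exp_nat_mul]; congr 1; push_cast; ring
  rw [e1, e2, ← sq_abs (deriv (fun s => (γ s).1) t), ← sq_abs (deriv (fun s => (γ s).2.1) t),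
    ← sq_abs (deriv (fun s => (γ s).2.2) t)]
  have h1 : 0 ≤ Real.exp (-(a * (γ t).2.2)) * |deriv (fun s => (γ s).1) t| := by positivity
  have h2 : 0 ≤ Real.exp (b * (γ t).2.2) * |deriv (fun s => (γ s).2.1) t| := by positivity
  have h3 := abs_nonneg (deriv (fun s => (γ s).2.2) t)
  nlinarith [mul_nonneg h1 h2, mul_nonneg h1 h3, mul_nonneg h2 h3]

theorem abLength_le_of_abSpeed_le {γ : ℝ → ℝ × ℝ × ℝ} {c : ℝ}
    (h : ∀ t ∈ Icc (0 : ℝ) 1, abSpeed a b γ t ≤ c) : abLength a b γ ≤ c := by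
  have := intervalIntegral.norm_integral_le_of_norm_le_const (a := (0 : ℝ)) (b := 1) (C := c)
    (f := abSpeed a b γ) fun t ht => by
      rw [uIoc_of_le zero_le_one] at ht
      rw [Real.norm_of_nonneg (abSpeed_nonneg γ t)]
      exact h t (Ioc_subset_Icc_self ht)
  rw [abLength_eq]
  refine (le_abs_self _).trans ?_
  simpa using this

/-- The reparametrization of `[0, 1]` with speed proportional to `w`. -/
def warp (w : ℝ → ℝ) (t : ℝ) : ℝ := (∫ s in (0 : ℝ)..t, w s) / ∫ s in (0 : ℝ)..1, w s

theorem hasDerivAt_warp {w : ℝ → ℝ} (hw : Continuous w) (t : ℝ) :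
    HasDerivAt (warp w) (w t / ∫ s in (0 : ℝ)..1, w s) t :=
  (intervalIntegral.integral_hasDerivAt_right (hw.intervalIntegrable _ _)
    (hw.stronglyMeasurableAtFilter _ _) hw.continuousAt).div_const _

theorem contDiff_warp {w : ℝ → ℝ} (hw : Continuous w) : ContDiff ℝ 1 (warp w) := by
  rw [contDiff_one_iff_deriv]
  refine ⟨fun t => (hasDerivAt_warp hw t).differentiableAt, ?_⟩
  rw [funext fun t => (hasDerivAt_warp hw t).deriv]
  fun_prop

theorem exp_le_integral_exp {g : ℝ → ℝ} (hg : Continuous g) {u v c : ℝ} (hu : 0 ≤ u)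
    (huv : u ≤ v) (hv : v ≤ 1) (h : ∀ t ∈ Icc u v, c ≤ g t) :
    (v - u) * Real.exp c ≤ ∫ t in (0 : ℝ)..1, Real.exp (g t) := by
  have hc : Continuous fun t => Real.exp (g t) := by fun_prop
  calc (v - u) * Real.exp c = ∫ _ in u..v, Real.exp c := by simp
    _ ≤ ∫ t in u..v, Real.exp (g t) :=
      intervalIntegral.integral_mono_on huv (by simp) (hc.intervalIntegrable _ _)
        fun t ht => Real.exp_le_exp.2 (h t ht)
    _ ≤ _ := intervalIntegral.integral_mono_interval hu huv hv
      (.of_forall fun t => (Real.exp_pos _).le) (hc.intervalIntegrable _ _)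

set_option maxHeartbeats 800000 in
theorem exists_dAB_le (ha : 0 < a) (hb : 0 < b) :
    ∃ C, 1 ≤ C ∧ ∀ p q ℓ, 1 ≤ ℓ → Near a b ℓ p q → dAB a b p q ≤ C * ℓ := by
  refine ⟨3 + 22 * (1 + 4 / a + 4 / b), ?_, ?_⟩
  · have : 0 < 4 / a := by positivity
    have : 0 < 4 / b := by positivity
    linarith
  rintro p q ℓ hl ⟨h1, h2, h3⟩
  set M := 64 / 3 * (ℓ + (ℓ + 3) / a + (ℓ + 3) / b) with hM
  have hpa : 0 < (ℓ + 3) / a := by positivity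
  have hpb : 0 < (ℓ + 3) / b := by positivity
  have hM0 : 0 ≤ M := by positivity
  have hMa : ℓ + 3 ≤ a * (3 / 64 * M - ℓ) := by
    have : a * (3 / 64 * M - ℓ) = (ℓ + 3) + a * ((ℓ + 3) / b) := by rw [hM]; field_simp; ring
    rw [this]; have := mul_pos ha hpb; linarith
  have hMb : ℓ + 3 ≤ b * (3 / 64 * M - ℓ) := by
    have : b * (3 / 64 * M - ℓ) = (ℓ + 3) + b * ((ℓ + 3) / a) := by rw [hM]; field_simp; ring
    rw [this]; have := mul_pos hb hpa; linarith
  have hMle : M ≤ 22 * (1 + 4 / a + 4 / b) * ℓ := by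
    have e1 : (ℓ + 3) / a ≤ 4 / a * ℓ := by
      rw [div_mul_eq_mul_div]; gcongr; linarith
    have e2 : (ℓ + 3) / b ≤ 4 / b * ℓ := by
      rw [div_mul_eq_mul_div]; gcongr; linarith
    nlinarith
  set z : ℝ → ℝ := fun t => p.2.2 + (q.2.2 - p.2.2) * t + M * (t * (1 - t) * (1 - 2 * t)) with hz
  have hzd : ∀ t, HasDerivAt z ((q.2.2 - p.2.2) + M * (1 - 6 * t + 6 * t ^ 2)) t := fun t => by
    have e1 : HasDerivAt (fun t : ℝ => t * (1 - t) * (1 - 2 * t)) (1 - 6 * t + 6 * t ^ 2) t := by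
      have := (((hasDerivAt_id t).mul ((hasDerivAt_id t).const_sub 1))).mul
        (((hasDerivAt_id t).const_mul 2).const_sub 1)
      refine this.congr_deriv ?_
      simp only [id, Pi.mul_apply]; ring
    have := (((hasDerivAt_id t).const_mul (q.2.2 - p.2.2)).const_add p.2.2).add (e1.const_mul M)
    refine this.congr_deriv ?_
    ring
  have hzc : ContDiff ℝ 1 z := by fun_prop
  have hwa : Continuous fun t => Real.exp (a * z t) := by have := hzc.continuous; fun_prop
  have hwb : Continuous fun t => Real.exp (-b * z t) := by have := hzc.continuous; fun_prop
  have e8 : (8 : ℝ) ≤ Real.exp 3 := by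
    have e1 : (2 : ℝ) ≤ Real.exp 1 := by linarith [Real.add_one_le_exp (1 : ℝ)]
    have e2 : Real.exp 3 = Real.exp 1 ^ 3 := by rw [← Real.exp_nat_mul]; norm_num
    rw [e2]
    calc (8 : ℝ) = 2 ^ 3 := by norm_num
      _ ≤ _ := by gcongr
  have hΔ := abs_le.1 h1
  have hIa : Real.exp (a * p.2.2 + ℓ) ≤ ∫ t in (0 : ℝ)..1, Real.exp (a * z t) := by
    have := exp_le_integral_exp (g := fun t => a * z t) (by have := hzc.continuous; fun_prop)
      (u := 1 / 8) (v := 1 / 4) (c := a * p.2.2 + ℓ + 3) (by norm_num) (by norm_num)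
      (by norm_num) fun t ht => by
        have k1 : (3 / 64 : ℝ) ≤ t * (1 - t) * (1 - 2 * t) := by
          nlinarith [ht.1, ht.2, mul_nonneg (sub_nonneg.2 ht.1) (sub_nonneg.2 ht.2)]
        have k2 : -ℓ ≤ (q.2.2 - p.2.2) * t := by nlinarith [ht.1, ht.2]
        have k3 : p.2.2 + (3 / 64 * M - ℓ) ≤ z t := by simp only [hz]; nlinarith
        nlinarith
    rw [Real.exp_add _ 3] at this
    nlinarith [Real.exp_pos (a * p.2.2 + ℓ)]
  have hIb : Real.exp (-b * p.2.2 + ℓ) ≤ ∫ t in (0 : ℝ)..1, Real.exp (-b * z t) := by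
    have := exp_le_integral_exp (g := fun t => -b * z t) (by have := hzc.continuous; fun_prop)
      (u := 3 / 4) (v := 7 / 8) (c := -b * p.2.2 + ℓ + 3) (by norm_num) (by norm_num)
      (by norm_num) fun t ht => by
        have k1 : t * (1 - t) * (1 - 2 * t) ≤ -(3 / 64 : ℝ) := by
          nlinarith [ht.1, ht.2, mul_nonneg (sub_nonneg.2 ht.1) (sub_nonneg.2 ht.2)]
        have k2 : (q.2.2 - p.2.2) * t ≤ ℓ := by nlinarith [ht.1, ht.2]
        have k3 : z t ≤ p.2.2 - (3 / 64 * M - ℓ) := by simp only [hz]; nlinarith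
        nlinarith
    rw [Real.exp_add _ 3] at this
    nlinarith [Real.exp_pos (-b * p.2.2 + ℓ)]
  have hIa0 := (Real.exp_pos _).trans_le hIa
  have hIb0 := (Real.exp_pos _).trans_le hIb
  set Ia := ∫ t in (0 : ℝ)..1, Real.exp (a * z t) with hIa_def
  set Ib := ∫ t in (0 : ℝ)..1, Real.exp (-b * z t) with hIb_def
  set γ : ℝ → ℝ × ℝ × ℝ := fun t => (p.1 + (q.1 - p.1) * warp (fun t => Real.exp (a * z t)) t,
    p.2.1 + (q.2.1 - p.2.1) * warp (fun t => Real.exp (-b * z t)) t, z t) with hγ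
  have hγc : ContDiff ℝ 1 γ := by
    have := contDiff_warp hwa
    have := contDiff_warp hwb
    fun_prop
  have hγ0 : γ 0 = p := by simp [hγ, warp, hz]
  have hγ1 : γ 1 = q := by
    have w1 : warp (fun t => Real.exp (a * z t)) 1 = 1 := div_self hIa0.ne'
    have w2 : warp (fun t => Real.exp (-b * z t)) 1 = 1 := div_self hIb0.ne'
    simp only [hγ, w1, w2]
    simp [hz]
  rw [← hγ0, ← hγ1]
  refine (dAB_le_abLength (ContDiff.piecewiseC1 hγc)).trans
    (abLength_le_of_abSpeed_le fun t ht => (abSpeed_le γ t).trans ?_)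
  have d1 : deriv (fun s => (γ s).1) t = (q.1 - p.1) * (Real.exp (a * z t) / Ia) :=
    (((hasDerivAt_warp hwa t).const_mul _).const_add _).deriv
  have d2 : deriv (fun s => (γ s).2.1) t = (q.2.1 - p.2.1) * (Real.exp (-b * z t) / Ib) :=
    (((hasDerivAt_warp hwb t).const_mul _).const_add _).deriv
  have d3 : deriv (fun s => (γ s).2.2) t = (q.2.2 - p.2.2) + M * (1 - 6 * t + 6 * t ^ 2) :=
    (hzd t).deriv
  have s1 : Real.exp (-(a * z t)) * |(q.1 - p.1) * (Real.exp (a * z t) / Ia)| ≤ 1 := by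
    rw [abs_mul, abs_of_pos (div_pos (Real.exp_pos _) hIa0), Real.exp_neg, abs_sub_comm]
    have : (Real.exp (a * z t))⁻¹ * (|p.1 - q.1| * (Real.exp (a * z t) / Ia)) =
        |p.1 - q.1| / Ia := by
      field_simp
    rw [this, div_le_one hIa0]
    exact h2.trans hIa
  have s2 : Real.exp (b * z t) * |(q.2.1 - p.2.1) * (Real.exp (-b * z t) / Ib)| ≤ 1 := by
    rw [abs_mul, abs_of_pos (div_pos (Real.exp_pos _) hIb0), neg_mul, Real.exp_neg, abs_sub_comm]
    have : Real.exp (b * z t) * (|p.2.1 - q.2.1| * ((Real.exp (b * z t))⁻¹ / Ib)) =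
        |p.2.1 - q.2.1| / Ib := by
      field_simp
    rw [this, div_le_one hIb0]
    exact h3.trans hIb
  have s3 : |(q.2.2 - p.2.2) + M * (1 - 6 * t + 6 * t ^ 2)| ≤ ℓ + M := by
    have u1 : 1 - 6 * t + 6 * t ^ 2 ≤ 1 := by nlinarith [ht.1, ht.2]
    have u2 : -1 ≤ 1 - 6 * t + 6 * t ^ 2 := by nlinarith [sq_nonneg (t - 1 / 2)]
    have u3 := mul_le_mul_of_nonneg_left u1 hM0
    have u4 := mul_le_mul_of_nonneg_left u2 hM0
    rw [abs_le]; constructor <;> linarith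
  rw [d1, d2, d3]
  change Real.exp (-(a * z t)) * _ + Real.exp (b * z t) * _ + _ ≤ _
  linarith

end

/-! ### Groups coarsely identified with `G_{a,b}` -/

section

variable {a b K : ℝ} {N κ : ℕ}

theorem card_Icc_floor_le {u v : ℝ} (h : u ≤ v) : ((Finset.Icc ⌊u⌋ ⌊v⌋).card : ℝ) ≤ v - u + 2 := by
  have h1 : ⌊u⌋ ≤ ⌊v⌋ := Int.floor_mono h
  have h2 : (((⌊v⌋ + 1 - ⌊u⌋).toNat : ℤ) : ℝ) = ⌊v⌋ + 1 - ⌊u⌋ := by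
    rw [Int.toNat_of_nonneg (by omega)]; push_cast; ring
  rw [Int.card_Icc]
  rw [Int.cast_natCast] at h2
  rw [h2]
  linarith [Int.floor_le v, Int.lt_floor_add_one u]

theorem card_le_of_floor_eq {ι : Type*} {f : ι → ℝ × ℝ × ℝ} {m : ℕ}
    (hm : ∀ p, ∀ F : Finset ι, (∀ g ∈ F, Near a b 1 p (f g)) → F.card ≤ m) {G : Finset ι} {i : ℤ}
    {X : ℝ} (hi : ∀ g ∈ G, ⌊(f g).2.2⌋ = i) (hx : ∀ g ∈ G, |(f g).1| ≤ X)
    (hy : ∀ g ∈ G, |(f g).2.1| ≤ X) (h1 : 1 ≤ X * Real.exp (-(a * i)))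
    (h2 : 1 ≤ X * Real.exp (b * i)) :
    (G.card : ℝ) ≤ m * (16 * X ^ 2 * Real.exp (-(a - b) * i)) := by
  set u := X * Real.exp (-(a * i)) with hu
  set v := X * Real.exp (b * i) with hv
  have hcard := Finset.card_le_mul_card_image_of_maps_to (s := G)
    (f := fun g => (⌊(f g).1 * Real.exp (-(a * i))⌋, ⌊(f g).2.1 * Real.exp (b * i)⌋))
    (t := Finset.Icc ⌊-u⌋ ⌊u⌋ ×ˢ Finset.Icc ⌊-v⌋ ⌊v⌋) (fun g hg => by
      have e1 := abs_le.1 (hx g hg)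
      have e2 := abs_le.1 (hy g hg)
      simp only [Finset.mem_product, Finset.mem_Icc, hu, hv, ← neg_mul]
      refine ⟨⟨?_, ?_⟩, ?_, ?_⟩ <;> refine Int.floor_mono ?_ <;> gcongr
      exacts [e1.1, e1.2, e2.1, e2.2]) m fun c hc => hm
        (c.1 * Real.exp (a * i), c.2 * Real.exp (-(b * i)), i) _ fun g hg => by
      obtain ⟨hgG, hgc⟩ := Finset.mem_filter.1 hg
      rw [Prod.ext_iff] at hgc
      obtain ⟨hc1, hc2⟩ := hgc
      have f1 := Int.floor_le ((f g).2.2)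
      have f2 := Int.lt_floor_add_one ((f g).2.2)
      rw [hi g hgG] at f1 f2
      have f3 := Int.floor_le ((f g).1 * Real.exp (-(a * i)))
      have f4 := Int.lt_floor_add_one ((f g).1 * Real.exp (-(a * i)))
      have f5 := Int.floor_le ((f g).2.1 * Real.exp (b * i))
      have f6 := Int.lt_floor_add_one ((f g).2.1 * Real.exp (b * i))
      simp only at hc1 hc2
      rw [hc1] at f3 f4
      rw [hc2] at f5 f6
      have g1 : (f g).1 = (f g).1 * Real.exp (-(a * i)) * Real.exp (a * i) := by
        rw [mul_assoc, ← Real.exp_add]; simp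
      have g2 : (f g).2.1 = (f g).2.1 * Real.exp (b * i) * Real.exp (-(b * i)) := by
        rw [mul_assoc, ← Real.exp_add]; simp
      refine ⟨?_, ?_, ?_⟩
      · rw [abs_le]; constructor <;> simp only <;> linarith
      · rw [g1, ← sub_mul, abs_mul, abs_of_pos (Real.exp_pos _)]
        refine (mul_le_of_le_one_left (Real.exp_pos _).le ?_).trans
          (Real.exp_le_exp.2 (le_add_of_nonneg_right zero_le_one))
        rw [abs_le]; constructor <;> linarith
      · rw [g2, ← sub_mul, abs_mul, abs_of_pos (Real.exp_pos _)]
        refine (mul_le_of_le_one_left (Real.exp_pos _).le ?_).trans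
          (Real.exp_le_exp.2 (by simp))
        rw [abs_le]; constructor <;> linarith
  rw [Finset.card_product] at hcard
  have hcard' : (G.card : ℝ) ≤
      m * ((Finset.Icc ⌊-u⌋ ⌊u⌋).card * (Finset.Icc ⌊-v⌋ ⌊v⌋).card) := by exact_mod_cast hcard
  have k1 := card_Icc_floor_le (u := -u) (v := u) (by linarith)
  have k2 := card_Icc_floor_le (u := -v) (v := v) (by linarith)
  have k3 : 16 * X ^ 2 * Real.exp (-(a - b) * i) = (4 * u) * (4 * v) := by
    have : -(a - b) * (i : ℝ) = -(a * i) + b * i := by ring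
    rw [this, Real.exp_add, hu, hv]; ring
  rw [k3]
  refine hcard'.trans (mul_le_mul_of_nonneg_left ?_ (by positivity))
  exact mul_le_mul (by linarith) (by linarith) (by positivity) (by linarith)

theorem card_le_of_box {ι : Type*} {f : ι → ℝ × ℝ × ℝ} {m : ℕ} (ha : 0 < a) (hb : 0 < b)
    (hba : b ≤ a)
    (hm : ∀ p, ∀ F : Finset ι, (∀ g ∈ F, Near a b 1 p (f g)) → F.card ≤ m) {G : Finset ι}
    {X lo hi : ℝ} (hlh : lo ≤ hi) (hz : ∀ g ∈ G, lo ≤ (f g).2.2 ∧ (f g).2.2 ≤ hi)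
    (hx : ∀ g ∈ G, |(f g).1| ≤ X)
    (hy : ∀ g ∈ G, |(f g).2.1| ≤ X) (h1 : Real.exp (a * hi) ≤ X)
    (h2 : Real.exp (b * (1 - lo)) ≤ X) :
    (G.card : ℝ) ≤ m * (16 * X ^ 2 * Real.exp (-(a - b) * (lo - 1))) * (hi - lo + 2) := by
  set B := m * (16 * X ^ 2 * Real.exp (-(a - b) * (lo - 1))) with hB
  have hB0 : 0 ≤ B := by positivity
  have hcard := Finset.card_le_mul_card_image_of_maps_to (s := G)
    (f := fun g => ⌊(f g).2.2⌋) (t := Finset.Icc ⌊lo⌋ ⌊hi⌋) (fun g hg => by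
      simp only [Finset.mem_Icc]
      exact ⟨Int.floor_mono (hz g hg).1, Int.floor_mono (hz g hg).2⟩) ⌊B⌋₊ fun i hi' => by
      refine Nat.le_floor ?_
      rw [Finset.mem_Icc] at hi'
      have e1 : lo - 1 ≤ i := by
        have : (⌊lo⌋ : ℝ) ≤ i := by exact_mod_cast hi'.1
        linarith [Int.lt_floor_add_one lo]
      have e2 : (i : ℝ) ≤ hi := by
        have : (i : ℝ) ≤ ⌊hi⌋ := by exact_mod_cast hi'.2
        linarith [Int.floor_le hi]
      refine (card_le_of_floor_eq (i := i) (X := X) hm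
        (fun g hg => (Finset.mem_filter.1 hg).2) (fun g hg => hx g (Finset.mem_filter.1 hg).1)
        (fun g hg => hy g (Finset.mem_filter.1 hg).1) ?_ ?_).trans ?_
      · calc (1 : ℝ) = Real.exp (a * i) * Real.exp (-(a * i)) := by rw [← Real.exp_add]; simp
          _ ≤ _ := by
            gcongr
            exact le_trans (Real.exp_le_exp.2 (by gcongr)) h1
      · calc (1 : ℝ) = Real.exp (-(b * i)) * Real.exp (b * i) := by rw [← Real.exp_add]; simp
          _ ≤ _ := by
            gcongr
            exact le_trans (Real.exp_le_exp.2 (by nlinarith)) h2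
      · have : Real.exp (-(a - b) * i) ≤ Real.exp (-(a - b) * (lo - 1)) :=
          Real.exp_le_exp.2 (by nlinarith)
        rw [hB]; gcongr
  have hcard' : (G.card : ℝ) ≤ ⌊B⌋₊ * (Finset.Icc ⌊lo⌋ ⌊hi⌋).card := by exact_mod_cast hcard
  exact hcard'.trans (mul_le_mul (Nat.floor_le hB0) (card_Icc_floor_le hlh) (by positivity) hB0)

/-- A group coarsely identified with `G_{a,b}` by the map `f`. -/
structure CoarseModel {Γ : Type*} [Group Γ] (a b A : ℝ) (f : Γ → ℝ × ℝ × ℝ) : Prop where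
  one_le : 1 ≤ A
  near_mul : ∀ ℓ, 1 ≤ ℓ → ∀ γ g h, Near a b ℓ (f g) (f h) →
    Near a b (A * ℓ) (f (γ * g)) (f (γ * h))
  exists_near : ∀ p, ∃ g, Near a b A p (f g)
  card_le : ∃ m : ℕ, ∀ p, ∀ F : Finset Γ, (∀ g ∈ F, Near a b 1 p (f g)) → F.card ≤ m

variable {Γ : Type*} [Group Γ] {A : ℝ} {f : Γ → ℝ × ℝ × ℝ}

theorem CoarseModel.mirror (h : CoarseModel a b A f) :
    CoarseModel b a A fun g => mirror (f g) where
  one_le := h.one_le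
  near_mul ℓ hl γ g g' hn := by
    rw [near_mirror] at hn ⊢
    exact h.near_mul ℓ hl γ g g' hn
  exists_near p := by
    obtain ⟨g, hg⟩ := h.exists_near (_root_.mirror p)
    exact ⟨g, by rwa [← near_mirror, mirror_mirror] at hg⟩
  card_le := by
    obtain ⟨m, hm⟩ := h.card_le
    exact ⟨m, fun p F hF => hm (_root_.mirror p) F fun g hg => by
      rw [← near_mirror, mirror_mirror]; exact hF g hg⟩

theorem CoarseModel.coarseEmb (h : CoarseModel a b A f) (ha : 0 < a) (hb : 0 < b)
    {s : ℝ × ℝ × ℝ → Γ} (hs : ∀ p, Near a b A p (f (s p))) (γ : Γ) :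
    CoarseEmb a b (10 * (1 + a + b) ^ 3 * A ^ 2) fun p => f (γ * s p) := by
  intro ℓ hl p q
  have hA := h.one_le
  set w := 1 + a + b with hw
  have hw1 : 1 ≤ w := by linarith
  have hw2 : w ≤ w ^ 2 := by nlinarith
  have hw3 : w ^ 2 ≤ w ^ 3 := by nlinarith [sq_nonneg w]
  have hA2 : A ≤ A ^ 2 := by nlinarith
  have e0 : 1 ≤ A * ℓ := one_le_mul_of_one_le_of_one_le hA hl
  have e1 : A ≤ A * ℓ := le_mul_of_one_le_right (by linarith) hl
  have e2 : ℓ ≤ A * ℓ := le_mul_of_one_le_left (by linarith) hA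
  have e3 : w * (A * ℓ) ≤ w ^ 3 * (A * ℓ) := by gcongr; linarith
  have e4 : w ^ 2 * (A * ℓ) ≤ w ^ 3 * (A * ℓ) := by gcongr
  have e5 : w * A ≤ w * (A * ℓ) := by gcongr
  have e6 : w * ℓ ≤ w * (A * ℓ) := by gcongr
  have e7 : w * (w * A) ≤ w ^ 2 * (A * ℓ) := by rw [← mul_assoc, ← sq]; gcongr
  have e8 : A * ℓ ≤ w * (A * ℓ) := le_mul_of_one_le_left (by linarith) hw1
  have e9 : w ^ 3 * (A * ℓ) ≤ w ^ 3 * A ^ 2 * ℓ := by rw [mul_assoc]; gcongr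
  refine ⟨fun hn => ?_, fun hn => ?_⟩
  · have h1 := ((hs p).symm ha hb).trans ha hb (hn.trans ha hb (hs q))
    rw [← hw] at h1
    refine (h.near_mul _ (by nlinarith) γ _ _ h1).mono ?_
    calc A * (w * (w * A) + (w * ℓ + A + 1) + 1) ≤ A * (10 * (w ^ 3 * (A * ℓ))) := by
          gcongr; linarith
      _ = 10 * w ^ 3 * A ^ 2 * ℓ := by ring
  · have h1 := h.near_mul _ hl γ⁻¹ _ _ hn
    simp only [inv_mul_cancel_left] at h1
    have h2 := (hs p).trans ha hb (h1.trans ha hb ((hs q).symm ha hb))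
    rw [← hw] at h2
    refine h2.mono ?_
    linarith

theorem exists_linear_mul_pow_lt (c₀ c₁ c₂ : ℝ) :
    ∃ n : ℕ, c₀ * (c₁ * n + c₂) * (2 ^ n * Real.exp (-n)) < 1 := by
  have he : (2 : ℝ) < Real.exp 1 := by linarith [Real.exp_one_gt_d9]
  have hr1 : 2 * Real.exp (-1) < 1 := by
    rw [Real.exp_neg, ← div_eq_mul_inv, div_lt_one (Real.exp_pos _)]; exact he
  have h1 := (tendsto_self_mul_const_pow_of_lt_one (by positivity) hr1).const_mul (c₀ * c₁)
  have h2 := (tendsto_pow_atTop_nhds_zero_of_lt_one (by positivity) hr1).const_mul (c₀ * c₂)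
  have h3 := h1.add h2
  simp only [mul_zero, add_zero] at h3
  obtain ⟨n, hn⟩ := (h3.eventually_lt_const zero_lt_one).exists
  refine ⟨n, lt_of_eq_of_lt ?_ hn⟩
  rw [mul_pow, ← Real.exp_nat_mul]
  simp only [mul_neg, mul_one]
  ring

set_option maxHeartbeats 1000000 in
theorem CoarseModel.not_lt (h : CoarseModel a b A f) (ha : 0 < a) (hb : 0 < b) : ¬ b < a := by
  intro hba
  classical
  choose s hs using h.exists_near
  obtain ⟨m, hm⟩ := h.card_le
  have hA := h.one_le
  set K := 10 * (1 + a + b) ^ 3 * A ^ 2 with hK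
  have hφ : ∀ γ, CoarseEmb a b K fun p => f (γ * s p) := h.coarseEmb ha hb hs
  have hK1 : 1 ≤ K := by
    have h1 : 1 ≤ (1 + a + b) ^ 3 := one_le_pow₀ (by linarith)
    have h2 : 1 ≤ A ^ 2 := one_le_pow₀ hA
    nlinarith
  obtain ⟨κ, hκ⟩ := exists_nat_gt (max 2 (Real.exp (2 * K * (a + b) / (a - b))))
  have hκ2 : 2 < κ := by exact_mod_cast (le_max_left _ _).trans_lt hκ
  have hκ3 := (le_max_right _ _).trans_lt hκ
  have P : Params a b K (2 * κ) κ := ⟨ha, hb, hK1, by omega, by omega⟩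
  have hlog : 2 * K * (a + b) / (a - b) ≤ Real.log (2 * κ : ℕ) := by
    rw [Real.le_log_iff_exp_le (by push_cast; linarith [Real.exp_pos (2 * K * (a + b) / (a - b))])]
    push_cast
    linarith [Real.exp_pos (2 * K * (a + b) / (a - b))]
  set σ := Real.log (2 * κ : ℕ) / (K * (a + b)) with hσ
  have hσ0 : 0 < σ := div_pos P.logN_pos (by positivity)
  have hσ2 : 2 ≤ (a - b) * σ := by
    rw [div_le_iff₀ (by linarith)] at hlog
    rw [hσ, mul_div_assoc', le_div_iff₀ (by positivity)]
    linarith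
  have hslope : σ ≤ heightSlope a b K (2 * κ) κ := by
    have := le_unitSlope P hba.ne'
    rw [unitSlope, le_div_iff₀ P.step_pos] at this
    refine le_trans (le_of_eq ?_) this
    rw [hσ]; field_simp
  obtain ⟨c, hc0, hc⟩ := exists_rate P (half_pos hσ0)
  set S := Real.log (2 * κ : ℕ) / b with hS
  have hS0 : 0 < S := P.step_pos
  set D := 3 * Real.exp A with hD
  obtain ⟨n, hn⟩ := exists_linear_mul_pow_lt
    (m * (64 * D ^ 2 * Real.exp ((a - b) * (c + A + 1)))) (K * S) (K + 2 * A + c + 2)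
  set H := σ / 2 * n - c with hH
  set L := K * (n * S + 1) with hL
  have hrate : Rate a b K (2 * κ) κ n H := (hc n).mono hb (by
    have : (n : ℝ) * σ ≤ n * heightSlope a b K (2 * κ) κ := by gcongr
    rw [hH]; linarith)
  have hL0 : 0 ≤ L := by positivity
  have hD1 : 1 ≤ D := by linarith [Real.one_le_exp (by linarith : 0 ≤ A)]
  obtain ⟨T, hT⟩ := exists_nat_ge (1 + Real.exp A + Real.exp ((a + b) * A + L) +
    Real.exp (a * (A + L)) + Real.exp (b * (1 - (H - A))))
  have p1 := Real.exp_pos A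
  have p2 := Real.exp_pos ((a + b) * A + L)
  have p3 := Real.exp_pos (a * (A + L))
  have p4 := Real.exp_pos (b * (1 - (H - A)))
  have hT1 : (1 : ℝ) ≤ T := by linarith
  have hDT : (T : ℝ) ≤ D * T := le_mul_of_one_le_left (by linarith) hD1
  let P₀ : ℕ × ℕ → ℝ × ℝ × ℝ := fun i => (D * i.1, D * i.2, 0)
  let γ : ℕ × ℕ → Γ := fun i => s (P₀ i) * (s 0)⁻¹
  have hγ0 : ∀ i, γ i * s 0 = s (P₀ i) := fun i => inv_mul_cancel_right _ _
  have hgrid : ∀ i, |D * i.1 - (f (s (P₀ i))).1| ≤ Real.exp A ∧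
      |D * i.2 - (f (s (P₀ i))).2.1| ≤ Real.exp A ∧ |(f (s (P₀ i))).2.2| ≤ A := fun i => by
    have := hs (P₀ i)
    exact ⟨by simpa [P₀] using this.2.1, by simpa [P₀] using this.2.2,
      by simpa [P₀] using this.1⟩
  have hnat : ∀ (i j : ℕ) (x : ℝ), |D * i - x| ≤ Real.exp A → |D * j - x| ≤ Real.exp A → i = j :=
    fun i j x h1 h2 => by
    by_contra hne
    have e1 : (1 : ℝ) ≤ |(i : ℝ) - j| := by
      have : (1 : ℤ) ≤ |(i : ℤ) - j| := Int.one_le_abs (sub_ne_zero.2 (by exact_mod_cast hne))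
      exact_mod_cast this
    have e2 : |D * (i - j)| ≤ 2 * Real.exp A := by
      rw [abs_le] at *; constructor <;> linarith [h1.1, h1.2, h2.1, h2.2]
    rw [abs_mul, abs_of_pos (by linarith)] at e2
    nlinarith
  have hinj : Function.Injective γ := fun i j hij => by
    have e : s (P₀ i) = s (P₀ j) := mul_right_cancel hij
    have h1 := hgrid i
    have h2 := hgrid j
    rw [e] at h1
    exact Prod.ext (hnat _ _ _ h1.1 h2.1) (hnat _ _ _ h1.2.1 h2.2.1)
  set F := (Finset.range T ×ˢ Finset.range T).image γ with hF
  have hFcard : F.card = T * T := by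
    rw [hF, Finset.card_image_of_injective _ hinj, Finset.card_product, Finset.card_range]
  obtain ⟨q, hq, F', hF', hqF', hcard⟩ := exists_common_leaf hb (by omega : 0 < 2 * κ)
    (fun g : Γ => {q | (f (g * s 0)).2.2 + H ≤ (f (g * s q)).2.2}) (F := F)
    (n := n) (p := 0) fun g _ => hrate _ (hφ g) 0
  have hcard2 : F.card ≤ 2 ^ n * F'.card := by
    rw [mul_pow] at hcard
    refine le_of_mul_le_mul_left (a := κ ^ n) ?_ (by positivity)
    linarith
  have hnear : Near a b (n * S + 1) 0 q :=
    hq.near (by positivity) (by rw [abs_of_nonneg (by positivity)]; linarith)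
  set G := F'.image (· * s q) with hG
  have hGcard : G.card = F'.card := Finset.card_image_of_injective _ (mul_left_injective _)
  have hbox : ∀ g ∈ G, (H - A ≤ (f g).2.2 ∧ (f g).2.2 ≤ A + L) ∧ |(f g).1| ≤ 2 * (D * T) ∧
      |(f g).2.1| ≤ 2 * (D * T) := fun g hg => by
    obtain ⟨g', hg', rfl⟩ := Finset.mem_image.1 hg
    obtain ⟨i, hi, rfl⟩ := Finset.mem_image.1 (hF' hg')
    have h1 := hqF' _ hg'
    have h2 := (hφ (γ i) _ (by linarith [mul_nonneg n.cast_nonneg hS0.le] : 1 ≤ n * S + 1)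
      0 q).1 hnear
    simp only [mem_ofPred_eq, hγ0] at h1 h2
    obtain ⟨g1, g2, g3⟩ := hgrid i
    obtain ⟨n1, n2, n3⟩ := h2
    rw [← hL] at n1 n2 n3
    simp only [Finset.mem_product, Finset.mem_range] at hi
    have i1 : (i.1 : ℝ) ≤ T := by exact_mod_cast hi.1.le
    have i2 : (i.2 : ℝ) ≤ T := by exact_mod_cast hi.2.le
    have i1' : D * i.1 ≤ D * T := by gcongr
    have i2' : D * i.2 ≤ D * T := by gcongr
    have i1'' : 0 ≤ D * i.1 := by positivity
    have i2'' : 0 ≤ D * i.2 := by positivity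
    have g4 := abs_le.1 g3
    have n2' := n2.trans (Real.exp_le_exp.2 (by nlinarith : _ ≤ (a + b) * A + L))
    have n3' := n3.trans (Real.exp_le_exp.2 (by nlinarith : _ ≤ (a + b) * A + L))
    rw [abs_le] at n1 n2' n3' g1 g2
    refine ⟨⟨by linarith, by linarith⟩, ?_, ?_⟩
    · rw [abs_le]; constructor <;> linarith
    · rw [abs_le]; constructor <;> linarith
  have hT0 : 0 < T := by exact_mod_cast hT1
  have hGne : G.Nonempty := by
    rw [← Finset.card_pos, hGcard]
    refine Nat.pos_of_mul_pos_left (?_ : 0 < 2 ^ n * F'.card)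
    refine lt_of_lt_of_le ?_ hcard2
    rw [hFcard]; positivity
  obtain ⟨g₀, hg₀⟩ := hGne
  have hlh := (hbox g₀ hg₀).1.1.trans (hbox g₀ hg₀).1.2
  have hcount := card_le_of_box ha hb hba.le hm (G := G) hlh (fun g hg => (hbox g hg).1)
    (fun g hg => (hbox g hg).2.1) (fun g hg => (hbox g hg).2.2) (by linarith) (by linarith)
  have hfin : (T : ℝ) * T ≤ 2 ^ n * G.card := by
    rw [hGcard]; rw [hFcard] at hcard2; exact_mod_cast hcard2
  have x1 : Real.exp (-(a - b) * (H - A - 1)) ≤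
      Real.exp ((a - b) * (c + A + 1)) * Real.exp (-n) := by
    rw [← Real.exp_add, Real.exp_le_exp]
    have : (n : ℝ) * 2 ≤ n * ((a - b) * σ) := by gcongr
    rw [hH]; linarith
  have x2 : A + L - (H - A) + 2 ≤ K * S * n + (K + 2 * A + c + 2) := by
    have : 0 ≤ σ / 2 * n := by positivity
    rw [hL, hH]; linarith
  have x3 : (T : ℝ) * T ≤ T * T * (m * (64 * D ^ 2 * Real.exp ((a - b) * (c + A + 1))) *
      (K * S * n + (K + 2 * A + c + 2)) * (2 ^ n * Real.exp (-n))) := by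
    calc (T : ℝ) * T ≤ 2 ^ n * G.card := hfin
      _ ≤ 2 ^ n * (m * (16 * (2 * (D * T)) ^ 2 *
          (Real.exp ((a - b) * (c + A + 1)) * Real.exp (-n))) *
          (K * S * n + (K + 2 * A + c + 2))) := by
        refine mul_le_mul_of_nonneg_left (hcount.trans ?_) (by positivity)
        gcongr
      _ = _ := by ring
  have x4 : (0 : ℝ) < T * T := by positivity
  have x5 := mul_lt_mul_of_pos_left hn x4
  linarith

end

/-! ### Word metrics and the main theorem -/

section

variable {Γ : Type*} [Group Γ] {S : Set Γ}

theorem wordDist_mul_left (γ g h : Γ) : wordDist S (γ * g) (γ * h) = wordDist S g h := by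
  rw [wordDist, wordDist, mul_inv_rev, mul_assoc, inv_mul_cancel_left]

theorem IsFinSymmGen.exists_list (hS : IsFinSymmGen S) (g : Γ) :
    ∃ l : List Γ, (∀ x ∈ l, x ∈ S) ∧ l.prod = g ∧ l.length = wordNorm S g := by
  refine Nat.sInf_mem
    (s := {m | ∃ l : List Γ, (∀ x ∈ l, x ∈ S) ∧ l.prod = g ∧ l.length = m}) ?_
  obtain ⟨l, hl, hg⟩ := Submonoid.exists_list_of_mem_closure (s := S ∪ S⁻¹) (x := g)
    (by rw [← Subgroup.closure_toSubmonoid, hS.2.2]; trivial)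
  exact ⟨l.length, l, fun x hx => (hl x hx).elim id fun h => inv_inv x ▸ hS.2.1 _ h, hg, rfl⟩

theorem IsFinSymmGen.finite_wordNorm_le (hS : IsFinSymmGen S) (r : ℝ) :
    {g : Γ | (wordNorm S g : ℝ) ≤ r}.Finite := by
  have := hS.1.to_subtype
  refine ((List.finite_length_le S ⌊r⌋₊).image fun l => (l.map Subtype.val).prod).subset ?_
  intro g hg
  obtain ⟨l, hl, hg', hlen⟩ := hS.exists_list g
  lift l to List S using hl
  refine ⟨l, ?_, hg'⟩
  rw [mem_ofPred_eq, ← List.length_map (as := l) Subtype.val, hlen]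
  exact Nat.le_floor hg

theorem IsFinSymmGen.exists_coarseModel {a b K C : ℝ} {f : Γ → ℝ × ℝ × ℝ}
    (hS : IsFinSymmGen S) (ha : 0 < a) (hb : 0 < b) (hK : 1 ≤ K) (hC : 0 ≤ C)
    (hf : IsQI (wordDist S) (dAB a b) K C f) : ∃ A, CoarseModel a b A f := by
  classical
  obtain ⟨hqi, hsurj⟩ := hf
  obtain ⟨C₁, hC₁, hC₁'⟩ := exists_dAB_le ha hb
  set w := 1 + a + b with hw
  have hw1 : 1 ≤ w := by linarith
  have hword : ∀ ℓ, 1 ≤ ℓ → ∀ g h, Near a b ℓ (f g) (f h) →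
      wordDist S g h ≤ K * (C₁ * ℓ + C) := fun ℓ hl g h hn => by
    have h1 := (hqi g h).1
    have h2 := hC₁' _ _ ℓ hl hn
    have h3 : 1 / K * wordDist S g h ≤ C₁ * ℓ + C := by linarith
    rwa [one_div, inv_mul_le_iff₀ (by linarith)] at h3
  have hE : 1 ≤ K * (K * (C₁ + C)) + C + 1 := by
    have : 0 ≤ K * (K * (C₁ + C)) := by positivity
    linarith
  refine ⟨w * (w * (K * (K * (C₁ + C)) + C + 1)), ?_, ?_, fun p => ?_, ?_⟩
  · exact one_le_mul_of_one_le_of_one_le hw1 (one_le_mul_of_one_le_of_one_le hw1 hE)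
  · intro ℓ hl γ g h hn
    have h1 := hword ℓ hl g h hn
    rw [← wordDist_mul_left γ] at h1
    have h2 := (hqi (γ * g) (γ * h)).2
    refine (near_of_dAB_le ha hb (h2.trans (by gcongr :
      _ ≤ K * (K * (C₁ * ℓ + C)) + C))).mono ?_
    rw [← hw]
    have e1 : C ≤ C * ℓ := le_mul_of_one_le_right hC hl
    calc w * (K * (K * (C₁ * ℓ + C)) + C + 1)
        ≤ w * (K * (K * (C₁ * ℓ + C * ℓ)) + C * ℓ + ℓ) := by gcongr
      _ = w * ((K * (K * (C₁ + C)) + C + 1) * ℓ) := by ring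
      _ ≤ w * (w * ((K * (K * (C₁ + C)) + C + 1) * ℓ)) := by
        have : 0 ≤ (K * (K * (C₁ + C)) + C + 1) * ℓ := by positivity
        exact mul_le_mul_of_nonneg_left (le_mul_of_one_le_left this hw1) (by linarith)
      _ = _ := by ring
  · obtain ⟨g, hg⟩ := hsurj p
    refine ⟨g, ((near_of_dAB_le ha hb hg).symm ha hb).mono ?_⟩
    rw [← hw]
    have : 0 ≤ K * (K * (C₁ + C)) := by positivity
    gcongr
    linarith
  · have hB := hS.finite_wordNorm_le (K * (C₁ * (w * (w * 1) + 1 + 1) + C))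
    refine ⟨hB.toFinset.card, fun p F hF => ?_⟩
    obtain rfl | ⟨g₀, hg₀⟩ := F.eq_empty_or_nonempty
    · simp
    · refine Finset.card_le_card_of_injOn (g₀⁻¹ * ·) (fun g hg => ?_)
        (mul_right_injective g₀⁻¹).injOn
      have h1 := ((hF g₀ hg₀).symm ha hb).trans ha hb (hF g hg)
      rw [← hw] at h1
      have := hword _ (by nlinarith) _ _ h1
      simpa [wordDist] using this

end

/-- **Theorem (Eskin–Fisher–Whyte).** For `a, b > 0` with `a ≠ b`, no finitely generated group
is quasi-isometric to the solvable Lie group `G_{a,b} = ℝ ⋉ ℝ²`,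
`z·(x,y) = (e^{az} x, e^{-bz} y)`. -/
theorem no_finitely_generated_group_qi_to_Gab
    (a b : ℝ) (ha : 0 < a) (hb : 0 < b) (hab : a ≠ b)
    (Γ : Type*) [Group Γ] (S : Set Γ) (hS : IsFinSymmGen S) :
    ¬ QuasiIsometric (wordDist S) (dAB a b) := by
  rintro ⟨K, C, f, hK, hC, hf⟩
  obtain ⟨A, hA⟩ := hS.exists_coarseModel ha hb hK hC hf
  rcases lt_or_gt_of_ne hab with h | h
  · exact hA.mirror.not_lt hb ha h
  · exact hA.not_lt ha hb h

end
end

section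
/- Subdivision Lemma for Sol: for all K ≥ 1, C ≥ 0 and ε > 0 there exist a positive integer n₀ and a real r₀ > 0, depending only on K, C and ε, such that for every r ≥ r₀, every integer n ≥ n₀, and every (K,C)-quasi-geodesic segment α : [0,r] → Sol that is not ε-monotone, one has Σ_{j=0}^{n−1} |h(α((j+1)r/n)) − h(α(jr/n))| ≥ |h(α(0)) − h(α(r))| + ε·r/(8K²). -/
open Set

noncomputable section

/-- The `Sol` length of a path `γ(t) = (x(t), y(t), z(t))`, for the metric
`ds² = e^{-z} dx² + e^{z} dy² + dz²`. -/
def solLength (γ : ℝ → ℝ × ℝ × ℝ) : ℝ :=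
  ∫ t in (0:ℝ)..1,
    Real.sqrt (Real.exp (-(γ t).2.2) * (deriv (fun s => (γ s).1) t) ^ 2 +
      Real.exp ((γ t).2.2) * (deriv (fun s => (γ s).2.1) t) ^ 2 +
      (deriv (fun s => (γ s).2.2) t) ^ 2)

/-- The left-invariant distance on `Sol = ℝ³`. -/
def dSol (p q : ℝ × ℝ × ℝ) : ℝ :=
  sInf {ℓ : ℝ | ∃ γ : ℝ → ℝ × ℝ × ℝ,
    γ 0 = p ∧ γ 1 = q ∧ PiecewiseC1 γ ∧ solLength γ = ℓ}

/-- Height function on `Sol`. -/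
def solHeight (p : ℝ × ℝ × ℝ) : ℝ := p.2.2

/-- `α` is a `(K,C)`-quasi-geodesic segment on `[0, L]` with respect to the distance `dX`. -/
def IsQGeoOn {X : Type*} (dX : X → X → ℝ) (K C : ℝ) (α : ℝ → X) (L : ℝ) : Prop :=
  ∀ s ∈ Set.Icc (0:ℝ) L, ∀ t ∈ Set.Icc (0:ℝ) L,
    (1 / K) * |s - t| - C ≤ dX (α s) (α t) ∧ dX (α s) (α t) ≤ K * |s - t| + C

/-- `α : [0,r] → Sol` is `ε`-monotone: equal heights occur only at parameters within `ε·r`. -/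
def EpsMonotone (α : ℝ → ℝ × ℝ × ℝ) (ε r : ℝ) : Prop :=
  ∀ t₁ ∈ Set.Icc (0:ℝ) r, ∀ t₂ ∈ Set.Icc (0:ℝ) r,
    solHeight (α t₁) = solHeight (α t₂) → |t₁ - t₂| < ε * r

theorem PiecewiseC1.continuousOn {E : Type*} [NormedAddCommGroup E] [NormedSpace ℝ E]
    {γ : ℝ → E} (h : PiecewiseC1 γ) : ContinuousOn γ (Icc 0 1) := by
  obtain ⟨n, τ, h0, h1, hmono, hC⟩ := h
  have key : ∀ k ≤ n, τ 0 ≤ τ k ∧ ContinuousOn γ (Icc (τ 0) (τ k)) := by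
    intro k
    induction k with
    | zero => intro _; simp
    | succ k ih =>
      intro hk
      obtain ⟨hle, hc⟩ := ih (by omega)
      have hk' := hmono k (by omega)
      refine ⟨hle.trans hk', ?_⟩
      rw [← Icc_union_Icc_eq_Icc hle hk']
      exact hc.union_of_isClosed (hC k (by omega)).continuousOn isClosed_Icc isClosed_Icc
  have := (key n le_rfl).2
  rwa [h0, h1] at this

theorem PiecewiseC1.exists_countable_differentiableAt {E : Type*} [NormedAddCommGroup E]
    [NormedSpace ℝ E] {γ : ℝ → E} (h : PiecewiseC1 γ) :
    ∃ s : Set ℝ, s.Countable ∧ ∀ t ∈ Ioo (0 : ℝ) 1 \ s, DifferentiableAt ℝ γ t := by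
  obtain ⟨n, τ, h0, h1, hmono, hC⟩ := h
  refine ⟨range τ, countable_range τ, ?_⟩
  rintro t ⟨⟨ht0, ht1⟩, ht⟩
  have key : ∀ k ≤ n, t < τ k → DifferentiableAt ℝ γ t := by
    intro k
    induction k with
    | zero => intro _ hlt; linarith
    | succ k ih =>
      intro hk hlt
      rcases lt_trichotomy t (τ k) with hk' | hk' | hk'
      · exact ih (by omega) hk'
      · exact absurd ⟨k, hk'.symm⟩ ht
      · exact ((hC k (by omega)).differentiableOn one_ne_zero).differentiableAt
          (Icc_mem_nhds hk' hlt)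
  exact key n le_rfl (by rw [h1]; exact ht1)

/-- The speed of a path with respect to the `Sol` metric. -/
def solSpeed (γ : ℝ → ℝ × ℝ × ℝ) (t : ℝ) : ℝ :=
  Real.sqrt (Real.exp (-(γ t).2.2) * (deriv (fun s => (γ s).1) t) ^ 2 +
    Real.exp ((γ t).2.2) * (deriv (fun s => (γ s).2.1) t) ^ 2 +
    (deriv (fun s => (γ s).2.2) t) ^ 2)

theorem solLength_eq_integral_solSpeed (γ : ℝ → ℝ × ℝ × ℝ) :
    solLength γ = ∫ t in (0 : ℝ)..1, solSpeed γ t := rfl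

theorem solSpeed_nonneg (γ : ℝ → ℝ × ℝ × ℝ) (t : ℝ) : 0 ≤ solSpeed γ t := Real.sqrt_nonneg _

theorem solLength_nonneg (γ : ℝ → ℝ × ℝ × ℝ) : 0 ≤ solLength γ :=
  intervalIntegral.integral_nonneg zero_le_one fun t _ => solSpeed_nonneg γ t

theorem PiecewiseC1.intervalIntegrable_solSpeed {γ : ℝ → ℝ × ℝ × ℝ} (h : PiecewiseC1 γ) :
    IntervalIntegrable (solSpeed γ) MeasureTheory.volume 0 1 := by
  obtain ⟨n, τ, h0, h1, hmono, hC⟩ := h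
  rw [← h0, ← h1]
  refine IntervalIntegrable.trans_iterate fun k hk => ?_
  rcases (hmono k hk).eq_or_lt with heq | hlt
  · rw [heq]
  have hC' := hC k hk
  set I := Icc (τ k) (τ (k + 1)) with hI
  have hcont : ∀ f : ℝ → ℝ, ContDiffOn ℝ 1 f I → ContinuousOn (derivWithin f I) I :=
    fun f hf => hf.continuousOn_derivWithin (uniqueDiffOn_Icc hlt) le_rfl
  have hx := hcont _ hC'.fst
  have hy := hcont _ hC'.snd.fst
  have hz := hcont _ hC'.snd.snd
  have hz0 : ContinuousOn (fun t => (γ t).2.2) I := hC'.snd.snd.continuousOn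
  have hspeed : ContinuousOn (fun t =>
      Real.sqrt (Real.exp (-(γ t).2.2) * (derivWithin (fun s => (γ s).1) I t) ^ 2 +
        Real.exp ((γ t).2.2) * (derivWithin (fun s => (γ s).2.1) I t) ^ 2 +
        (derivWithin (fun s => (γ s).2.2) I t) ^ 2)) I :=
    (((hz0.neg.rexp.mul (hx.pow 2)).add (hz0.rexp.mul (hy.pow 2))).add (hz.pow 2)).sqrt
  have hint := hspeed.intervalIntegrable_of_Icc (μ := MeasureTheory.volume) hlt.le
  refine hint.congr_uIoo ?_
  intro t ht
  rw [uIoo_of_le hlt.le] at ht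
  have hnhds : I ∈ nhds t := Icc_mem_nhds ht.1 ht.2
  simp only [solSpeed, derivWithin_of_mem_nhds hnhds]

theorem abs_deriv_fst_le_solSpeed (γ : ℝ → ℝ × ℝ × ℝ) (t : ℝ) :
    |deriv (fun s => (γ s).1) t| ≤ Real.exp ((γ t).2.2 / 2) * solSpeed γ t := by
  rw [← div_le_iff₀' (Real.exp_pos _), solSpeed]
  refine Real.le_sqrt_of_sq_le ?_
  have : (|deriv (fun s => (γ s).1) t| / Real.exp ((γ t).2.2 / 2)) ^ 2 =
      Real.exp (-(γ t).2.2) * (deriv (fun s => (γ s).1) t) ^ 2 := by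
    rw [div_pow, sq_abs, ← Real.exp_nat_mul, Real.exp_neg, div_eq_inv_mul]
    congr 3; push_cast; ring
  rw [this]
  have h2 : 0 ≤ Real.exp ((γ t).2.2) * (deriv (fun s => (γ s).2.1) t) ^ 2 := by positivity
  have h3 := sq_nonneg (deriv (fun s => (γ s).2.2) t)
  linarith

theorem abs_deriv_snd_fst_le_solSpeed (γ : ℝ → ℝ × ℝ × ℝ) (t : ℝ) :
    |deriv (fun s => (γ s).2.1) t| ≤ Real.exp (-(γ t).2.2 / 2) * solSpeed γ t := by
  rw [← div_le_iff₀' (Real.exp_pos _), solSpeed]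
  refine Real.le_sqrt_of_sq_le ?_
  have : (|deriv (fun s => (γ s).2.1) t| / Real.exp (-(γ t).2.2 / 2)) ^ 2 =
      Real.exp ((γ t).2.2) * (deriv (fun s => (γ s).2.1) t) ^ 2 := by
    rw [div_pow, sq_abs, ← Real.exp_nat_mul, div_eq_inv_mul, ← Real.exp_neg]
    congr 2; push_cast; ring
  rw [this]
  have h2 : 0 ≤ Real.exp (-(γ t).2.2) * (deriv (fun s => (γ s).1) t) ^ 2 := by positivity
  have h3 := sq_nonneg (deriv (fun s => (γ s).2.2) t)
  linarith

theorem abs_deriv_snd_snd_le_solSpeed (γ : ℝ → ℝ × ℝ × ℝ) (t : ℝ) :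
    |deriv (fun s => (γ s).2.2) t| ≤ solSpeed γ t := by
  refine Real.le_sqrt_of_sq_le ?_
  rw [sq_abs]
  have h2 : 0 ≤ Real.exp (-(γ t).2.2) * (deriv (fun s => (γ s).1) t) ^ 2 := by positivity
  have h3 : 0 ≤ Real.exp ((γ t).2.2) * (deriv (fun s => (γ s).2.1) t) ^ 2 := by positivity
  linarith

theorem abs_sub_le_integral_of_abs_deriv_le {f g : ℝ → ℝ} {s : Set ℝ} (hs : s.Countable)
    (hf : ContinuousOn f (Icc 0 1)) (hd : ∀ t ∈ Ioo (0 : ℝ) 1 \ s, DifferentiableAt ℝ f t)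
    (hg : IntervalIntegrable g MeasureTheory.volume 0 1) (hg0 : ∀ t, 0 ≤ g t)
    (hfg : ∀ t ∈ Icc (0 : ℝ) 1, |deriv f t| ≤ g t) {a : ℝ} (ha : a ∈ Icc (0 : ℝ) 1) :
    |f a - f 0| ≤ ∫ t in (0 : ℝ)..1, g t := by
  have hga : IntervalIntegrable g MeasureTheory.volume 0 a := by
    refine hg.mono_set ?_
    rw [uIcc_of_le ha.1, uIcc_of_le zero_le_one]
    exact Icc_subset_Icc_right ha.2
  have hbound : ∀ t ∈ Ioc 0 a, ‖deriv f t‖ ≤ g t :=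
    fun t ht => hfg t ⟨ht.1.le, ht.2.trans ha.2⟩
  have hint : IntervalIntegrable (deriv f) MeasureTheory.volume 0 a := by
    refine hga.mono_fun' (measurable_deriv f).aestronglyMeasurable ?_
    rw [uIoc_of_le ha.1]
    exact (MeasureTheory.ae_restrict_iff' measurableSet_Ioc).2 (Filter.Eventually.of_forall hbound)
  have hftc : ∫ t in (0 : ℝ)..a, deriv f t = f a - f 0 :=
    MeasureTheory.integral_eq_of_hasDerivAt_off_countable_of_le f (deriv f) ha.1 hs
      (hf.mono (Icc_subset_Icc_right ha.2))
      (fun t ht => (hd t ⟨⟨ht.1.1, ht.1.2.trans_le ha.2⟩, ht.2⟩).hasDerivAt) hint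
  rw [← hftc]
  calc |∫ t in (0 : ℝ)..a, deriv f t| ≤ ∫ t in (0 : ℝ)..a, g t :=
        intervalIntegral.norm_integral_le_of_norm_le ha.1
          (Filter.Eventually.of_forall hbound) hga
    _ ≤ ∫ t in (0 : ℝ)..1, g t :=
        intervalIntegral.integral_mono_interval le_rfl ha.1 ha.2
          (Filter.Eventually.of_forall hg0) hg

theorem PiecewiseC1.abs_height_sub_le {γ : ℝ → ℝ × ℝ × ℝ} (h : PiecewiseC1 γ) {a : ℝ}
    (ha : a ∈ Icc (0 : ℝ) 1) : |(γ a).2.2 - (γ 0).2.2| ≤ solLength γ := by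
  obtain ⟨s, hs, hd⟩ := h.exists_countable_differentiableAt
  exact abs_sub_le_integral_of_abs_deriv_le (f := fun t => (γ t).2.2) hs
    h.continuousOn.snd.snd (fun t ht => (hd t ht).snd.snd) h.intervalIntegrable_solSpeed
    (solSpeed_nonneg γ) (fun t _ => abs_deriv_snd_snd_le_solSpeed γ t) ha

theorem PiecewiseC1.abs_fst_sub_le {γ : ℝ → ℝ × ℝ × ℝ} (h : PiecewiseC1 γ) :
    |(γ 1).1 - (γ 0).1| ≤ Real.exp (((γ 0).2.2 + solLength γ) / 2) * solLength γ := by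
  obtain ⟨s, hs, hd⟩ := h.exists_countable_differentiableAt
  have key := abs_sub_le_integral_of_abs_deriv_le (f := fun t => (γ t).1) hs
    h.continuousOn.fst (fun t ht => (hd t ht).fst)
    (h.intervalIntegrable_solSpeed.const_mul (Real.exp (((γ 0).2.2 + solLength γ) / 2)))
    (fun t => mul_nonneg (Real.exp_pos _).le (solSpeed_nonneg γ t))
    (fun t ht => (abs_deriv_fst_le_solSpeed γ t).trans <| by
      have := (abs_le.1 (h.abs_height_sub_le ht)).2
      gcongr
      · exact solSpeed_nonneg γ t
      · linarith) (a := 1) (by simp)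
  rwa [intervalIntegral.integral_const_mul, ← solLength_eq_integral_solSpeed] at key

theorem PiecewiseC1.abs_snd_fst_sub_le {γ : ℝ → ℝ × ℝ × ℝ} (h : PiecewiseC1 γ) :
    |(γ 1).2.1 - (γ 0).2.1| ≤ Real.exp ((-(γ 0).2.2 + solLength γ) / 2) * solLength γ := by
  obtain ⟨s, hs, hd⟩ := h.exists_countable_differentiableAt
  have key := abs_sub_le_integral_of_abs_deriv_le (f := fun t => (γ t).2.1) hs
    h.continuousOn.snd.fst (fun t ht => (hd t ht).snd.fst)
    (h.intervalIntegrable_solSpeed.const_mul (Real.exp ((-(γ 0).2.2 + solLength γ) / 2)))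
    (fun t => mul_nonneg (Real.exp_pos _).le (solSpeed_nonneg γ t))
    (fun t ht => (abs_deriv_snd_fst_le_solSpeed γ t).trans <| by
      have := (abs_le.1 (h.abs_height_sub_le ht)).1
      gcongr
      · exact solSpeed_nonneg γ t
      · linarith) (a := 1) (by simp)
  rwa [intervalIntegral.integral_const_mul, ← solLength_eq_integral_solSpeed] at key

theorem ContDiff.piecewiseC1_s11 {E : Type*} [NormedAddCommGroup E] [NormedSpace ℝ E]
    {γ : ℝ → E} (h : ContDiff ℝ 1 γ) : PiecewiseC1 γ :=
  ⟨1, fun i => i, by simp, by simp, fun i _ => by simp, fun _ _ => h.contDiffOn⟩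

theorem exists_path_solLength_lt {p q : ℝ × ℝ × ℝ} {D : ℝ} (h : dSol p q < D) :
    ∃ γ : ℝ → ℝ × ℝ × ℝ, γ 0 = p ∧ γ 1 = q ∧ PiecewiseC1 γ ∧ solLength γ < D := by
  have hne : {ℓ : ℝ | ∃ γ : ℝ → ℝ × ℝ × ℝ,
      γ 0 = p ∧ γ 1 = q ∧ PiecewiseC1 γ ∧ solLength γ = ℓ}.Nonempty :=
    ⟨_, fun t => p + t • (q - p), by simp, by simp,
      ContDiff.piecewiseC1_s11 (by fun_prop), rfl⟩
  obtain ⟨ℓ, ⟨γ, h0, h1, hγ, rfl⟩, hlt⟩ := exists_lt_of_csInf_lt hne h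
  exact ⟨γ, h0, h1, hγ, hlt⟩

theorem dSol_le_solLength {p q : ℝ × ℝ × ℝ} {γ : ℝ → ℝ × ℝ × ℝ} (h0 : γ 0 = p) (h1 : γ 1 = q)
    (h : PiecewiseC1 γ) : dSol p q ≤ solLength γ :=
  csInf_le ⟨0, by rintro _ ⟨γ, _, _, _, rfl⟩; exact solLength_nonneg γ⟩ ⟨γ, h0, h1, h, rfl⟩

theorem abs_solHeight_sub_le_dSol (p q : ℝ × ℝ × ℝ) :
    |solHeight q - solHeight p| ≤ dSol p q := by
  refine le_of_forall_gt fun D hD => ?_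
  obtain ⟨γ, rfl, rfl, hγ, hlt⟩ := exists_path_solLength_lt hD
  exact (hγ.abs_height_sub_le (by simp)).trans_lt hlt

theorem abs_fst_sub_le_of_dSol_lt {p q : ℝ × ℝ × ℝ} {D : ℝ} (h : dSol p q < D) :
    |q.1 - p.1| ≤ Real.exp ((solHeight p + D) / 2) * D := by
  obtain ⟨γ, rfl, rfl, hγ, hlt⟩ := exists_path_solLength_lt h
  refine hγ.abs_fst_sub_le.trans ?_
  have := solLength_nonneg γ
  unfold solHeight
  gcongr

theorem abs_snd_fst_sub_le_of_dSol_lt {p q : ℝ × ℝ × ℝ} {D : ℝ} (h : dSol p q < D) :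
    |q.2.1 - p.2.1| ≤ Real.exp ((-solHeight p + D) / 2) * D := by
  obtain ⟨γ, rfl, rfl, hγ, hlt⟩ := exists_path_solLength_lt h
  refine hγ.abs_snd_fst_sub_le.trans ?_
  have := solLength_nonneg γ
  unfold solHeight
  gcongr

theorem contDiff_one_integral {f : ℝ → ℝ} (hf : Continuous f) :
    ContDiff ℝ 1 fun t => ∫ s in (0 : ℝ)..t, f s := by
  rw [contDiff_one_iff_deriv]
  refine ⟨fun t => (hf.integral_hasStrictDerivAt 0 t).hasDerivAt.differentiableAt, ?_⟩
  have : deriv (fun t => ∫ s in (0 : ℝ)..t, f s) = f := by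
    ext t; exact hf.deriv_integral f 0 t
  rwa [this]

theorem le_integral_of_le_on_subinterval {f : ℝ → ℝ} (hf : Continuous f) (hf0 : ∀ t, 0 ≤ f t)
    {a b m : ℝ} (ha : 0 ≤ a) (hab : a ≤ b) (hb : b ≤ 1) (hm : ∀ t ∈ Icc a b, m ≤ f t) :
    (b - a) * m ≤ ∫ t in (0 : ℝ)..1, f t := by
  calc (b - a) * m = ∫ _ in a..b, m := by simp
    _ ≤ ∫ t in a..b, f t := intervalIntegral.integral_mono_on hab
        intervalIntegrable_const (hf.intervalIntegrable _ _) hm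
    _ ≤ ∫ t in (0 : ℝ)..1, f t := intervalIntegral.integral_mono_interval ha hab hb
        (Filter.Eventually.of_forall hf0) (hf.intervalIntegrable _ _)

theorem three_quarters_le_sin {t : ℝ} (ht : t ∈ Icc (3 / 16 : ℝ) (1 / 4)) :
    3 / 4 ≤ Real.sin (2 * Real.pi * t) := by
  have hpi := Real.pi_pos
  have h := Real.mul_le_sin (x := 2 * Real.pi * t) (by have := ht.1; positivity)
    (by nlinarith [ht.2])
  have h2 : 2 / Real.pi * (2 * Real.pi * t) = 4 * t := by field_simp; ring
  rw [h2] at h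
  linarith [ht.1]

theorem sin_le_neg_three_quarters {t : ℝ} (ht : t ∈ Icc (3 / 4 : ℝ) (13 / 16)) :
    Real.sin (2 * Real.pi * t) ≤ -(3 / 4) := by
  have h := three_quarters_le_sin (t := 1 - t) ⟨by linarith [ht.2], by linarith [ht.1]⟩
  have h2 : Real.sin (2 * Real.pi * (1 - t)) = -Real.sin (2 * Real.pi * t) := by
    rw [← Real.sin_neg, ← Real.sin_add_two_pi (-(2 * Real.pi * t))]
    congr 1; ring
  linarith

theorem sqrt_speed_le (z c d w : ℝ) :
    Real.sqrt (Real.exp (-z) * (c * Real.exp (z / 2)) ^ 2 +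
      Real.exp z * (d * Real.exp (-z / 2)) ^ 2 + w ^ 2) ≤ |c| + |d| + |w| := by
  have h1 : Real.exp (-z) * (c * Real.exp (z / 2)) ^ 2 = |c| ^ 2 := by
    rw [mul_pow, ← Real.exp_nat_mul, mul_left_comm, ← Real.exp_add, sq_abs]
    ring_nf; simp
  have h2 : Real.exp z * (d * Real.exp (-z / 2)) ^ 2 = |d| ^ 2 := by
    rw [mul_pow, ← Real.exp_nat_mul, mul_left_comm, ← Real.exp_add, sq_abs]
    ring_nf; simp
  rw [h1, h2, ← sq_abs w]
  refine Real.sqrt_le_iff.2 ⟨by positivity, ?_⟩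
  nlinarith [mul_nonneg (abs_nonneg c) (abs_nonneg d), mul_nonneg (abs_nonneg c) (abs_nonneg w),
    mul_nonneg (abs_nonneg d) (abs_nonneg w)]

/-- An upper bound for the distance between two points of equal height, obtained from a path whose
height oscillates once with amplitude `A`. -/
theorem dSol_le_of_solHeight_eq {p q : ℝ × ℝ × ℝ} (hpq : solHeight p = solHeight q) {A : ℝ}
    (hA : 0 ≤ A) :
    dSol p q ≤ 16 * Real.exp (-(3 / 8 * A)) * (Real.exp (-solHeight p / 2) * |q.1 - p.1| +
      Real.exp (solHeight p / 2) * |q.2.1 - p.2.1|) + 2 * Real.pi * A := by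
  obtain ⟨x₀, y₀, z₀⟩ := p
  obtain ⟨x₁, y₁, z₁⟩ := q
  obtain rfl : z₀ = z₁ := hpq
  have hpi := Real.pi_pos
  simp only [solHeight]
  set z : ℝ → ℝ := fun t => z₀ + A * Real.sin (2 * Real.pi * t) with hz
  have hzc : Continuous z := by fun_prop
  have hf : Continuous fun t => Real.exp (z t / 2) := by fun_prop
  have hg : Continuous fun t => Real.exp (-z t / 2) := by fun_prop
  set F := ∫ t in (0 : ℝ)..1, Real.exp (z t / 2) with hF
  set G := ∫ t in (0 : ℝ)..1, Real.exp (-z t / 2) with hG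
  have hF' : 1 / 16 * (Real.exp (z₀ / 2) * Real.exp (3 / 8 * A)) ≤ F := by
    have := le_integral_of_le_on_subinterval hf (fun t => (Real.exp_pos _).le)
      (a := 3 / 16) (b := 1 / 4) (m := Real.exp (z₀ / 2) * Real.exp (3 / 8 * A))
      (by norm_num) (by norm_num) (by norm_num) (fun t ht => by
        rw [← Real.exp_add]
        gcongr
        have := mul_le_mul_of_nonneg_left (three_quarters_le_sin ht) hA
        simp only [hz]; linarith)
    norm_num at this ⊢
    exact this
  have hG' : 1 / 16 * (Real.exp (-z₀ / 2) * Real.exp (3 / 8 * A)) ≤ G := by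
    have := le_integral_of_le_on_subinterval hg (fun t => (Real.exp_pos _).le)
      (a := 3 / 4) (b := 13 / 16) (m := Real.exp (-z₀ / 2) * Real.exp (3 / 8 * A))
      (by norm_num) (by norm_num) (by norm_num) (fun t ht => by
        rw [← Real.exp_add]
        gcongr
        have := mul_le_mul_of_nonneg_left (sin_le_neg_three_quarters ht) hA
        simp only [hz]; linarith)
    norm_num at this ⊢
    exact this
  have hFpos : 0 < F := lt_of_lt_of_le (by positivity) hF'
  have hGpos : 0 < G := lt_of_lt_of_le (by positivity) hG'
  set c := (x₁ - x₀) / F with hc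
  set d := (y₁ - y₀) / G with hd
  set γ : ℝ → ℝ × ℝ × ℝ := fun t =>
    (x₀ + c * ∫ s in (0 : ℝ)..t, Real.exp (z s / 2),
      y₀ + d * ∫ s in (0 : ℝ)..t, Real.exp (-z s / 2), z t) with hγ
  have hγC : ContDiff ℝ 1 γ := by
    have h1 := contDiff_one_integral hf
    have h2 := contDiff_one_integral hg
    have h3 : ContDiff ℝ 1 z := by fun_prop
    exact (contDiff_const.add (contDiff_const.mul h1)).prodMk
      ((contDiff_const.add (contDiff_const.mul h2)).prodMk h3)
  have hγ0 : γ 0 = (x₀, y₀, z₀) := by simp [hγ, hz]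
  have hγ1 : γ 1 = (x₁, y₁, z₀) := by
    have h1 : c * F = x₁ - x₀ := div_mul_cancel₀ _ hFpos.ne'
    have h2 : d * G = y₁ - y₀ := div_mul_cancel₀ _ hGpos.ne'
    simp only [hγ, ← hF, ← hG, h1, h2]
    simp [hz]
  have hspeed : ∀ t, ‖solSpeed γ t‖ ≤ |c| + |d| + 2 * Real.pi * A := by
    intro t
    have d1 : deriv (fun s => (γ s).1) t = c * Real.exp (z t / 2) :=
      (((hf.integral_hasStrictDerivAt 0 t).hasDerivAt.const_mul c).const_add x₀).deriv
    have d2 : deriv (fun s => (γ s).2.1) t = d * Real.exp (-z t / 2) :=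
      (((hg.integral_hasStrictDerivAt 0 t).hasDerivAt.const_mul d).const_add y₀).deriv
    have d3 : deriv (fun s => (γ s).2.2) t =
        A * (Real.cos (2 * Real.pi * t) * (2 * Real.pi * 1)) :=
      (((((hasDerivAt_id t).const_mul (2 * Real.pi)).sin).const_mul A).const_add z₀).deriv
    rw [Real.norm_of_nonneg (solSpeed_nonneg γ t), solSpeed, d1, d2, d3]
    refine (sqrt_speed_le (z t) c d _).trans ?_
    gcongr
    rw [abs_mul, abs_mul, abs_of_nonneg hA, abs_of_pos (by positivity : 0 < 2 * Real.pi * 1)]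
    have := mul_le_mul_of_nonneg_right (Real.abs_cos_le_one (2 * Real.pi * t))
      (by positivity : 0 ≤ A * (2 * Real.pi))
    linarith
  have hlen : solLength γ ≤ |c| + |d| + 2 * Real.pi * A := by
    have := intervalIntegral.norm_integral_le_of_norm_le_const (a := (0 : ℝ)) (b := 1)
      (f := solSpeed γ) fun t _ => hspeed t
    rw [← solLength_eq_integral_solSpeed, Real.norm_of_nonneg (solLength_nonneg γ)] at this
    simpa using this
  have hc' : |c| ≤ 16 * Real.exp (-(3 / 8 * A)) * (Real.exp (-z₀ / 2) * |x₁ - x₀|) := by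
    rw [hc, abs_div, abs_of_pos hFpos]
    refine (div_le_div_of_nonneg_left (abs_nonneg _) (by positivity) hF').trans_eq ?_
    rw [neg_div, Real.exp_neg, Real.exp_neg]
    field_simp
  have hd' : |d| ≤ 16 * Real.exp (-(3 / 8 * A)) * (Real.exp (z₀ / 2) * |y₁ - y₀|) := by
    rw [hd, abs_div, abs_of_pos hGpos]
    refine (div_le_div_of_nonneg_left (abs_nonneg _) (by positivity) hG').trans_eq ?_
    rw [neg_div, Real.exp_neg, Real.exp_neg]
    field_simp
  have := dSol_le_solLength hγ0 hγ1 hγC.piecewiseC1_s11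
  linarith

theorem abs_sub_le_nat_mul {u : ℕ → ℝ} {N : ℕ} {b : ℝ} (h : ∀ k < N, |u (k + 1) - u k| ≤ b) :
    |u N - u 0| ≤ N * b := by
  have := dist_le_range_sum_of_dist_le (f := u) (d := fun _ => b) N
    (fun hk => by rw [dist_comm, Real.dist_eq]; exact h _ hk)
  rw [dist_comm, Real.dist_eq] at this
  simpa using this

/-- A sufficiently long quasi-geodesic in `Sol` with endpoints at the same height makes a height
excursion that is linear in its length. -/
theorem IsQGeoOn.exists_height_excursion {K C r : ℝ} {α : ℝ → ℝ × ℝ × ℝ} (hK : 1 ≤ K)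
    (hC : 0 ≤ C) (hα : IsQGeoOn dSol K C α r) {t₁ t₂ : ℝ} (h1 : 0 ≤ t₁) (h12 : t₁ < t₂)
    (h2 : t₂ ≤ r) (heq : solHeight (α t₁) = solHeight (α t₂))
    (hlong : 8 * K * (3072 * K * (K + C + 1) * Real.exp ((K + C + 1) / 2) + C) < t₂ - t₁) :
    ∃ s ∈ Icc t₁ t₂, (t₂ - t₁) / (12 * K) ≤ |solHeight (α s) - solHeight (α t₁)| := by
  by_contra! hcon
  set T := t₂ - t₁ with hT
  set D := K + C + 1 with hD
  set M := T / (12 * K) with hM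
  set z₀ := solHeight (α t₁) with hz₀
  have hT0 : 0 < T := sub_pos.2 h12
  have hK0 : 0 < K := by linarith
  have hD0 : 0 < D := by linarith
  have hM0 : 0 < M := by positivity
  set N := ⌈T⌉₊ with hN
  have hN0 : 0 < N := Nat.ceil_pos.2 hT0
  have hN0' : (0 : ℝ) < N := Nat.cast_pos.2 hN0
  have hTN : T ≤ N := Nat.le_ceil T
  have hNT : (N : ℝ) ≤ T + 1 := (Nat.ceil_lt_add_one hT0.le).le
  have hτ0 : 0 ≤ T / N := by positivity
  have hτ1 : T / N ≤ 1 := (div_le_one hN0').2 hTN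
  have hmem : ∀ k ≤ N, t₁ + k * (T / N) ∈ Icc t₁ t₂ := by
    intro k hk
    have hk' : (k : ℝ) ≤ N := Nat.cast_le.2 hk
    have h3 : (k : ℝ) * (T / N) ≤ T := by
      calc (k : ℝ) * (T / N) ≤ N * (T / N) := by gcongr
        _ = T := by field_simp
    exact ⟨by linarith [mul_nonneg (Nat.cast_nonneg (α := ℝ) k) hτ0], by linarith⟩
  have hmem' : ∀ t ∈ Icc t₁ t₂, t ∈ Icc 0 r := fun t ht => ⟨h1.trans ht.1, ht.2.trans h2⟩
  set β : ℕ → ℝ × ℝ × ℝ := fun k => α (t₁ + k * (T / N)) with hβ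
  have hβ0 : β 0 = α t₁ := by simp [hβ]
  have hβN : β N = α t₂ := by
    have : t₁ + N * (T / N) = t₂ := by rw [mul_div_cancel₀ _ hN0'.ne']; linarith
    simp only [hβ, this]
  have hstep : ∀ k < N, dSol (β k) (β (k + 1)) < D := by
    intro k hk
    have h3 := (hα _ (hmem' _ (hmem k hk.le)) _ (hmem' _ (hmem (k + 1) hk))).2
    have h4 : t₁ + k * (T / N) - (t₁ + ((k + 1 : ℕ) : ℝ) * (T / N)) = -(T / N) := by
      push_cast; ring
    rw [h4, abs_neg, abs_of_nonneg hτ0] at h3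
    nlinarith
  have hheight : ∀ k < N, |solHeight (β k) - z₀| < M := fun k hk => hcon _ (hmem k hk.le)
  have hx : |(α t₂).1 - (α t₁).1| ≤ N * (Real.exp ((z₀ + M + D) / 2) * D) := by
    rw [← hβ0, ← hβN]
    refine abs_sub_le_nat_mul (u := fun k => (β k).1) fun k hk => ?_
    refine (abs_fst_sub_le_of_dSol_lt (hstep k hk)).trans ?_
    have := (abs_lt.1 (hheight k hk)).2
    gcongr
    linarith
  have hy : |(α t₂).2.1 - (α t₁).2.1| ≤ N * (Real.exp ((-z₀ + M + D) / 2) * D) := by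
    rw [← hβ0, ← hβN]
    refine abs_sub_le_nat_mul (u := fun k => (β k).2.1) fun k hk => ?_
    refine (abs_snd_fst_sub_le_of_dSol_lt (hstep k hk)).trans ?_
    have := (abs_lt.1 (hheight k hk)).1
    gcongr
    linarith
  have hup := dSol_le_of_solHeight_eq heq (A := 4 / 3 * (M + T / (48 * K))) (by positivity)
  rw [← hz₀] at hup
  have hlow := (hα t₁ ⟨h1, h12.le.trans h2⟩ t₂ ⟨h1.trans h12.le, h2⟩).1
  rw [abs_sub_comm, abs_of_pos hT0] at hlow
  have hNexp : (N : ℝ) ≤ 96 * K * Real.exp (T / (96 * K)) := by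
    have h3 := Real.add_one_le_exp (T / (96 * K))
    have h4 : 96 * K * (T / (96 * K) + 1) = T + 96 * K := by field_simp
    have h5 := mul_le_mul_of_nonneg_left h3 (by positivity : 0 ≤ 96 * K)
    linarith
  have hmain : 16 * Real.exp (-(3 / 8 * (4 / 3 * (M + T / (48 * K))))) *
      (Real.exp (-z₀ / 2) * |(α t₂).1 - (α t₁).1| +
        Real.exp (z₀ / 2) * |(α t₂).2.1 - (α t₁).2.1|) ≤ 3072 * K * D * Real.exp (D / 2) := by
    have hA : Real.exp (-(3 / 8 * (4 / 3 * (M + T / (48 * K))))) =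
        Real.exp (-(M / 2)) * Real.exp (-(T / (96 * K))) := by
      rw [← Real.exp_add]; congr 1; field_simp; ring
    calc _ ≤ 16 * (Real.exp (-(M / 2)) * Real.exp (-(T / (96 * K)))) *
          (Real.exp (-z₀ / 2) * (N * (Real.exp ((z₀ + M + D) / 2) * D)) +
          Real.exp (z₀ / 2) * (N * (Real.exp ((-z₀ + M + D) / 2) * D))) := by
          rw [hA]; gcongr
      _ = 32 * D * Real.exp (D / 2) * (Real.exp (-(T / (96 * K))) * N) := by
          have e1 : Real.exp ((z₀ + M + D) / 2) =
              Real.exp (z₀ / 2) * Real.exp (M / 2) * Real.exp (D / 2) := by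
            rw [← Real.exp_add, ← Real.exp_add]; congr 1; ring
          have e2 : Real.exp ((-z₀ + M + D) / 2) =
              (Real.exp (z₀ / 2))⁻¹ * Real.exp (M / 2) * Real.exp (D / 2) := by
            rw [← Real.exp_neg, ← Real.exp_add, ← Real.exp_add]; congr 1; ring
          rw [e1, e2, neg_div, Real.exp_neg (M / 2), Real.exp_neg (z₀ / 2)]
          field_simp
          ring
      _ ≤ 32 * D * Real.exp (D / 2) * (Real.exp (-(T / (96 * K))) *
          (96 * K * Real.exp (T / (96 * K)))) := by gcongr
      _ = 3072 * K * D * Real.exp (D / 2) := by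
          rw [Real.exp_neg]; field_simp; ring
  have hpi : 2 * Real.pi * (4 / 3 * (M + T / (48 * K))) ≤ 7 / 8 * (T / K) := by
    have h3 : M + T / (48 * K) = 5 / 48 * (T / K) := by rw [hM]; field_simp; ring
    rw [h3]
    have h4 : 0 < T / K := by positivity
    nlinarith [Real.pi_lt_d2]
  have hfin : T / K ≤ 8 * (3072 * K * D * Real.exp (D / 2) + C) := by
    have h3 : 1 / K * T = T / K := by ring
    rw [h3] at hlow
    linarith
  rw [div_le_iff₀ hK0] at hfin
  linarith

theorem IsQGeoOn.abs_solHeight_sub_le {K C r : ℝ} {α : ℝ → ℝ × ℝ × ℝ}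
    (hα : IsQGeoOn dSol K C α r) {s t : ℝ} (hs : s ∈ Icc 0 r) (ht : t ∈ Icc 0 r) :
    |solHeight (α s) - solHeight (α t)| ≤ K * |s - t| + C := by
  rw [abs_sub_comm s t]
  exact (abs_solHeight_sub_le_dSol _ _).trans (hα t ht s hs).2

theorem abs_sub_add_le_sum_range (u : ℕ → ℝ) {i j k n : ℕ} (hij : i ≤ j) (hjk : j ≤ k)
    (hkn : k ≤ n) :
    |u 0 - u i| + |u i - u j| + |u j - u k| + |u k - u n| ≤
      ∑ l ∈ Finset.range n, |u (l + 1) - u l| := by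
  have key : ∀ {a b : ℕ}, a ≤ b → |u a - u b| ≤ ∑ l ∈ Finset.Ico a b, |u (l + 1) - u l| := by
    intro a b hab
    simpa only [Real.dist_eq, abs_sub_comm] using dist_le_Ico_sum_dist u hab
  rw [← Nat.Ico_zero_eq_range, ← Finset.sum_Ico_consecutive _ (Nat.zero_le i)
      (hij.trans (hjk.trans hkn)), ← Finset.sum_Ico_consecutive _ hij (hjk.trans hkn),
    ← Finset.sum_Ico_consecutive _ hjk hkn]
  linarith [key (Nat.zero_le i), key hij, key hjk, key hkn]

/-- **Subdivision Lemma for `Sol`.** If a `(K,C)`-quasi-geodesic segment `α : [0,r] → Sol` is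
not `ε`-monotone, then upon subdividing into `n ≫ 1` equal pieces the total height variation
increases by at least `ε·r/(8K²)`. -/
theorem sol_subdivision :
    ∀ K C ε : ℝ, 1 ≤ K → 0 ≤ C → 0 < ε →
      ∃ (n₀ : ℕ) (r₀ : ℝ), 0 < n₀ ∧ 0 < r₀ ∧
        ∀ r : ℝ, r₀ ≤ r → ∀ n : ℕ, n₀ ≤ n →
          ∀ α : ℝ → ℝ × ℝ × ℝ, IsQGeoOn dSol K C α r → ¬ EpsMonotone α ε r →
            |solHeight (α 0) - solHeight (α r)| + ε * r / (8 * K ^ 2) ≤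
              ∑ j ∈ Finset.range n,
                |solHeight (α ((j + 1) * r / n)) - solHeight (α (j * r / n))| := by
  intro K C ε hK hC hε
  have hK0 : 0 < K := by linarith
  set B := 8 * K * (3072 * K * (K + C + 1) * Real.exp ((K + C + 1) / 2) + C) with hB
  have hB0 : 0 ≤ B := by positivity
  refine ⟨⌈288 * K ^ 2 / ε⌉₊ + 1, 288 * K * C / ε + (B + 1) / ε, by omega, by positivity, ?_⟩
  intro r hr n hn α hα hmon
  have hr0 : 0 < r := lt_of_lt_of_le (by positivity) hr
  have hrC : 288 * K * C ≤ ε * r := by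
    have h : 288 * K * C / ε ≤ r := le_trans (by simp; positivity) hr
    rwa [div_le_iff₀' hε] at h
  have hrB : B < ε * r := by
    have h : (B + 1) / ε ≤ r := le_trans (by simp; positivity) hr
    rw [div_le_iff₀' hε] at h
    linarith
  have hn0 : 0 < n := by omega
  have hn0' : (0 : ℝ) < n := Nat.cast_pos.2 hn0
  have hnK : 288 * K ^ 2 ≤ ε * n := by
    have h : 288 * K ^ 2 / ε ≤ n := (Nat.le_ceil _).trans (Nat.cast_le.2 (by omega))
    rwa [div_le_iff₀' hε] at h
  obtain ⟨t₁, t₂, h1, h12, h2, heq, hgap⟩ : ∃ t₁ t₂ : ℝ, 0 ≤ t₁ ∧ t₁ < t₂ ∧ t₂ ≤ r ∧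
      solHeight (α t₁) = solHeight (α t₂) ∧ ε * r ≤ t₂ - t₁ := by
    unfold EpsMonotone at hmon
    push Not at hmon
    obtain ⟨a, ha, b, hb, hab, hle⟩ := hmon
    have hpos : 0 < ε * r := by positivity
    rcases le_total a b with h | h
    · rw [abs_sub_comm, abs_of_nonneg (sub_nonneg.2 h)] at hle
      exact ⟨a, b, ha.1, by linarith, hb.2, hab, hle⟩
    · rw [abs_of_nonneg (sub_nonneg.2 h)] at hle
      exact ⟨b, a, hb.1, by linarith, ha.2, hab.symm, hle⟩
  obtain ⟨s, hs, hexc⟩ :=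
    hα.exists_height_excursion hK hC h1 h12 h2 heq (hrB.trans_le hgap)
  set M := |solHeight (α s) - solHeight (α t₁)| with hM
  have hM' : ε * r / (12 * K) ≤ M := le_trans (by gcongr) hexc
  set u : ℕ → ℝ := fun j => solHeight (α (j * r / n)) with hu
  set η := K * (r / n) + C with hη
  have hfloor : ∀ t ∈ Icc 0 r, ⌊t * n / r⌋₊ ≤ n ∧ |solHeight (α t) - u ⌊t * n / r⌋₊| ≤ η := by
    intro t ht
    have hnn : 0 ≤ t * n / r := by have := ht.1; positivity
    have hle : (⌊t * n / r⌋₊ : ℝ) ≤ t * n / r := Nat.floor_le hnn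
    have hlt := Nat.lt_floor_add_one (t * n / r)
    set m := ⌊t * n / r⌋₊ with hm
    rw [le_div_iff₀ hr0] at hle
    rw [div_lt_iff₀ hr0] at hlt
    have hmt : (m : ℝ) * r / n ≤ t := by rwa [div_le_iff₀ hn0']
    have htm : t - m * r / n ≤ r / n := by
      have : t < (m + 1) * r / n := by rwa [lt_div_iff₀ hn0']
      have h3 : ((m : ℝ) + 1) * r / n = m * r / n + r / n := by ring
      linarith
    refine ⟨?_, ?_⟩
    · have : (m : ℝ) * r ≤ n * r := by nlinarith [ht.2]
      exact_mod_cast le_of_mul_le_mul_right this hr0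
    · refine (hα.abs_solHeight_sub_le ht ⟨by positivity, hmt.trans ht.2⟩).trans ?_
      rw [abs_of_nonneg (by linarith)]
      have := mul_le_mul_of_nonneg_left htm hK0.le
      linarith
  obtain ⟨-, e1⟩ := hfloor t₁ ⟨h1, h12.le.trans h2⟩
  obtain ⟨-, es⟩ := hfloor s ⟨h1.trans hs.1, hs.2.trans h2⟩
  obtain ⟨hin, e2⟩ := hfloor t₂ ⟨h1.trans h12.le, h2⟩
  have hsum := abs_sub_add_le_sum_range u (i := ⌊t₁ * n / r⌋₊) (j := ⌊s * n / r⌋₊)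
    (k := ⌊t₂ * n / r⌋₊) (n := n) (by have := hs.1; gcongr) (by have := hs.2; gcongr) hin
  have hu0 : solHeight (α 0) = u 0 := by simp [hu]
  have hun : solHeight (α r) = u n := by
    have : (n : ℝ) * r / n = r := by field_simp
    simp only [hu, this]
  have hη6 : 6 * η ≤ ε * r / (24 * K) := by
    rw [le_div_iff₀ (by positivity), hη]
    have h3 : r / n * (288 * K ^ 2) ≤ r / n * (ε * n) := by gcongr
    have h4 : r / n * (ε * n) = ε * r := by field_simp
    nlinarith
  have hgoal : ε * r / (8 * K ^ 2) ≤ ε * r / (8 * K) := by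
    gcongr
    nlinarith
  have hsplit : 2 * (ε * r / (12 * K)) = ε * r / (8 * K) + ε * r / (24 * K) := by
    field_simp; norm_num
  have hsum' : ∑ j ∈ Finset.range n,
      |solHeight (α ((j + 1) * r / n)) - solHeight (α (j * r / n))| =
      ∑ l ∈ Finset.range n, |u (l + 1) - u l| := by
    simp only [hu, Nat.cast_add, Nat.cast_one]
  rw [hsum', hu0, hun]
  set a := u ⌊t₁ * n / r⌋₊
  set b := u ⌊s * n / r⌋₊
  set c := u ⌊t₂ * n / r⌋₊
  have hab : M - 2 * η ≤ |a - b| := by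
    have h3 := abs_sub_le (solHeight (α s)) b (solHeight (α t₁))
    have h4 := abs_sub_le b a (solHeight (α t₁))
    rw [abs_sub_comm b a, abs_sub_comm a (solHeight (α t₁))] at h4
    linarith
  have hbc : M - 2 * η ≤ |b - c| := by
    have h3 := abs_sub_le (solHeight (α s)) b (solHeight (α t₁))
    have h4 := abs_sub_le b c (solHeight (α t₁))
    rw [abs_sub_comm c (solHeight (α t₁))] at h4
    rw [← heq] at e2
    linarith
  have hends : |u 0 - u n| - 2 * η ≤ |u 0 - a| + |c - u n| := by
    have h3 := abs_sub_le (u 0) a (u n)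
    have h4 := abs_sub_le a (solHeight (α t₁)) (u n)
    have h5 := abs_sub_le (solHeight (α t₁)) c (u n)
    rw [abs_sub_comm a (solHeight (α t₁))] at h4
    rw [← heq] at e2
    linarith
  linarith

end
end
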